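/- arXiv:1411.1826 — 2 statements merged into one kernel-verified Lean document; each statement's English description precedes it below -/
import Mathlib

section
/- Let Ω and Ω' be the interiors of compact convex sets in ℝ² (viewed inside ℝP²), each equipped with its Hilbert metric. Then (Ω,d_Ω) and (Ω',d_{Ω'}) are isometric if and only if there exists a projective transformation p ∈ PGL_3(ℝ) with p(Ω) = Ω'. -/
/-!
The argument rests on the exponential parametrization `cp a b : ℝ → Ω` of a chord with endpoints
`a`, `b`, which makes every chord isometric to the real line (`Body.hdist`).

*Isometric implies projectively equivalent.* A chord with an extreme endpoint is the only geodesic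
joining any two of its points (`Body.rigid`), whereas a chord with two non-extreme endpoints can be
bent without increasing length (`Body.not_rigid`). This property is metric, so an isometry maps the
chords with an extreme endpoint to such chords, by translations of the parameter (`Iso.line`,
`Iso.image_ext`). Chords from a common endpoint are asymptotic there, and following them to the
boundary shows that chords joining two extreme points go to chords joining two extreme points
(`Iso.both_ext`) and that the pencil of chords issuing from such an extreme point is mapped to the
pencil of an extreme point (`Iso.pencil`).

If the body has four extreme points, these form a quadrilateral, whose diagonals are mapped to the
diagonals of another quadrilateral by translations of the parameter, hence projectively. A point is
the intersection of its chords from two of the vertices, each of which meets a diagonal, so its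
image is determined by incidences that are the same as for a projective map (`Quad.projective`). A
body with fewer than four extreme points is a triangle by the Krein–Milman theorem
(`Body.dichotomy`). Applying this to the isometry and to its inverse, either one of the two is
projective or both bodies are triangles, and all triangles are projectively equivalent
(`Iso.exists_projective`).

*Projectively equivalent implies isometric.* A linear map of homogeneous coordinates that carries
one domain to the other has a denominator of constant sign on the closed body (`denom_pos`), so it
maps chords to chords by translations of the parameter (`proj_isometry`).
-/

open Set
open scoped LinearAlgebra.Projectivization
open scoped Classical

noncomputable section

abbrev Euc (n : ℕ) := EuclideanSpace ℝ (Fin n)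

/-- `α` and `β` are the two points where the straight line through `x` and `y`
meets the boundary of `Ω`, labeled so that `|α−x| < |α−y|` and `|β−y| < |β−x|`. -/
def IsHilbertPair {n : ℕ} (Ω : Set (Euc n)) (x y α β : Euc n) : Prop :=
  α ∈ frontier Ω ∧ β ∈ frontier Ω ∧
    Collinear ℝ ({α, x, y} : Set (Euc n)) ∧ Collinear ℝ ({β, x, y} : Set (Euc n)) ∧
    dist α x < dist α y ∧ dist β y < dist β x

/-- The Hilbert metric of `Ω`: `d_Ω(x,y) = ln((|α−y|/|α−x|)·(|β−x|/|β−y|))` for `x ≠ y`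
(where `α, β` are as in `IsHilbertPair`; for `x ≠ y` in a convex domain `Ω` such a pair
exists and is unique), and `d_Ω(x,x) = 0` (no such pair exists when `x = y`). -/
def hilbertDist {n : ℕ} (Ω : Set (Euc n)) (x y : Euc n) : ℝ :=
  if h : ∃ p : Euc n × Euc n, IsHilbertPair Ω x y p.1 p.2 then
    Real.log ((dist h.choose.1 y / dist h.choose.1 x) * (dist h.choose.2 x / dist h.choose.2 y))
  else 0

/-- An isometry of Hilbert geometries: a surjective distance preserving map. -/
def IsHilbertIsometry {n : ℕ} (Ω Ω' : Set (Euc n)) (τ : Euc n → Euc n) : Prop :=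
  Set.MapsTo τ Ω Ω' ∧ Set.SurjOn τ Ω Ω' ∧
    ∀ x ∈ Ω, ∀ y ∈ Ω, hilbertDist Ω' (τ x) (τ y) = hilbertDist Ω x y

/-- The standard affine chart `ℝⁿ → ℝPⁿ`, `x ↦ [x : 1]`. -/
def chart {n : ℕ} (x : Euc n) : Projectivization ℝ (Fin (n + 1) → ℝ) :=
  Projectivization.mk ℝ ((Fin.snoc (fun i => x i) 1 : Fin (n + 1) → ℝ))
    (fun h => one_ne_zero (α := ℝ) (by simpa using congrFun h (Fin.last n)))

/-- The projective transformation of `ℝPⁿ` induced by an element of `GL_{n+1}(ℝ)`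
(every element of `PGL_{n+1}(ℝ)` arises this way). -/
def projMap {n : ℕ} (g : (Fin (n + 1) → ℝ) ≃ₗ[ℝ] (Fin (n + 1) → ℝ)) :
    Projectivization ℝ (Fin (n + 1) → ℝ) → Projectivization ℝ (Fin (n + 1) → ℝ) :=
  Projectivization.map (g : (Fin (n + 1) → ℝ) →ₗ[ℝ] (Fin (n + 1) → ℝ)) g.injective

/-- `τ` agrees on `Ω` with (the restriction of) a projective transformation of `ℝPⁿ`. -/
def IsProjectiveOn {n : ℕ} (Ω : Set (Euc n)) (τ : Euc n → Euc n) : Prop :=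
  ∃ g : (Fin (n + 1) → ℝ) ≃ₗ[ℝ] (Fin (n + 1) → ℝ),
    ∀ x ∈ Ω, chart (τ x) = projMap g (chart x)

/-- A ray in `Ω`: the intersection with `Ω` of a Euclidean ray starting at a point of `Ω`. -/
def IsRayIn {n : ℕ} (Ω r : Set (Euc n)) : Prop :=
  ∃ p ∈ Ω, ∃ d : Euc n, d ≠ 0 ∧ r = {x | ∃ t : ℝ, 0 ≤ t ∧ x = p + t • d} ∩ Ω

/-- A line in `Ω`: the nonempty intersection of a straight line with `Ω`. -/
def IsLineIn {n : ℕ} (Ω L : Set (Euc n)) : Prop :=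
  L.Nonempty ∧ ∃ p d : Euc n, d ≠ 0 ∧ L = {x | ∃ t : ℝ, x = p + t • d} ∩ Ω

/-- `a` is an accumulation point of the set `s ⊆ Ω` on the boundary of `Ω`.
For a ray `r` in a convex domain `Ω` there is exactly one such point, denoted `a(r)`. -/
def IsBdryLimit {n : ℕ} (Ω s : Set (Euc n)) (a : Euc n) : Prop :=
  a ∈ frontier Ω ∧ a ∈ closure s

/-- `e` is a focusing point of the isometry `τ : Ω → Ω'`: an extreme point of the closure
of `Ω` such that for any two rays `r₁, r₂` in `Ω` with `a(r₁) = a(r₂) = e` one has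
`a(τ(r₁)) = a(τ(r₂))`. -/
def IsFocusingPoint {n : ℕ} (Ω Ω' : Set (Euc n)) (τ : Euc n → Euc n) (e : Euc n) : Prop :=
  e ∈ Set.extremePoints ℝ (closure Ω) ∧
    ∀ r₁ r₂ : Set (Euc n), IsRayIn Ω r₁ → IsRayIn Ω r₂ →
      IsBdryLimit Ω r₁ e → IsBdryLimit Ω r₂ e →
      ∀ a₁ a₂ : Euc n, IsBdryLimit Ω' (τ '' r₁) a₁ → IsBdryLimit Ω' (τ '' r₂) a₂ → a₁ = a₂

/-- An extreme line in `Ω`: a line in `Ω` whose closure meets `∂Ω` in extreme points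
of the closure of `Ω`. -/
def IsExtremeLine {n : ℕ} (Ω L : Set (Euc n)) : Prop :=
  IsLineIn Ω L ∧ ∀ x ∈ closure L ∩ frontier Ω, x ∈ Set.extremePoints ℝ (closure Ω)

/-- `s` is rigid in `Ω`: for any two points `a, b` of `s` the segment `[a,b]` is the
unique geodesic from `a` to `b` in `(Ω, d_Ω)`, i.e. every point `z` with
`d(a,z) + d(z,b) = d(a,b)` lies on the segment `[a,b]`. -/
def IsRigidSet {n : ℕ} (Ω s : Set (Euc n)) : Prop :=
  ∀ a ∈ s, ∀ b ∈ s, ∀ z ∈ Ω,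
    hilbertDist Ω a z + hilbertDist Ω z b = hilbertDist Ω a b → z ∈ segment ℝ a b

/-- A face of a closed convex set `C`: a convex subset `F ⊆ C` such that whenever an open
segment between two points of `C` meets `F`, the whole closed segment lies in `F`. -/
def IsFace {n : ℕ} (C F : Set (Euc n)) : Prop :=
  Convex ℝ F ∧ IsExtreme ℝ C F

/-- A face of `C` which is neither empty nor all of `C`. -/
def IsProperFace {n : ℕ} (C F : Set (Euc n)) : Prop :=
  IsFace C F ∧ F.Nonempty ∧ F ≠ C

/-- `Ω` is a cone with vertex `v` and base `B`: `B` is an `(n−1)`-dimensional convex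
domain lying in a hyperplane not containing `v`, and `Ω` is the union of the open
segments from `v` to the points of `B`. -/
def IsConeWith {n : ℕ} (Ω : Set (Euc n)) (v : Euc n) (B : Set (Euc n)) : Prop :=
  ∃ (f : Euc n →ₗ[ℝ] ℝ) (c : ℝ), f ≠ 0 ∧ (∀ b ∈ B, f b = c) ∧ f v ≠ c ∧
    B.Nonempty ∧ Convex ℝ B ∧ Bornology.IsBounded B ∧
    B = intrinsicInterior ℝ B ∧
    (affineSpan ℝ B : Set (Euc n)) = {x | f x = c} ∧
    Ω = ⋃ b ∈ B, openSegment ℝ v b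

/-- `Ω` is a cone. -/
def IsCone {n : ℕ} (Ω : Set (Euc n)) : Prop :=
  ∃ v B, IsConeWith Ω v B

/-! ### Convex bodies, chords and the exponential chord parametrization -/

/-- A planar convex body: a compact convex set with nonempty interior. The Hilbert geometry under
study is that of its interior. -/
structure Body (K : Set (Euc 2)) : Prop where
  compact : IsCompact K
  convex : Convex ℝ K
  nonempty : (interior K).Nonempty

/-- The point dividing the chord from `a` to `b` in the ratio `exp u : 1`. With this
parametrization a chord of a convex body becomes isometric to `ℝ`. -/
def cp (a b : Euc 2) (u : ℝ) : Euc 2 := (1 + Real.exp u)⁻¹ • (a + Real.exp u • b)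

/-- `a` and `b` are boundary points of `K` whose open segment lies in the interior of `K`. -/
structure Chord (K : Set (Euc 2)) (a b : Euc 2) : Prop where
  la : a ∈ K
  na : a ∉ interior K
  lb : b ∈ K
  nb : b ∉ interior K
  mem : ∀ u, cp a b u ∈ interior K

lemma cp_smul (a b : Euc 2) (u : ℝ) :
    (1 + Real.exp u) • cp a b u = a + Real.exp u • b := by
  have := Real.exp_pos u
  rw [cp, smul_smul, mul_inv_cancel₀ (by positivity), one_smul]

lemma cp_neg (a b : Euc 2) (u : ℝ) : cp a b (-u) = cp b a u := by
  have := Real.exp_pos u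
  simp only [cp, Real.exp_neg]
  match_scalars <;> field_simp <;> ring

lemma eq_cp_of {a b x : Euc 2} {p q : ℝ} (hp : 0 < p) (hq : 0 < q)
    (h : (p + q) • x = p • a + q • b) : x = cp a b (Real.log (q / p)) := by
  rw [cp, Real.exp_log (by positivity)]
  have : x = (p + q)⁻¹ • (p • a + q • b) := by
    rw [← h, smul_smul, inv_mul_cancel₀ (by positivity), one_smul]
  rw [this]
  match_scalars <;> field_simp

lemma cp_sub_left (a b : Euc 2) (u : ℝ) :
    cp a b u - a = (Real.exp u / (1 + Real.exp u)) • (b - a) := by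
  have := Real.exp_pos u
  rw [cp]
  match_scalars <;> field_simp
  ring

lemma cp_sub_right (a b : Euc 2) (u : ℝ) :
    cp a b u - b = (-(1 / (1 + Real.exp u))) • (b - a) := by
  have := Real.exp_pos u
  rw [cp]
  match_scalars <;> field_simp
  ring

lemma cp_sub_cp (a b : Euc 2) (u v : ℝ) :
    cp a b v - cp a b u =
      ((Real.exp v - Real.exp u) / ((1 + Real.exp u) * (1 + Real.exp v))) • (b - a) := by
  have := Real.exp_pos u
  have := Real.exp_pos v
  rw [cp, cp]
  match_scalars <;> field_simp <;> ring

lemma Body.mem_int {K : Set (Euc 2)} (D : Body K) {x y z : Euc 2} {p q : ℝ}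
    (hx : x ∈ interior K) (hy : y ∈ K) (hp : 0 < p) (hq : 0 ≤ q)
    (h : (p + q) • z = p • x + q • y) : z ∈ interior K := by
  have hz : z = (p / (p + q)) • x + (q / (p + q)) • y := by
    have : z = (p + q)⁻¹ • (p • x + q • y) := by
      rw [← h, smul_smul, inv_mul_cancel₀ (by positivity), one_smul]
    rw [this]
    match_scalars <;> field_simp
  rcases hq.eq_or_lt with rfl | hq
  · have : z = x := by
      rw [hz]; simp [hp.ne']
    rwa [this]
  · refine D.convex.openSegment_interior_self_subset_interior hx hy
      ⟨p / (p + q), q / (p + q), by positivity, by positivity, ?_, hz.symm⟩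
    field_simp

/-- A ray from an interior point meets the boundary only once. -/
lemma Body.radial_unique {K : Set (Euc 2)} (D : Body K) {x a a' : Euc 2} {k : ℝ}
    (hx : x ∈ interior K) (ha : a ∈ K) (na : a ∉ interior K) (ha' : a' ∈ K)
    (na' : a' ∉ interior K) (hk : 0 < k) (h : a - x = k • (a' - x)) : a = a' := by
  rcases lt_trichotomy k 1 with h1 | h1 | h1
  · refine absurd (D.mem_int (p := 1 - k) (q := k) hx ha' (by linarith) hk.le ?_) na
    have : a = x + k • (a' - x) := by rw [← h]; abel
    rw [this]; module
  · subst h1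
    simpa using h
  · refine absurd (D.mem_int (p := k - 1) (q := 1) hx ha (by linarith) zero_le_one ?_) na'
    have : a = x + k • (a' - x) := by rw [← h]; abel
    rw [this]; module

lemma Body.exists_exit {K : Set (Euc 2)} (D : Body K) {x v : Euc 2}
    (hx : x ∈ interior K) (hv : v ≠ 0) :
    ∃ t : ℝ, 0 < t ∧ x + t • v ∈ K ∧ x + t • v ∉ interior K := by
  set S : Set ℝ := {t | 0 ≤ t ∧ x + t • v ∈ K} with hS
  have hc : Continuous fun t : ℝ => x + t • v := by fun_prop
  have hcl : IsClosed S :=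
    (isClosed_Ici (a := (0 : ℝ))).inter (D.compact.isClosed.preimage hc)
  have hn : S.Nonempty := ⟨0, le_rfl, by simpa using interior_subset hx⟩
  have hb : BddAbove S := by
    obtain ⟨R, hR⟩ := D.compact.isBounded.exists_norm_le
    refine ⟨(R + ‖x‖) / ‖v‖, fun t ht => ?_⟩
    have h1 := hR _ ht.2
    have hv' : 0 < ‖v‖ := norm_pos_iff.mpr hv
    rw [le_div_iff₀ hv']
    have h2 : ‖t • v‖ ≤ ‖x + t • v‖ + ‖x‖ := by
      simpa using norm_sub_le (x + t • v) x
    rw [norm_smul, Real.norm_of_nonneg ht.1] at h2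
    linarith
  have hm := hcl.csSup_mem hn hb
  have hni : x + sSup S • v ∉ interior K := by
    intro hi
    have : ∀ᶠ t in nhds (sSup S), x + t • v ∈ interior K :=
      hc.continuousAt.eventually (isOpen_interior.mem_nhds hi)
    obtain ⟨ε, hε, hball⟩ := Metric.eventually_nhds_iff.mp this
    have h3 : sSup S + ε / 2 ∈ S := by
      refine ⟨by linarith [hm.1], interior_subset (hball ?_)⟩
      rw [Real.dist_eq]
      rw [show sSup S + ε / 2 - sSup S = ε / 2 by ring, abs_of_pos (by linarith)]
      linarith
    have := le_csSup hb h3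
    linarith
  refine ⟨sSup S, lt_of_le_of_ne hm.1 ?_, hm.2, hni⟩
  intro h0
  apply hni
  rw [← h0]
  simpa using hx

lemma Chord.symm {K : Set (Euc 2)} {a b : Euc 2} (c : Chord K a b) : Chord K b a :=
  ⟨c.lb, c.nb, c.la, c.na, fun u => by rw [← cp_neg]; exact c.mem _⟩

lemma Chord.ne {K : Set (Euc 2)} {a b : Euc 2} (c : Chord K a b) : a ≠ b := by
  rintro rfl
  have h := c.mem 0
  have : cp a a 0 = a := by
    rw [cp]
    match_scalars
    norm_num
  exact c.na (this ▸ h)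

lemma Body.chord_of_mem {K : Set (Euc 2)} (D : Body K) {a b : Euc 2} {u : ℝ}
    (la : a ∈ K) (na : a ∉ interior K) (lb : b ∈ K) (nb : b ∉ interior K)
    (h : cp a b u ∈ interior K) : Chord K a b := by
  refine ⟨la, na, lb, nb, fun v => ?_⟩
  have hu := Real.exp_pos u
  have hv := Real.exp_pos v
  have e1 := cp_smul a b u
  have e2 := cp_smul a b v
  rcases le_total v u with hvu | hvu
  · have hle := Real.exp_le_exp.mpr hvu
    refine D.mem_int (p := Real.exp v * (1 + Real.exp u)) (q := Real.exp u - Real.exp v) h la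
      (by positivity) (by linarith) ?_
    have : (Real.exp v * (1 + Real.exp u) + (Real.exp u - Real.exp v)) • cp a b v
        = Real.exp u • ((1 + Real.exp v) • cp a b v) := by module
    rw [this, mul_smul, e1, e2]
    module
  · have hle := Real.exp_le_exp.mpr hvu
    refine D.mem_int (p := (1 + Real.exp u)) (q := Real.exp v - Real.exp u) h lb
      (by positivity) (by linarith) ?_
    have : ((1 + Real.exp u) + (Real.exp v - Real.exp u)) • cp a b v
        = ((1 + Real.exp v) • cp a b v) := by module
    rw [this, e1, e2]
    module

lemma Body.chord_of_weights {K : Set (Euc 2)} (D : Body K) {a b x : Euc 2} {p q : ℝ}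
    (la : a ∈ K) (na : a ∉ interior K) (lb : b ∈ K) (nb : b ∉ interior K)
    (hx : x ∈ interior K) (hp : 0 < p) (hq : 0 < q) (h : (p + q) • x = p • a + q • b) :
    Chord K a b :=
  D.chord_of_mem la na lb nb (eq_cp_of hp hq h ▸ hx)

lemma Body.exists_chord {K : Set (Euc 2)} (D : Body K) {x y : Euc 2}
    (hx : x ∈ interior K) (hy : y ∈ interior K) (hxy : x ≠ y) :
    ∃ a b u v, Chord K a b ∧ u < v ∧ x = cp a b u ∧ y = cp a b v := by
  obtain ⟨s, hs, as, ns⟩ := D.exists_exit hx (v := x - y) (sub_ne_zero.mpr hxy)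
  obtain ⟨t, ht, at', nt⟩ := D.exists_exit hy (v := y - x) (sub_ne_zero.mpr hxy.symm)
  have e1 := eq_cp_of (a := x + s • (x - y)) (b := y + t • (y - x)) (x := x)
    (p := 1 + t) (q := s) (by linarith) hs (by module)
  have e2 := eq_cp_of (a := x + s • (x - y)) (b := y + t • (y - x)) (x := y)
    (p := t) (q := 1 + s) ht (by linarith) (by module)
  refine ⟨_, _, _, _, D.chord_of_mem as ns at' nt (e1 ▸ hx), ?_, e1, e2⟩
  apply Real.log_lt_log (by positivity)
  rw [div_lt_div_iff₀ (by linarith) ht]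
  nlinarith

lemma Body.exists_chord_from {K : Set (Euc 2)} (D : Body K) {a x : Euc 2}
    (la : a ∈ K) (na : a ∉ interior K) (hx : x ∈ interior K) :
    ∃ b u, Chord K a b ∧ x = cp a b u := by
  have hax : x ≠ a := fun h => na (h ▸ hx)
  obtain ⟨t, ht, bt, nt⟩ := D.exists_exit hx (v := x - a) (sub_ne_zero.mpr hax)
  have e1 := eq_cp_of (a := a) (b := x + t • (x - a)) (x := x)
    (p := t) (q := 1) ht one_pos (by module)
  exact ⟨_, _, D.chord_of_mem la na bt nt (e1 ▸ hx), e1⟩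

/-- A chord is determined by one endpoint and one interior point. -/
lemma Body.chord_right_unique {K : Set (Euc 2)} (D : Body K) {a b b' : Euc 2} {u u' : ℝ}
    (c : Chord K a b) (c' : Chord K a b') (h : cp a b u = cp a b' u') : b = b' := by
  have hu := Real.exp_pos u
  have hu' := Real.exp_pos u'
  have e1 := cp_smul a b u
  have e2 := cp_smul a b' u'
  rw [← h] at e2
  refine D.radial_unique (c.mem u) c.lb c.nb c'.lb c'.nb
    (k := (Real.exp u' / Real.exp u)) (by positivity) ?_
  have h1 : b - cp a b u = (Real.exp u)⁻¹ • (cp a b u - a) := by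
    have : Real.exp u • b = (1 + Real.exp u) • cp a b u - a := by rw [e1]; abel
    have h3 : b = (Real.exp u)⁻¹ • (Real.exp u • b) := by
      rw [smul_smul, inv_mul_cancel₀ hu.ne', one_smul]
    rw [this] at h3
    nth_rewrite 1 [h3]
    match_scalars <;> field_simp
    ring
  have h2 : b' - cp a b u = (Real.exp u')⁻¹ • (cp a b u - a) := by
    have : Real.exp u' • b' = (1 + Real.exp u') • cp a b u - a := by rw [e2]; abel
    have h3 : b' = (Real.exp u')⁻¹ • (Real.exp u' • b') := by
      rw [smul_smul, inv_mul_cancel₀ hu'.ne', one_smul]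
    rw [this] at h3
    nth_rewrite 1 [h3]
    match_scalars <;> field_simp
    ring
  rw [h1, h2, smul_smul]
  congr 1
  field_simp

/-- An oriented chord is determined by two of its points, in order. -/
lemma Body.chord_unique {K : Set (Euc 2)} (D : Body K) {a b a' b' : Euc 2} {u v u' v' : ℝ}
    (c : Chord K a b) (c' : Chord K a' b') (huv : u < v) (huv' : u' < v')
    (hu : cp a b u = cp a' b' u') (hv : cp a b v = cp a' b' v') : a = a' ∧ b = b' := by
  have p1 := Real.exp_pos u
  have p2 := Real.exp_pos v
  have p3 := Real.exp_pos u'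
  have p4 := Real.exp_pos v'
  have l1 := Real.exp_lt_exp.mpr huv
  have l2 := Real.exp_lt_exp.mpr huv'
  have haa : a = a' := by
    set x := cp a b u with hx
    set y := cp a b v with hy
    set k := (Real.exp v - Real.exp u) / ((1 + Real.exp u) * (1 + Real.exp v)) with hk
    set k' := (Real.exp v' - Real.exp u') / ((1 + Real.exp u') * (1 + Real.exp v')) with hk'
    have kp : 0 < k := div_pos (by linarith) (by positivity)
    have kp' : 0 < k' := div_pos (by linarith) (by positivity)
    have d1 : y - x = k • (b - a) := cp_sub_cp a b u v
    have d2 : y - x = k' • (b' - a') := by rw [hu, hv]; exact cp_sub_cp a' b' u' v'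
    have s1 : x - a = (Real.exp u / (1 + Real.exp u)) • (b - a) := cp_sub_left a b u
    have s2 : x - a' = (Real.exp u' / (1 + Real.exp u')) • (b' - a') := by
      rw [hu]; exact cp_sub_left a' b' u'
    set m := Real.exp u / (1 + Real.exp u) with hm
    set m' := Real.exp u' / (1 + Real.exp u') with hm'
    have mp : 0 < m := by positivity
    have mp' : 0 < m' := by positivity
    refine D.radial_unique (c.mem u) c.la c.na c'.la c'.na
      (k := (m / k) / (m' / k')) (by positivity) ?_
    have r1 : b - a = k⁻¹ • (y - x) := by
      rw [d1, smul_smul, inv_mul_cancel₀ kp.ne', one_smul]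
    have r2 : b' - a' = k'⁻¹ • (y - x) := by
      rw [d2, smul_smul, inv_mul_cancel₀ kp'.ne', one_smul]
    rw [← hx, ← neg_sub x a, ← neg_sub x a', s1, s2, r1, r2]
    match_scalars <;> field_simp
  subst haa
  exact ⟨rfl, D.chord_right_unique c c' hu⟩

lemma Chord.cp_inj {K : Set (Euc 2)} {a b : Euc 2} (c : Chord K a b) {u v : ℝ}
    (h : cp a b u = cp a b v) : u = v := by
  have p1 := Real.exp_pos u
  have p2 := Real.exp_pos v
  have h0 := cp_sub_cp a b u v
  rw [h, sub_self, eq_comm, smul_eq_zero, sub_eq_zero] at h0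
  rcases h0 with h0 | h0
  · rw [div_eq_zero_iff] at h0
    rcases h0 with h0 | h0
    · exact Real.exp_injective (by linarith)
    · have : 0 < (1 + Real.exp u) * (1 + Real.exp v) := by positivity
      linarith
  · exact absurd h0.symm c.ne

lemma Body.frontier_eq {K : Set (Euc 2)} (D : Body K) :
    frontier (interior K) = K \ interior K := by
  rw [frontier, interior_interior,
    D.convex.closure_interior_eq_closure_of_nonempty_interior D.nonempty,
    D.compact.isClosed.closure_eq]

/-- Uniqueness of the first boundary point in a Hilbert pair on a chord. -/
lemma Body.pair_left {K : Set (Euc 2)} (D : Body K) {a b α : Euc 2} {u v : ℝ}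
    (c : Chord K a b) (huv : u < v) (hα : α ∈ frontier (interior K))
    (hcol : Collinear ℝ ({α, cp a b u, cp a b v} : Set (Euc 2)))
    (hd : dist α (cp a b u) < dist α (cp a b v)) : α = a := by
  have p1 := Real.exp_pos u
  have p2 := Real.exp_pos v
  have l1 := Real.exp_lt_exp.mpr huv
  have hne : cp a b u ≠ cp a b v := fun h => huv.ne (c.cp_inj h)
  rw [D.frontier_eq] at hα
  set x := cp a b u with hx
  set y := cp a b v with hy
  have hmem : α ∈ line[ℝ, x, y] :=
    hcol.mem_affineSpan_of_mem_of_ne (by simp) (by simp) (by simp) hne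
  obtain ⟨r, hr⟩ := mem_affineSpan_pair_iff_exists_lineMap_eq.mp hmem
  have hα1 : α - x = r • (y - x) := by
    rw [← hr, AffineMap.lineMap_apply]; simp
  have hα2 : α - y = (r - 1) • (y - x) := by
    rw [sub_smul, ← hα1]; simp
  have hn : 0 < ‖y - x‖ := norm_pos_iff.mpr (sub_ne_zero.mpr hne.symm)
  rw [dist_eq_norm, dist_eq_norm, hα1, hα2, norm_smul, norm_smul] at hd
  have hd' : |r| < |r - 1| := lt_of_mul_lt_mul_right hd hn.le
  have hr2 : r < 1 / 2 := by
    have := sq_lt_sq.mpr hd'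
    nlinarith
  have hr0 : r < 0 := by
    by_contra hge
    push Not at hge
    apply hα.2
    refine D.mem_int (p := 1 - r) (q := r) (c.mem u) (interior_subset (c.mem v))
      (by linarith) hge ?_
    rw [← hx, ← hy]
    have : α = x + r • (y - x) := by rw [← hα1]; abel
    rw [this]; module
  have d1 : y - x = _ • (b - a) := cp_sub_cp a b u v
  have s1 : x - a = _ • (b - a) := cp_sub_left a b u
  refine D.radial_unique (c.mem u) hα.1 hα.2 c.la c.na
    (k := -r * ((Real.exp v - Real.exp u) / ((1 + Real.exp u) * (1 + Real.exp v))) /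
      (Real.exp u / (1 + Real.exp u))) ?_ ?_
  · have : 0 < Real.exp v - Real.exp u := by linarith
    have : 0 < -r := by linarith
    positivity
  · rw [← hx, ← neg_sub x a, hα1, d1, s1]
    match_scalars <;> field_simp

lemma Body.hdist_lt {K : Set (Euc 2)} (D : Body K) {a b : Euc 2} {u v : ℝ}
    (c : Chord K a b) (huv : u < v) :
    hilbertDist (interior K) (cp a b u) (cp a b v) = v - u := by
  have p1 := Real.exp_pos u
  have p2 := Real.exp_pos v
  have l1 := Real.exp_lt_exp.mpr huv
  have hba : 0 < ‖b - a‖ := norm_pos_iff.mpr (sub_ne_zero.mpr c.ne.symm)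
  have da : ∀ w, dist a (cp a b w) = (Real.exp w / (1 + Real.exp w)) * ‖b - a‖ := by
    intro w
    have := Real.exp_pos w
    rw [dist_comm, dist_eq_norm, cp_sub_left, norm_smul, Real.norm_of_nonneg (by positivity)]
  have db : ∀ w, dist b (cp a b w) = (1 / (1 + Real.exp w)) * ‖b - a‖ := by
    intro w
    have := Real.exp_pos w
    rw [dist_comm, dist_eq_norm, cp_sub_right, norm_smul, norm_neg,
      Real.norm_of_nonneg (by positivity)]
  have hex : ∃ p : Euc 2 × Euc 2,
      IsHilbertPair (interior K) (cp a b u) (cp a b v) p.1 p.2 := by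
    have hcol : ∀ s : ℝ, Collinear ℝ ({a + s • (b - a), cp a b u, cp a b v} : Set (Euc 2)) := by
      intro s
      rw [collinear_iff_of_mem (p₀ := a + s • (b - a)) (by simp)]
      refine ⟨b - a, ?_⟩
      have key : ∀ w, ∃ r : ℝ, cp a b w = r • (b - a) +ᵥ (a + s • (b - a)) := by
        intro w
        refine ⟨Real.exp w / (1 + Real.exp w) - s, ?_⟩
        have : cp a b w = a + (cp a b w - a) := by abel
        rw [this, cp_sub_left, vadd_eq_add]
        module
      rintro p (rfl | rfl | rfl)
      · exact ⟨0, by simp⟩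
      · exact key u
      · exact key v
    refine ⟨(a, b), ?_, ?_, ?_, ?_, ?_, ?_⟩
    · rw [D.frontier_eq]; exact ⟨c.la, c.na⟩
    · rw [D.frontier_eq]; exact ⟨c.lb, c.nb⟩
    · simpa using hcol 0
    · simpa using hcol 1
    · simp only [da]
      apply mul_lt_mul_of_pos_right _ hba
      rw [div_lt_div_iff₀ (by positivity) (by positivity)]
      nlinarith
    · simp only [db]
      apply mul_lt_mul_of_pos_right _ hba
      rw [div_lt_div_iff₀ (by positivity) (by positivity)]
      nlinarith
  have hspec := hex.choose_spec
  have h1 : hex.choose.1 = a := D.pair_left c huv hspec.1 hspec.2.2.1 hspec.2.2.2.2.1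
  have h2 : hex.choose.2 = b := by
    refine D.pair_left c.symm (u := -v) (v := -u) (by linarith) hspec.2.1 ?_ ?_
    · rw [cp_neg, cp_neg]
      have := hspec.2.2.2.1
      rwa [Set.pair_comm (cp a b u)] at this
    · rw [cp_neg, cp_neg]
      exact hspec.2.2.2.2.2
  rw [hilbertDist, dif_pos hex, h1, h2, da, da, db, db]
  rw [← Real.log_exp (v - u), Real.exp_sub]
  congr 1
  field_simp

lemma hdist_self (K : Set (Euc 2)) (x : Euc 2) : hilbertDist (interior K) x x = 0 := by
  rw [hilbertDist, dif_neg]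
  rintro ⟨p, -, -, -, -, h, -⟩
  exact lt_irrefl _ h

/-- Every chord is isometric to the real line. -/
lemma Body.hdist {K : Set (Euc 2)} (D : Body K) {a b : Euc 2} (c : Chord K a b) (u v : ℝ) :
    hilbertDist (interior K) (cp a b u) (cp a b v) = |u - v| := by
  rcases lt_trichotomy u v with h | rfl | h
  · rw [D.hdist_lt c h, abs_sub_comm, abs_of_pos (by linarith)]
  · rw [hdist_self]; simp
  · have := D.hdist_lt c.symm (u := -u) (v := -v) (by linarith)
    rw [cp_neg, cp_neg] at this
    rw [this, abs_of_pos (by linarith)]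
    ring

lemma Body.eq_of_hdist_eq_zero {K : Set (Euc 2)} (D : Body K) {x y : Euc 2}
    (hx : x ∈ interior K) (hy : y ∈ interior K) (h : hilbertDist (interior K) x y = 0) :
    x = y := by
  by_contra hne
  obtain ⟨a, b, u, v, c, huv, rfl, rfl⟩ := D.exists_chord hx hy hne
  rw [D.hdist c, abs_eq_zero] at h
  linarith

/-! ### Extreme points and unique geodesics -/

lemma ext_eq {K : Set (Euc 2)} {e x y : Euc 2} (he : e ∈ Set.extremePoints ℝ K)
    (hx : x ∈ K) (hy : y ∈ K) {p q : ℝ} (hp : 0 < p) (hq : 0 < q)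
    (h : (p + q) • e = p • x + q • y) : x = e ∧ y = e := by
  refine (mem_extremePoints.mp he).2 x hx y hy
    ⟨p / (p + q), q / (p + q), by positivity, by positivity, by field_simp, ?_⟩
  have : e = (p + q)⁻¹ • (p • x + q • y) := by
    rw [← h, smul_smul, inv_mul_cancel₀ (by positivity), one_smul]
  rw [this]
  match_scalars <;> field_simp

lemma Body.ext_not_int {K : Set (Euc 2)} (D : Body K) {e : Euc 2}
    (he : e ∈ Set.extremePoints ℝ K) : e ∉ interior K := by
  intro hi
  obtain ⟨v, hv⟩ := exists_ne (0 : Euc 2)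
  obtain ⟨s, hs, as, -⟩ := D.exists_exit hi hv
  obtain ⟨t, ht, at', -⟩ := D.exists_exit hi (neg_ne_zero.mpr hv)
  have := (ext_eq he as at' ht hs (by module)).1
  have h0 : s • v = 0 := by simpa using this
  rcases smul_eq_zero.mp h0 with h | h
  · exact hs.ne' h
  · exact hv h

/-- A supporting functional at a boundary point. -/
lemma Body.exists_support {K : Set (Euc 2)} (D : Body K) {a : Euc 2} (na : a ∉ interior K) :
    ∃ f : Euc 2 →L[ℝ] ℝ, (∀ y ∈ interior K, f y < f a) ∧ ∀ y ∈ K, f y ≤ f a := by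
  obtain ⟨f, hf⟩ := geometric_hahn_banach_open_point D.convex.interior isOpen_interior na
  refine ⟨f, hf, fun y hy => ?_⟩
  have hcl : IsClosed {y : Euc 2 | f y ≤ f a} := isClosed_le f.continuous continuous_const
  have hsub : closure (interior K) ⊆ {y : Euc 2 | f y ≤ f a} :=
    closure_minimal (fun y hy => (hf y hy).le) hcl
  apply hsub
  rw [D.convex.closure_interior_eq_closure_of_nonempty_interior D.nonempty]
  exact subset_closure hy

/-- A pair of nonnegative affine functions bounds the Hilbert distance from below (stated in terms
of the values at two points and at the ends of their chord); equality forces the first function to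
vanish at the first end. -/
lemma cross_ratio_bound {U W fx fz gx gz fa fb ga gb : ℝ} (hU : 0 < U) (hUW : U < W)
    (hgx : 0 < gx) (hfa : 0 ≤ fa) (hfb : 0 ≤ fb) (hga : 0 ≤ ga)
    (hgb : 0 ≤ gb) (e1 : (1 + U) * fx = fa + U * fb) (e2 : (1 + W) * fz = fa + W * fb)
    (e3 : (1 + U) * gx = ga + U * gb) (e4 : (1 + W) * gz = ga + W * gb) :
    fz * gx * U ≤ fx * gz * W ∧ (fz * gx * U = fx * gz * W → fa = 0) := by
  have hW : 0 < W := hU.trans hUW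
  have key : (1 + U) * (1 + W) * (fx * gz * W - fz * gx * U) =
      fa * ga * (W - U) + fa * gb * ((W - U) * (W + U)) + fb * gb * (U * W * (W - U)) := by
    calc (1 + U) * (1 + W) * (fx * gz * W - fz * gx * U)
        = ((1 + U) * fx) * ((1 + W) * gz) * W - ((1 + W) * fz) * ((1 + U) * gx) * U := by ring
      _ = _ := by rw [e1, e2, e3, e4]; ring
  have hd : 0 < W - U := by linarith
  have t1 : 0 ≤ fa * ga * (W - U) := by positivity
  have t2 : 0 ≤ fa * gb * ((W - U) * (W + U)) := by positivity
  have t3 : 0 ≤ fb * gb * (U * W * (W - U)) := by positivity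
  constructor
  · have : 0 ≤ (1 + U) * (1 + W) * (fx * gz * W - fz * gx * U) := by rw [key]; positivity
    have := nonneg_of_mul_nonneg_right this (by positivity)
    linarith
  · intro heq
    rw [heq, sub_self, mul_zero] at key
    have z1 : fa * ga * (W - U) = 0 := by linarith
    have z2 : fa * gb * ((W - U) * (W + U)) = 0 := by linarith
    by_contra hne
    have hga0 : ga = 0 := by
      rcases mul_eq_zero.mp z1 with h | h
      · exact (mul_eq_zero.mp h).resolve_left hne
      · linarith
    have hgb0 : gb = 0 := by
      have hpos : 0 < (W - U) * (W + U) := by positivity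
      rcases mul_eq_zero.mp z2 with h | h
      · exact (mul_eq_zero.mp h).resolve_left hne
      · linarith
    rw [hga0, hgb0] at e3
    nlinarith

/-- If one end of a chord is an extreme point, then its segments are the only geodesics between
their endpoints. Equality in the triangle inequality puts the ends `a₁`, `a₂` of the two other
chords involved on the supporting line at `a`, with `a` strictly between them. -/
lemma Body.rigid {K : Set (Euc 2)} (D : Body K) {a b z : Euc 2} (c : Chord K a b)
    (ha : a ∈ Set.extremePoints ℝ K) {u v : ℝ} (huv : u < v) (hz : z ∈ interior K)
    (h : hilbertDist (interior K) (cp a b u) z + hilbertDist (interior K) z (cp a b v) = v - u) :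
    ∃ w, z = cp a b w := by
  by_cases hxz : cp a b u = z
  · exact ⟨u, hxz.symm⟩
  by_cases hzy : z = cp a b v
  · exact ⟨v, hzy⟩
  obtain ⟨a1, b1, u1, w1, c1, l1, x1, z1⟩ := D.exists_chord (c.mem u) hz hxz
  obtain ⟨a2, b2, u2, v2, c2, l2, z2, y2⟩ := D.exists_chord hz (c.mem v) hzy
  have hsum : (w1 - u1) + (v2 - u2) = v - u := by
    rw [← h]
    congr 1
    · rw [x1, z1, D.hdist_lt c1 l1]
    · rw [z2, y2, D.hdist_lt c2 l2]
  obtain ⟨f, fi, fK⟩ := D.exists_support c.na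
  obtain ⟨g, gi, gK⟩ := D.exists_support c.nb
  have lin : ∀ (φ : Euc 2 →L[ℝ] ℝ) (o p q x : Euc 2) (t : ℝ), x = cp p q t →
      (1 + Real.exp t) * (φ o - φ x) = (φ o - φ p) + Real.exp t * (φ o - φ q) := by
    intro φ o p q x t hx
    have := congrArg φ (cp_smul p q t)
    rw [← hx] at this
    simp only [map_smul, map_add, smul_eq_mul] at this
    linear_combination -this
  have hx := c.mem u
  have hy := c.mem v
  have ex := cp_smul a b u
  have ey := cp_smul a b v
  have fx0 := lin f a a b _ u rfl
  have fy0 := lin f a a b _ v rfl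
  have gx0 := lin g b a b _ u rfl
  have gy0 := lin g b a b _ v rfl
  set x := cp a b u with hxdef
  set y := cp a b v with hydef
  have fx1 := lin f a _ _ _ _ x1
  have fz1 := lin f a _ _ _ _ z1
  have gx1 := lin g b _ _ _ _ x1
  have gz1 := lin g b _ _ _ _ z1
  have fz2 := lin f a _ _ _ _ z2
  have fy2 := lin f a _ _ _ _ y2
  have gz2 := lin g b _ _ _ _ z2
  have gy2 := lin g b _ _ _ _ y2
  have ex1 := cp_smul a1 b1 u1
  have ez1 := cp_smul a1 b1 w1
  have ez2 := cp_smul a2 b2 u2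
  have ey2 := cp_smul a2 b2 v2
  rw [← x1] at ex1
  rw [← z1] at ez1
  rw [← z2] at ez2
  rw [← y2] at ey2
  have hprod : Real.exp w1 * Real.exp v2 * Real.exp u =
      Real.exp v * Real.exp u1 * Real.exp u2 := by
    simp only [← Real.exp_add]
    congr 1
    linarith
  have pU := Real.exp_pos u
  have pV := Real.exp_pos v
  have pU1 := Real.exp_pos u1
  have pW1 := Real.exp_pos w1
  have pU2 := Real.exp_pos u2
  have pV2 := Real.exp_pos v2
  have L := Real.exp_lt_exp.mpr huv
  have L1 := Real.exp_lt_exp.mpr l1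
  have L2 := Real.exp_lt_exp.mpr l2
  generalize Real.exp u = U at *
  generalize Real.exp v = V at *
  generalize Real.exp u1 = U1 at *
  generalize Real.exp w1 = W1 at *
  generalize Real.exp u2 = U2 at *
  generalize Real.exp v2 = V2 at *
  have Fx : 0 < f a - f x := by linarith [fi x hx]
  have Fy : 0 < f a - f y := by linarith [fi y hy]
  have Fz : 0 < f a - f z := by linarith [fi z hz]
  have Gx : 0 < g b - g x := by linarith [gi x hx]
  have Gy : 0 < g b - g y := by linarith [gi y hy]
  have Gz : 0 < g b - g z := by linarith [gi z hz]
  have B1 := cross_ratio_bound pU1 L1 Gx (by linarith [fK _ c1.la]) (by linarith [fK _ c1.lb])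
    (by linarith [gK _ c1.la]) (by linarith [gK _ c1.lb]) fx1 fz1 gx1 gz1
  have B2 := cross_ratio_bound pU2 L2 Gz (by linarith [fK _ c2.la]) (by linarith [fK _ c2.lb])
    (by linarith [gK _ c2.la]) (by linarith [gK _ c2.lb]) fz2 fy2 gz2 gy2
  simp only [sub_self, zero_add, mul_zero, add_zero] at fx0 fy0 gx0 gy0
  generalize f a - f x = FX at *
  generalize f a - f y = FY at *
  generalize f a - f z = FZ at *
  generalize g b - g x = GX at *
  generalize g b - g y = GY at *
  generalize g b - g z = GZ at *
  have hfxy : V * (1 + U) * FX = U * (1 + V) * FY := by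
    calc V * (1 + U) * FX = V * ((1 + U) * FX) := by ring
      _ = U * ((1 + V) * FY) := by rw [fx0, fy0]; ring
      _ = _ := by ring
  have hgxy : (1 + U) * GX = (1 + V) * GY := by rw [gx0, gy0]
  have base : FY * GX * U = FX * GY * V := by
    have : (1 + U) * (1 + V) * (FY * GX * U) = (1 + U) * (1 + V) * (FX * GY * V) := by
      calc (1 + U) * (1 + V) * (FY * GX * U)
          = (U * (1 + V) * FY) * ((1 + U) * GX) := by ring
        _ = (V * (1 + U) * FX) * ((1 + V) * GY) := by rw [hfxy, hgxy]
        _ = _ := by ring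
    exact mul_left_cancel₀ (by positivity) this
  -- both inequalities are equalities because their product is one
  have prodEq : (FZ * GX * U1) * (FY * GZ * U2) = (FX * GZ * W1) * (FZ * GY * V2) := by
    have : U * ((FZ * GX * U1) * (FY * GZ * U2)) = U * ((FX * GZ * W1) * (FZ * GY * V2)) := by
      calc U * ((FZ * GX * U1) * (FY * GZ * U2))
          = (FY * GX * U) * (FZ * GZ * U1 * U2) := by ring
        _ = (FX * GY * FZ * GZ) * (V * U1 * U2) := by rw [base]; ring
        _ = _ := by rw [← hprod]; ring
    exact mul_left_cancel₀ pU.ne' this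
  have eq1 : FZ * GX * U1 = FX * GZ * W1 := by
    refine le_antisymm B1.1 (not_lt.mp fun hlt => ?_)
    have : (FZ * GX * U1) * (FY * GZ * U2) < (FX * GZ * W1) * (FZ * GY * V2) :=
      mul_lt_mul hlt B2.1 (by positivity) (by positivity)
    linarith
  have eq2 : FY * GZ * U2 = FZ * GY * V2 := by
    refine le_antisymm B2.1 (not_lt.mp fun hlt => ?_)
    have : (FZ * GX * U1) * (FY * GZ * U2) < (FX * GZ * W1) * (FZ * GY * V2) :=
      mul_lt_mul' B1.1 hlt (by positivity) (by positivity)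
    linarith
  have za1 := B1.2 eq1
  have za2 := B2.2 eq2
  rw [za1] at fx1 fz1
  rw [za2] at fz2 fy2
  simp only [zero_add] at fx1 fz1 fz2 fy2
  have r1 : W1 * (1 + U1) * FX = U1 * (1 + W1) * FZ := by
    linear_combination W1 * fx1 - U1 * fz1
  have r2 : V2 * (1 + U2) * FZ = U2 * (1 + V2) * FY := by
    linear_combination V2 * fz2 - U2 * fy2
  have hRR : W1 * (1 + U1) * V2 * (1 + U2) * (U * (1 + V)) =
      U1 * (1 + W1) * U2 * (1 + V2) * (V * (1 + U)) := by
    have : (FX * FY) * (W1 * (1 + U1) * V2 * (1 + U2) * (U * (1 + V))) =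
        (FX * FY) * (U1 * (1 + W1) * U2 * (1 + V2) * (V * (1 + U))) := by
      calc (FX * FY) * (W1 * (1 + U1) * V2 * (1 + U2) * (U * (1 + V)))
          = (W1 * (1 + U1) * FX) * (V2 * (1 + U2)) * (U * (1 + V) * FY) := by ring
        _ = (U1 * (1 + W1)) * (V2 * (1 + U2) * FZ) * (V * (1 + U) * FX) := by
            rw [r1, ← hfxy]; ring
        _ = _ := by rw [r2]; ring
    exact mul_left_cancel₀ (by positivity) this
  have hA : (V - U) • a = (V * (1 + U)) • x - (U * (1 + V)) • y := by
    rw [mul_smul, mul_smul, ex, ey]; module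
  have hA1 : (W1 - U1) • a1 = (W1 * (1 + U1)) • x - (U1 * (1 + W1)) • z := by
    rw [mul_smul, mul_smul, ex1, ez1]; module
  have hA2 : (V2 - U2) • a2 = (V2 * (1 + U2)) • z - (U2 * (1 + V2)) • y := by
    rw [mul_smul, mul_smul, ez2, ey2]; module
  have d1 : 0 < W1 - U1 := by linarith
  have d2 : 0 < V2 - U2 := by linarith
  have haa := ext_eq ha c1.la c2.la (p := V * (1 + U) * (V2 * (1 + U2)) * (W1 - U1))
    (q := V * (1 + U) * (U1 * (1 + W1)) * (V2 - U2)) (by positivity) (by positivity) (by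
      have t1 : V * (1 + U) * (V2 * (1 + U2)) * (W1 - U1) +
          V * (1 + U) * (U1 * (1 + W1)) * (V2 - U2) =
          (W1 * (1 + U1) * V2 * (1 + U2)) * (V - U) := by
        linear_combination hRR
      rw [t1, mul_smul, hA, mul_smul _ (W1 - U1), mul_smul _ (V2 - U2), hA1, hA2]
      match_scalars
      · ring
      · linear_combination -hRR
      · ring)
  have ha1 : a1 = a := haa.1
  subst ha1
  have hbb := D.chord_right_unique c c1 (x1 : cp a1 b u = _)
  subst hbb
  exact ⟨w1, z1⟩

/-! ### Comparison estimates -/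

lemma Body.hdist_le {K : Set (Euc 2)} (D : Body K) {x y : Euc 2} {s t : ℝ}
    (hx : x ∈ interior K) (hy : y ∈ interior K) (hs : 0 < s) (ht : 0 < t)
    (h1 : x - s • (y - x) ∈ K) (h2 : y + t • (y - x) ∈ K) :
    hilbertDist (interior K) x y ≤ Real.log ((1 + 1 / s) * (1 + 1 / t)) := by
  by_cases hxy : x = y
  · subst hxy
    rw [hdist_self]
    apply Real.log_nonneg
    have := one_div_pos.mpr hs
    have := one_div_pos.mpr ht
    nlinarith
  obtain ⟨a, b, u, v, c, huv, rfl, rfl⟩ := D.exists_chord hx hy hxy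
  rw [D.hdist_lt c huv, ← Real.log_exp (v - u), Real.exp_sub]
  have ex := cp_smul a b u
  have ey := cp_smul a b v
  have pU := Real.exp_pos u
  have pV := Real.exp_pos v
  have L := Real.exp_lt_exp.mpr huv
  set x := cp a b u
  set y := cp a b v
  generalize Real.exp u = U at *
  generalize Real.exp v = V at *
  have d : 0 < V - U := by linarith
  have hA : (V - U) • a = (V * (1 + U)) • x - (U * (1 + V)) • y := by
    rw [mul_smul, mul_smul, ex, ey]; module
  have hB : (V - U) • b = (1 + V) • y - (1 + U) • x := by
    rw [ex, ey]; module
  have hσ : s * (V - U) ≤ U * (1 + V) := by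
    by_contra hlt
    push Not at hlt
    refine c.na (D.mem_int (p := s * (V - U) - U * (1 + V)) (q := U * (1 + V)) hx h1
      (by linarith) (by positivity) ?_)
    rw [sub_add_cancel, mul_smul, hA]
    module
  have hτ : t * (V - U) ≤ 1 + U := by
    by_contra hlt
    push Not at hlt
    refine c.nb (D.mem_int (p := t * (V - U) - (1 + U)) (q := 1 + U) hy h2
      (by linarith) (by positivity) ?_)
    rw [sub_add_cancel, mul_smul, hB]
    module
  apply Real.log_le_log (by positivity)
  have e1 : V * (1 + U) / (U * (1 + V)) ≤ 1 + 1 / s := by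
    rw [show (1 : ℝ) + 1 / s = (s + 1) / s by field_simp, div_le_div_iff₀ (by positivity) hs]
    nlinarith
  have e2 : (1 + V) / (1 + U) ≤ 1 + 1 / t := by
    rw [show (1 : ℝ) + 1 / t = (t + 1) / t by field_simp, div_le_div_iff₀ (by positivity) ht]
    nlinarith
  calc V / U = (V * (1 + U) / (U * (1 + V))) * ((1 + V) / (1 + U)) := by field_simp
    _ ≤ _ := mul_le_mul e1 e2 (by positivity) (by positivity)

/-- Homotheties centred at a point of the body do not spread points apart too much. -/
lemma Body.hdist_homothety_le {K : Set (Euc 2)} (D : Body K) {e p q : Euc 2} {s t μ : ℝ}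
    (he : e ∈ K) (hs : 0 < s) (ht : 0 < t) (h1 : p - s • (q - p) ∈ K) (h2 : q + t • (q - p) ∈ K)
    (hμ0 : 0 ≤ μ) (hμ1 : μ ≤ 1)
    (hp : e + μ • (p - e) ∈ interior K) (hq : e + μ • (q - e) ∈ interior K) :
    hilbertDist (interior K) (e + μ • (p - e)) (e + μ • (q - e)) ≤
      Real.log ((1 + 1 / s) * (1 + 1 / t)) := by
  apply D.hdist_le hp hq hs ht
  · have := D.convex he h1 (sub_nonneg.mpr hμ1) hμ0 (by ring)
    convert this using 1
    module
  · have := D.convex he h2 (sub_nonneg.mpr hμ1) hμ0 (by ring)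
    convert this using 1
    module

lemma Body.mem_of_hdist_le {K : Set (Euc 2)} (D : Body K) {x y : Euc 2} {C : ℝ}
    (hx : x ∈ interior K) (hy : y ∈ interior K) (h : hilbertDist (interior K) x y ≤ C) :
    x - (Real.exp (-C)) • (y - x) ∈ K := by
  by_cases hxy : x = y
  · subst hxy
    simpa using interior_subset hx
  obtain ⟨a, b, u, v, c, huv, rfl, rfl⟩ := D.exists_chord hx hy hxy
  rw [D.hdist_lt c huv] at h
  have hE : Real.exp (-C) * Real.exp v ≤ Real.exp u := by
    rw [← Real.exp_add]; exact Real.exp_le_exp.mpr (by linarith)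
  have pE := Real.exp_pos (-C)
  have ex := cp_smul a b u
  have ey := cp_smul a b v
  have pU := Real.exp_pos u
  have pV := Real.exp_pos v
  have L := Real.exp_lt_exp.mpr huv
  set x := cp a b u
  set y := cp a b v
  generalize Real.exp u = U at *
  generalize Real.exp v = V at *
  generalize Real.exp (-C) = s at *
  have d : 0 < V - U := by linarith
  have hA : (V - U) • a = (V * (1 + U)) • x - (U * (1 + V)) • y := by
    rw [mul_smul, mul_smul, ex, ey]; module
  have hle : s * (V - U) ≤ U * (1 + V) := by nlinarith [mul_pos pE pU, mul_pos pU pV]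
  refine interior_subset (D.mem_int (p := U * (1 + V) - s * (V - U)) (q := s * (V - U)) hx c.la
    ?_ (by positivity) ?_)
  · nlinarith [mul_pos pE pU, mul_pos pU pV]
  · rw [sub_add_cancel, mul_smul, mul_smul s, hA]
    module

lemma tendsto_cp (a b : Euc 2) : Filter.Tendsto (cp a b) Filter.atBot (nhds a) := by
  have h1 : ContinuousAt (fun t : ℝ => (1 + t)⁻¹) 0 :=
    ContinuousAt.inv₀ (by fun_prop) (by norm_num)
  have h2 : ContinuousAt (fun t : ℝ => a + t • b) 0 := by fun_prop
  have h := (h1.tendsto.smul h2.tendsto).comp Real.tendsto_exp_atBot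
  have h0 : (1 + (0 : ℝ))⁻¹ • (a + (0 : ℝ) • b) = a := by simp
  rw [h0] at h
  exact h

/-- Two sequences at bounded Hilbert distance cannot converge to different points when the limit
of the first one is an extreme point. -/
lemma Body.limit_eq {K : Set (Euc 2)} (D : Body K) {l : Filter ℝ} [l.NeBot] {X Y : ℝ → Euc 2}
    {a b : Euc 2} {C : ℝ} (ha : a ∈ Set.extremePoints ℝ K)
    (hX : Filter.Tendsto X l (nhds a)) (hY : Filter.Tendsto Y l (nhds b))
    (iX : ∀ t, X t ∈ interior K) (iY : ∀ t, Y t ∈ interior K)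
    (hC : ∀ᶠ t in l, hilbertDist (interior K) (X t) (Y t) ≤ C) : b = a := by
  have hcl := D.compact.isClosed
  have hb : b ∈ K := hcl.mem_of_tendsto hY (Filter.Eventually.of_forall fun t =>
    interior_subset (iY t))
  have hm : a - (Real.exp (-C)) • (b - a) ∈ K := by
    refine hcl.mem_of_tendsto (hX.sub ((hY.sub hX).const_smul (Real.exp (-C)))) ?_
    filter_upwards [hC] with t ht
    exact D.mem_of_hdist_le (iX t) (iY t) ht
  exact (ext_eq ha hm hb one_pos (Real.exp_pos (-C)) (by module)).2

/-! ### Chords without extreme ends carry several geodesics -/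

lemma Body.exists_edge {K : Set (Euc 2)} (D : Body K) {a : Euc 2} (la : a ∈ K)
    (h : a ∉ Set.extremePoints ℝ K) : ∃ w : Euc 2, w ≠ 0 ∧ a + w ∈ K ∧ a - w ∈ K := by
  rw [mem_extremePoints] at h
  push Not at h
  obtain ⟨p, hp, q, hq, ⟨α, β, hα, hβ, hαβ, rfl⟩, hne⟩ := h la
  have hpq : p ≠ q := by
    rintro rfl
    have : α • p + β • p = p := by rw [← add_smul, hαβ, one_smul]
    exact hne this.symm this.symm
  have hm : 0 < min α β := lt_min hα hβ
  refine ⟨min α β • (q - p), smul_ne_zero hm.ne' (sub_ne_zero.mpr hpq.symm), ?_, ?_⟩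
  · have := D.convex hp hq (a := α - min α β) (b := β + min α β)
      (by linarith [min_le_left α β]) (by linarith) (by linarith)
    convert this using 1
    module
  · have := D.convex hp hq (a := α + min α β) (b := β - min α β)
      (by linarith) (by linarith [min_le_right α β]) (by linarith)
    convert this using 1
    module

lemma Body.edge_mem {K : Set (Euc 2)} (D : Body K) {a w : Euc 2} (na : a ∉ interior K)
    (hp : a + w ∈ K) (hm : a - w ∈ K) {r : ℝ} (hr : |r| < 1) :
    a + r • w ∈ K ∧ a + r • w ∉ interior K := by
  obtain ⟨h1, h2⟩ := abs_lt.mp hr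
  constructor
  · have := D.convex hp hm (a := (1 + r) / 2) (b := (1 - r) / 2) (by linarith) (by linarith)
      (by ring)
    convert this using 1
    module
  · intro hi
    rcases le_total 0 r with h | h
    · exact na (D.mem_int hi hm one_pos h (by module))
    · exact na (D.mem_int hi hp (p := 1) (q := -r) one_pos (by linarith) (by module))

lemma Body.edge_dir {K : Set (Euc 2)} (D : Body K) {a b w : Euc 2} (c : Chord K a b)
    (hp : a + w ∈ K) (hm : a - w ∈ K) (hw : w ≠ 0) (k : ℝ) : w ≠ k • (b - a) := by
  intro h
  have key : ∀ r : ℝ, 0 < r → a - r • (b - a) ∈ K → False := by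
    intro r hr hK
    refine c.na (D.mem_int (p := 2 * r) (q := 1) (c.mem 0) hK (by positivity) zero_le_one ?_)
    rw [cp, Real.exp_zero]
    module
  rcases lt_trichotomy k 0 with hk | hk | hk
  · refine key (-k) (by linarith) ?_
    rw [h] at hp
    convert hp using 1
    module
  · rw [hk, zero_smul] at h; exact hw h
  · refine key k hk ?_
    rwa [h] at hm

/-- Distance computation for points pushed off the chord `a b` towards the (projective) point
`o = κ₀ a + κ₁ w₁ = κ₀ b - κ₂ w₂` where the two boundary edges through `a` and `b` meet. -/
lemma Body.hdist_perturb {K : Set (Euc 2)} (D : Body K) {a b w1 w2 P Q : Euc 2}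
    (na : a ∉ interior K) (nb : b ∉ interior K)
    (hp1 : a + w1 ∈ K) (hm1 : a - w1 ∈ K) (hp2 : b + w2 ∈ K) (hm2 : b - w2 ∈ K)
    {κ0 κ1 κ2 U W ε1 ε2 A B hP hQ : ℝ}
    (ho : κ0 • a + κ1 • w1 = κ0 • b - κ2 • w2) (hU : 0 < U) (hUW : U < W)
    (hA : A = (W - U) + (W * ε1 - U * ε2) * κ0) (hB : B = (W - U) + (ε2 - ε1) * κ0)
    (hA1 : |(W * ε1 - U * ε2) * κ1| < A) (hB1 : |(ε2 - ε1) * κ2| < B)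
    (ehP : hP = 1 + U + ε1 * κ0) (ehQ : hQ = 1 + W + ε2 * κ0)
    (eP : hP • P = a + U • b + ε1 • (κ0 • a + κ1 • w1))
    (eQ : hQ • Q = a + W • b + ε2 • (κ0 • a + κ1 • w1)) (iP : P ∈ interior K) :
    Q ∈ interior K ∧ hilbertDist (interior K) P Q = Real.log W - Real.log U := by
  have pA : 0 < A := lt_of_le_of_lt (abs_nonneg _) hA1
  have pB : 0 < B := lt_of_le_of_lt (abs_nonneg _) hB1
  have pW : 0 < W := hU.trans hUW
  have d : 0 < W - U := by linarith
  obtain ⟨a1, ea1⟩ : ∃ a1, a1 = a + ((W * ε1 - U * ε2) * κ1 / A) • w1 := ⟨_, rfl⟩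
  obtain ⟨b1, eb1⟩ : ∃ b1, b1 = b + (-((ε2 - ε1) * κ2) / B) • w2 := ⟨_, rfl⟩
  have ma := D.edge_mem na hp1 hm1 (r := (W * ε1 - U * ε2) * κ1 / A)
    (by rw [abs_div, abs_of_pos pA, div_lt_one pA]; exact hA1)
  have mb := D.edge_mem nb hp2 hm2 (r := -((ε2 - ε1) * κ2) / B)
    (by rw [abs_div, abs_of_pos pB, div_lt_one pB, abs_neg]; exact hB1)
  rw [← ea1] at ma
  rw [← eb1] at mb
  have hAa : A • a1 = (W - U) • a + (W * ε1 - U * ε2) • (κ0 • a + κ1 • w1) := by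
    rw [ea1, smul_add, smul_smul, mul_div_cancel₀ _ pA.ne', hA]; module
  have hBb : B • b1 = (W - U) • b + (ε2 - ε1) • (κ0 • a + κ1 • w1) := by
    rw [ho, eb1, smul_add, smul_smul, mul_div_cancel₀ _ pB.ne', hB]; module
  have e1 : (A + U * B) • P = A • a1 + (U * B) • b1 := by
    rw [mul_smul, hAa, hBb]
    have : A + U * B = (W - U) * hP := by rw [hA, hB, ehP]; ring
    rw [this, mul_smul, eP]
    module
  have e2 : (A + W * B) • Q = A • a1 + (W * B) • b1 := by
    rw [mul_smul, hAa, hBb]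
    have : A + W * B = (W - U) * hQ := by rw [hA, hB, ehQ]; ring
    rw [this, mul_smul, eQ]
    module
  have hPc := eq_cp_of pA (by positivity) e1
  have hQc := eq_cp_of pA (by positivity) e2
  have ch : Chord K a1 b1 := D.chord_of_mem ma.1 ma.2 mb.1 mb.2 (hPc ▸ iP)
  refine ⟨hQc ▸ ch.mem _, ?_⟩
  rw [hPc, hQc, D.hdist_lt ch]
  · rw [Real.log_div (by positivity) pA.ne', Real.log_div (by positivity) pA.ne',
      Real.log_mul pW.ne' pB.ne', Real.log_mul hU.ne' pB.ne']
    ring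
  · apply Real.log_lt_log (by positivity)
    gcongr

lemma exists_relation (x y z : Euc 2) :
    ∃ k0 k1 k2 : ℝ, k0 • x + k1 • y + k2 • z = 0 ∧ ¬ (k0 = 0 ∧ k1 = 0 ∧ k2 = 0) := by
  have h : ¬ LinearIndependent ℝ ![x, y, z] := by
    intro h
    have := h.fintype_card_le_finrank
    simp at this
  obtain ⟨g, hg, i, hi⟩ := Fintype.not_linearIndependent_iff.mp h
  refine ⟨g 0, g 1, g 2, by simpa [Fin.sum_univ_three] using hg, ?_⟩
  rintro ⟨h0, h1, h2⟩
  fin_cases i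
  · exact hi h0
  · exact hi h1
  · exact hi h2

/-- If neither end of a chord is extreme, there are geodesics leaving the chord. -/
lemma Body.not_rigid {K : Set (Euc 2)} (D : Body K) {a b : Euc 2} (c : Chord K a b)
    (ha : a ∉ Set.extremePoints ℝ K) (hb : b ∉ Set.extremePoints ℝ K) {u v : ℝ} (huv : u < v) :
    ∃ z ∈ interior K, (∀ w, z ≠ cp a b w) ∧
      hilbertDist (interior K) (cp a b u) z + hilbertDist (interior K) z (cp a b v) = v - u := by
  obtain ⟨w1, hw1, p1, m1⟩ := D.exists_edge c.la ha
  obtain ⟨w2, hw2, p2, m2⟩ := D.exists_edge c.lb hb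
  obtain ⟨k0, k1, k2, hk, hne⟩ := exists_relation (a - b) w1 w2
  have ho : k0 • a + k1 • w1 = k0 • b - k2 • w2 := by
    rw [← sub_eq_zero, ← hk]; module
  obtain ⟨w, huw, hwv⟩ := exists_between huv
  have pU := Real.exp_pos u
  have pW := Real.exp_pos w
  have pV := Real.exp_pos v
  have L1 := Real.exp_lt_exp.mpr huw
  have L2 := Real.exp_lt_exp.mpr hwv
  have ex := cp_smul a b u
  have ey := cp_smul a b v
  have lU := Real.log_exp u
  have lW := Real.log_exp w
  have lV := Real.log_exp v
  generalize Real.exp u = U at *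
  generalize Real.exp w = W at *
  generalize Real.exp v = V at *
  have ev : ∀ F G : ℝ → ℝ, Continuous F → Continuous G → F 0 < G 0 →
      ∀ᶠ ε in nhdsWithin (0 : ℝ) {0}ᶜ, F ε < G ε := fun F G hF hG h0 =>
    mem_nhdsWithin_of_mem_nhds ((isOpen_lt hF hG).mem_nhds h0)
  have hall : ∀ᶠ ε in nhdsWithin (0 : ℝ) {0}ᶜ,
      |(W * 0 - U * ε) * k1| < (W - U) + (W * 0 - U * ε) * k0 ∧
      |(ε - 0) * k2| < (W - U) + (ε - 0) * k0 ∧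
      |(V * ε - W * 0) * k1| < (V - W) + (V * ε - W * 0) * k0 ∧
      |(0 - ε) * k2| < (V - W) + (0 - ε) * k0 ∧
      0 < 1 + W + ε * k0 ∧ ε ≠ 0 := by
    refine (ev _ _ (by fun_prop) (by fun_prop) (by simpa using L1)).and
      ((ev _ _ (by fun_prop) (by fun_prop) (by simpa using L1)).and
      ((ev _ _ (by fun_prop) (by fun_prop) (by simpa using L2)).and
      ((ev _ _ (by fun_prop) (by fun_prop) (by simpa using L2)).and
      ((ev (fun _ => 0) _ (by fun_prop) (by fun_prop) (by simp; positivity)).and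
      self_mem_nhdsWithin))))
  obtain ⟨ε, c1, c2, c3, c4, hh, hε⟩ := hall.exists
  obtain ⟨z, hz⟩ : ∃ z, (1 + W + ε * k0) • z = a + W • b + ε • (k0 • a + k1 • w1) :=
    ⟨(1 + W + ε * k0)⁻¹ • (a + W • b + ε • (k0 • a + k1 • w1)), by
      rw [smul_smul, mul_inv_cancel₀ hh.ne', one_smul]⟩
  have A1 := D.hdist_perturb c.na c.nb p1 m1 p2 m2 ho pU L1 rfl rfl c1 c2 rfl rfl
    (P := cp a b u) (Q := z) (by simpa using ex) hz (c.mem u)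
  have A2 := D.hdist_perturb c.na c.nb p1 m1 p2 m2 ho pW L2 rfl rfl c3 c4 rfl rfl
    (P := z) (Q := cp a b v) hz (by simpa using ey) A1.1
  refine ⟨z, A1.1, ?_, ?_⟩
  · intro r hr
    have er := cp_smul a b r
    rw [← hr] at er
    have pR := Real.exp_pos r
    generalize Real.exp r = R at *
    have hlin : ((1 + R) * (ε * k1)) • w1 = ((1 + W + ε * k0) * R - (1 + R) * W) • (b - a) := by
      have e1 : (1 + R) • ((1 + W + ε * k0) • z) = (1 + W + ε * k0) • ((1 + R) • z) := by
        module
      rw [hz, er] at e1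
      rw [← sub_eq_zero] at e1 ⊢
      rw [← e1]
      module
    have hk1 : k1 = 0 := by
      by_contra hk1
      have hn : (1 + R) * (ε * k1) ≠ 0 :=
        mul_ne_zero (by positivity) (mul_ne_zero hε hk1)
      refine D.edge_dir c p1 m1 hw1
        (((1 + R) * (ε * k1))⁻¹ * ((1 + W + ε * k0) * R - (1 + R) * W)) ?_
      rw [mul_smul, ← hlin, smul_smul, inv_mul_cancel₀ hn, one_smul]
    have hk2 : k2 = 0 := by
      by_contra hk2
      refine D.edge_dir c.symm p2 m2 hw2 (k2⁻¹ * (-k0)) ?_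
      have : k2 • w2 = (-k0) • (a - b) := by
        rw [hk1] at hk
        rw [← sub_eq_zero, ← hk]
        module
      rw [mul_smul, ← this, smul_smul, inv_mul_cancel₀ hk2, one_smul]
    have hk0 : k0 = 0 := by
      rw [hk1, hk2] at hk
      simp only [zero_smul, add_zero] at hk
      exact (smul_eq_zero.mp hk).resolve_right (sub_ne_zero.mpr c.ne)
    exact hne ⟨hk0, hk1, hk2⟩
  · rw [A1.2, A2.2, lU, lW, lV]
    ring

/-! ### Isometries map rigid chords to rigid chords -/

/-- `τ` and `σ` restrict to mutually inverse isometries between the Hilbert geometries of the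
interiors of `K` and `K'`. Carrying the inverse along makes the notion symmetric. -/
structure Iso (K K' : Set (Euc 2)) (τ σ : Euc 2 → Euc 2) : Prop where
  mt : ∀ x ∈ interior K, τ x ∈ interior K'
  ms : ∀ y ∈ interior K', σ y ∈ interior K
  lr : ∀ x ∈ interior K, σ (τ x) = x
  rl : ∀ y ∈ interior K', τ (σ y) = y
  dt : ∀ x ∈ interior K, ∀ y ∈ interior K,
    hilbertDist (interior K') (τ x) (τ y) = hilbertDist (interior K) x y

lemma Iso.symm {K K' : Set (Euc 2)} {τ σ : Euc 2 → Euc 2} (I : Iso K K' τ σ) : Iso K' K σ τ :=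
  ⟨I.ms, I.mt, I.rl, I.lr, fun x hx y hy => by
    rw [← I.dt _ (I.ms x hx) _ (I.ms y hy), I.rl x hx, I.rl y hy]⟩

lemma exists_iso {K K' : Set (Euc 2)} {τ : Euc 2 → Euc 2} (D : Body K)
    (h : IsHilbertIsometry (interior K) (interior K') τ) : ∃ σ, Iso K K' τ σ := by
  obtain ⟨h1, h2, h3⟩ := h
  have : ∀ y, ∃ x, y ∈ interior K' → x ∈ interior K ∧ τ x = y := by
    intro y
    by_cases hy : y ∈ interior K'
    · obtain ⟨x, hx, hxy⟩ := h2 hy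
      exact ⟨x, fun _ => ⟨hx, hxy⟩⟩
    · exact ⟨0, fun h => absurd h hy⟩
  choose σ hσ using this
  refine ⟨σ, h1, fun y hy => (hσ y hy).1, fun x hx => ?_, fun y hy => (hσ y hy).2, h3⟩
  obtain ⟨h4, h5⟩ := hσ _ (h1 hx)
  apply D.eq_of_hdist_eq_zero h4 hx
  rw [← h3 _ h4 _ hx, h5, hdist_self]

lemma Iso.segment {K K' : Set (Euc 2)} {τ σ : Euc 2 → Euc 2} (I : Iso K K' τ σ) (D : Body K)
    (D' : Body K') {a b : Euc 2} (c : Chord K a b) (ha : a ∈ Set.extremePoints ℝ K) {u v : ℝ}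
    (huv : u < v) : ∃ a' b' k, Chord K' a' b' ∧
      ∀ t, u ≤ t → t ≤ v → τ (cp a b t) = cp a' b' (t + k) := by
  have hne : τ (cp a b u) ≠ τ (cp a b v) := by
    intro h
    have := congrArg σ h
    rw [I.lr _ (c.mem u), I.lr _ (c.mem v)] at this
    exact huv.ne (c.cp_inj this)
  obtain ⟨a', b', u', v', c', huv', hu, hv⟩ :=
    D'.exists_chord (I.mt _ (c.mem u)) (I.mt _ (c.mem v)) hne
  have hd : v' - u' = v - u := by
    have h := I.dt _ (c.mem u) _ (c.mem v)
    rw [hu, hv, D'.hdist_lt c' huv', D.hdist_lt c huv] at h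
    exact h
  refine ⟨a', b', u' - u, c', fun t h1 h2 => ?_⟩
  have hw := I.ms _ (c'.mem (t + (u' - u)))
  have hτw := I.rl _ (c'.mem (t + (u' - u)))
  set w := σ (cp a' b' (t + (u' - u))) with hwdef
  have d1 : hilbertDist (interior K) (cp a b u) w = t - u := by
    rw [← I.dt _ (c.mem u) _ hw, hτw, hu, D'.hdist c', abs_sub_comm, abs_of_nonneg (by linarith)]
    ring
  have d2 : hilbertDist (interior K) w (cp a b v) = v - t := by
    rw [← I.dt _ hw _ (c.mem v), hτw, hv, D'.hdist c', abs_sub_comm, abs_of_nonneg (by linarith)]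
    linarith
  obtain ⟨w0, hw0⟩ := D.rigid c ha huv hw (by rw [d1, d2]; ring)
  rw [hw0, D.hdist c] at d1 d2
  have : w0 = t := by
    rcases abs_cases (u - w0) with h | h <;> rcases abs_cases (w0 - v) with h' | h' <;> linarith
  rw [← hτw, hw0, this]

/-- A chord with an extreme endpoint is mapped onto a chord, by a translation of the exponential
parameter. -/
lemma Iso.line {K K' : Set (Euc 2)} {τ σ : Euc 2 → Euc 2} (I : Iso K K' τ σ) (D : Body K)
    (D' : Body K') {a b : Euc 2} (c : Chord K a b) (ha : a ∈ Set.extremePoints ℝ K) :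
    ∃ a' b' k, Chord K' a' b' ∧ ∀ t, τ (cp a b t) = cp a' b' (t + k) := by
  obtain ⟨a', b', k, c', h⟩ := I.segment D D' c ha zero_lt_one
  refine ⟨a', b', k, c', fun t => ?_⟩
  have ht := abs_nonneg t
  obtain ⟨a2, b2, k2, c2, h2⟩ := I.segment D D' c ha (u := -(|t| + 2)) (v := |t| + 2) (by linarith)
  have e0 : cp a' b' (0 + k) = cp a2 b2 (0 + k2) := by
    rw [← h 0 le_rfl zero_le_one, ← h2 0 (by linarith) (by linarith)]
  have e1 : cp a' b' (1 + k) = cp a2 b2 (1 + k2) := by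
    rw [← h 1 zero_le_one le_rfl, ← h2 1 (by linarith) (by linarith)]
  obtain ⟨rfl, rfl⟩ := D'.chord_unique c' c2 (by linarith) (by linarith) e0 e1
  have hk := c'.cp_inj e0
  rw [h2 t (by linarith [neg_abs_le t]) (by linarith [le_abs_self t])]
  congr 1
  linarith

lemma Iso.line_inv {K K' : Set (Euc 2)} {τ σ : Euc 2 → Euc 2} (I : Iso K K' τ σ)
    {a b a' b' : Euc 2} {k : ℝ} (c : Chord K a b)
    (h : ∀ t, τ (cp a b t) = cp a' b' (t + k)) (t : ℝ) : σ (cp a' b' t) = cp a b (t - k) := by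
  have := h (t - k)
  rw [sub_add_cancel] at this
  rw [← this, I.lr _ (c.mem _)]

lemma Iso.line_swap {τ : Euc 2 → Euc 2} {a b a' b' : Euc 2} {k : ℝ}
    (h : ∀ t, τ (cp a b t) = cp a' b' (t + k)) (t : ℝ) :
    τ (cp b a t) = cp b' a' (t + -k) := by
  rw [← cp_neg, h, ← cp_neg a' b' (t + -k)]
  congr 1
  ring

/-- Rigidity is a metric property, so the image of a rigid chord has an extreme endpoint. -/
lemma Iso.image_ext {K K' : Set (Euc 2)} {τ σ : Euc 2 → Euc 2} (I : Iso K K' τ σ) (D : Body K)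
    (D' : Body K') {a b a' b' : Euc 2} {k : ℝ} (c : Chord K a b) (ha : a ∈ Set.extremePoints ℝ K)
    (c' : Chord K' a' b') (h : ∀ t, τ (cp a b t) = cp a' b' (t + k)) :
    a' ∈ Set.extremePoints ℝ K' ∨ b' ∈ Set.extremePoints ℝ K' := by
  by_contra hcon
  push Not at hcon
  obtain ⟨z, hz, hzn, hd⟩ := D'.not_rigid c' hcon.1 hcon.2 (u := 0 + k) (v := 1 + k) (by linarith)
  have hσ := I.ms z hz
  obtain ⟨w, hw⟩ := D.rigid c ha zero_lt_one hσ (by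
    rw [← I.dt _ (c.mem 0) _ hσ, ← I.dt _ hσ _ (c.mem 1), I.rl z hz, h, h, hd]
    ring)
  apply hzn (w + k)
  rw [← h, ← hw, I.rl z hz]

/-- Chords issuing from a common endpoint stay at bounded distance if their other endpoints lie in
the relative interior of a segment of `K`. -/
lemma Body.hdist_pencil_le {K : Set (Euc 2)} (D : Body K) {e p q : Euc 2} {s t : ℝ}
    (cp1 : Chord K e p) (cq : Chord K e q) (hs : 0 < s) (ht : 0 < t)
    (h1 : p - s • (q - p) ∈ K) (h2 : q + t • (q - p) ∈ K) (u : ℝ) :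
    hilbertDist (interior K) (cp e p u) (cp e q u) ≤ Real.log ((1 + 1 / s) * (1 + 1 / t)) := by
  have hu := Real.exp_pos u
  have e1 : ∀ r, cp e r u = e + (Real.exp u / (1 + Real.exp u)) • (r - e) := by
    intro r
    rw [← cp_sub_left]
    abel
  rw [e1 p, e1 q]
  apply D.hdist_homothety_le cp1.la hs ht h1 h2 (by positivity)
  · rw [div_le_one (by positivity)]; linarith
  · rw [← e1]; exact cp1.mem u
  · rw [← e1]; exact cq.mem u

lemma Body.exists_extend {K : Set (Euc 2)} (D : Body K) {p q : Euc 2} (hp : p ∈ interior K) :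
    ∃ s : ℝ, 0 < s ∧ p - s • (q - p) ∈ K := by
  by_cases h : p = q
  · subst h
    exact ⟨1, one_pos, by simpa using interior_subset hp⟩
  · obtain ⟨s, hs, h1, -⟩ := D.exists_exit hp (v := p - q) (sub_ne_zero.mpr h)
    refine ⟨s, hs, ?_⟩
    convert h1 using 1
    module

/-- Two chords issuing from a common endpoint are asymptotic there. -/
lemma Body.hdist_asymp {K : Set (Euc 2)} (D : Body K) {e p q : Euc 2}
    (c1 : Chord K e p) (c2 : Chord K e q) :
    ∃ C, ∀ u ≤ 0, hilbertDist (interior K) (cp e p u) (cp e q u) ≤ C := by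
  obtain ⟨s, hs, h1⟩ := D.exists_extend (q := cp e q 0) (c1.mem 0)
  obtain ⟨t, ht, h2⟩ := D.exists_extend (q := cp e p 0) (c2.mem 0)
  refine ⟨Real.log ((1 + 1 / s) * (1 + 1 / t)), fun u hu => ?_⟩
  have hu0 := Real.exp_pos u
  have hu1 : Real.exp u ≤ 1 := Real.exp_le_one_iff.mpr hu
  have e1 : ∀ r, cp e r u = e + (2 * Real.exp u / (1 + Real.exp u)) • (cp e r 0 - e) := by
    intro r
    rw [cp_sub_left, smul_smul, Real.exp_zero, ← sub_eq_iff_eq_add', cp_sub_left]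
    congr 1
    field_simp
    norm_num
  rw [e1 p, e1 q]
  apply D.hdist_homothety_le c1.la hs ht h1 (by convert h2 using 1; module) (by positivity)
  · rw [div_le_one (by positivity)]; linarith
  · rw [← e1]; exact c1.mem u
  · rw [← e1]; exact c2.mem u

lemma tendsto_cp_add (a b : Euc 2) (k : ℝ) :
    Filter.Tendsto (fun t => cp a b (t + k)) Filter.atBot (nhds a) :=
  (tendsto_cp a b).comp (Filter.tendsto_atBot_add_const_right _ k Filter.tendsto_id)

lemma tendsto_cp_top (a b : Euc 2) (k : ℝ) :
    Filter.Tendsto (fun t => cp a b (t + k)) Filter.atTop (nhds b) := by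
  have h := (tendsto_cp_add b a (-k)).comp Filter.tendsto_neg_atTop_atBot
  refine h.congr fun t => ?_
  simp only [Function.comp]
  rw [← cp_neg]
  congr 1
  ring

/-- A chord joining two extreme points is mapped to a chord joining two extreme points: otherwise a
neighbouring chord stays at bounded distance from the image, which is impossible before applying the
isometry. -/
lemma Iso.both_ext {K K' : Set (Euc 2)} {τ σ : Euc 2 → Euc 2} (I : Iso K K' τ σ) (D : Body K)
    (D' : Body K') {e f e' f' : Euc 2} {k : ℝ} (c : Chord K e f)
    (he : e ∈ Set.extremePoints ℝ K) (hf : f ∈ Set.extremePoints ℝ K)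
    (c' : Chord K' e' f') (h : ∀ t, τ (cp e f t) = cp e' f' (t + k))
    (he' : e' ∈ Set.extremePoints ℝ K') : f' ∈ Set.extremePoints ℝ K' := by
  by_contra hf'
  obtain ⟨w, hw, hp, hm⟩ := D'.exists_edge c'.lb hf'
  obtain ⟨l2, n2⟩ := D'.edge_mem c'.nb hp hm (r := 1 / 2) (by rw [abs_of_pos] <;> norm_num)
  have c2 : Chord K' e' (f' + (1 / 2 : ℝ) • w) := by
    refine D'.chord_of_weights (x := (1 / 2 : ℝ) • (e' + (f' + (1 / 2 : ℝ) • w)))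
      (p := 1) (q := 1) c'.la c'.na l2 n2 ?_ one_pos one_pos ?_
    · refine D'.mem_int (p := 3) (q := 1) (c'.mem (Real.log (1 / 2))) hp three_pos zero_le_one ?_
      rw [cp, Real.exp_log (by norm_num)]
      module
    · module
  obtain ⟨g, j, k2, c3, h3⟩ := I.symm.line D' D c2 he'
  have hb : ∀ u, hilbertDist (interior K) (cp e f (u + -k)) (cp g j (u + k2)) ≤
      Real.log ((1 + 1 / 1) * (1 + 1 / 1)) := by
    intro u
    rw [← h3, ← sub_eq_add_neg, ← I.line_inv c h, I.symm.dt _ (c'.mem u) _ (c2.mem u)]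
    apply D'.hdist_pencil_le c' c2 one_pos one_pos
    · have := (D'.edge_mem c'.nb hp hm (r := -(1 / 2)) (by rw [abs_neg, abs_of_pos] <;> norm_num)).1
      convert this using 1
      module
    · convert hp using 1
      module
  have hge : g = e := D.limit_eq he (tendsto_cp_add e f (-k)) (tendsto_cp_add g j k2)
    (fun t => c.mem _) (fun t => c3.mem _) (Filter.Eventually.of_forall hb)
  have hjf : j = f := D.limit_eq hf (tendsto_cp_top e f (-k)) (tendsto_cp_top g j k2)
    (fun t => c.mem _) (fun t => c3.mem _) (Filter.Eventually.of_forall hb)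
  subst hge hjf
  have h4 := h3 0
  have h5 := congrArg τ h4
  rw [I.rl _ (c2.mem 0), h] at h5
  have := D'.chord_right_unique c2 c' h5
  rw [add_eq_left, smul_eq_zero] at this
  exact hw (this.resolve_left (by norm_num))

lemma Iso.image_both_ext {K K' : Set (Euc 2)} {τ σ : Euc 2 → Euc 2} (I : Iso K K' τ σ)
    (D : Body K) (D' : Body K') {e f e' f' : Euc 2} {k : ℝ} (c : Chord K e f)
    (he : e ∈ Set.extremePoints ℝ K) (hf : f ∈ Set.extremePoints ℝ K)
    (c' : Chord K' e' f') (h : ∀ t, τ (cp e f t) = cp e' f' (t + k)) :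
    e' ∈ Set.extremePoints ℝ K' ∧ f' ∈ Set.extremePoints ℝ K' := by
  rcases I.image_ext D D' c he c' h with h1 | h1
  · exact ⟨h1, I.both_ext D D' c he hf c' h h1⟩
  · exact ⟨I.both_ext D D' c.symm hf he c'.symm (Iso.line_swap h) h1, h1⟩

/-- The pencil of chords issuing from an extreme point `e`, joined by a chord to another extreme
point, is mapped to the pencil of chords issuing from an extreme point `e'`. -/
lemma Iso.pencil {K K' : Set (Euc 2)} {τ σ : Euc 2 → Euc 2} (I : Iso K K' τ σ)
    (D : Body K) (D' : Body K') {e f : Euc 2} (c : Chord K e f)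
    (he : e ∈ Set.extremePoints ℝ K) (hf : f ∈ Set.extremePoints ℝ K) :
    ∃ e' ∈ Set.extremePoints ℝ K', ∀ b, Chord K e b → ∃ b' k, Chord K' e' b' ∧
      ∀ t, τ (cp e b t) = cp e' b' (t + k) := by
  obtain ⟨e', f', k, c', h⟩ := I.line D D' c he
  obtain ⟨he', -⟩ := I.image_both_ext D D' c he hf c' h
  refine ⟨e', he', fun b cb => ?_⟩
  obtain ⟨a1, b1, k1, c1, h1⟩ := I.line D D' cb he
  obtain ⟨C, hC⟩ := D.hdist_asymp c cb
  have : a1 = e' := by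
    refine D'.limit_eq (C := C) he' (tendsto_cp_add e' f' k) (tendsto_cp_add a1 b1 k1)
      (fun t => c'.mem _) (fun t => c1.mem _) ?_
    filter_upwards [Filter.eventually_le_atBot 0] with u hu
    rw [← h, ← h1, I.dt _ (c.mem u) _ (cb.mem u)]
    exact hC u hu
  subst this
  exact ⟨b1, k1, c1, h1⟩

/-! ### Homogeneous coordinates -/

/-- The homogeneous coordinate vector `(x₀, x₁, 1)` of a point of the plane. -/
def hat (x : Euc 2) : Fin 3 → ℝ := Fin.snoc (fun i => x i) 1

/-- The linear map sending a homogeneous coordinate vector to its first two coordinates. It is a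
left inverse of `hat`. -/
def unhat : (Fin 3 → ℝ) →ₗ[ℝ] Euc 2 where
  toFun v := !₂[v 0, v 1]
  map_add' v w := by ext i; fin_cases i <;> simp
  map_smul' c v := by ext i; fin_cases i <;> simp

/-- The last homogeneous coordinate. -/
def ht : (Fin 3 → ℝ) →ₗ[ℝ] ℝ := LinearMap.proj 2

@[simp] lemma unhat_hat (x : Euc 2) : unhat (hat x) = x := by
  ext i; fin_cases i <;> rfl

@[simp] lemma ht_hat (x : Euc 2) : ht (hat x) = 1 := rfl

lemma eq_of_unhat_ht {v w : Fin 3 → ℝ} (h1 : unhat v = unhat w) (h2 : ht v = ht w) : v = w := by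
  ext i
  fin_cases i
  · exact congrArg (fun x : Euc 2 => x 0) h1
  · exact congrArg (fun x : Euc 2 => x 1) h1
  · exact h2

lemma hat_ne (x : Euc 2) : hat x ≠ 0 := by
  intro h
  have := congrArg ht h
  simp at this

lemma chart_eq (x : Euc 2) : chart x = Projectivization.mk ℝ (hat x) (hat_ne x) := rfl

lemma projMap_chart (g : (Fin 3 → ℝ) ≃ₗ[ℝ] (Fin 3 → ℝ)) (x y : Euc 2) :
    chart y = projMap (n := 2) g (chart x) ↔ ∃ s : ℝ, s • g (hat x) = hat y := by
  rw [chart_eq, chart_eq, projMap, Projectivization.map_mk, Projectivization.mk_eq_mk_iff']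
  rfl

lemma hat_cp (a b : Euc 2) (u : ℝ) :
    (1 + Real.exp u) • hat (cp a b u) = hat a + Real.exp u • hat b := by
  apply eq_of_unhat_ht
  · simpa using cp_smul a b u
  · simp

lemma eq_cp_of_hat {a b x : Euc 2} {p q r : ℝ} (hp : 0 < p) (hq : 0 < q)
    (h : r • hat x = p • hat a + q • hat b) : x = cp a b (Real.log (q / p)) := by
  have h1 := congrArg unhat h
  have h2 := congrArg ht h
  simp at h1 h2
  subst h2
  exact eq_cp_of hp hq h1

lemma ext_hat_zero {K : Set (Euc 2)} {e x y : Euc 2} {p q r : ℝ}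
    (he : e ∈ Set.extremePoints ℝ K) (hx : x ∈ K) (hy : y ∈ K) (hxe : x ≠ e) (hye : y ≠ e)
    (hp : 0 ≤ p) (hq : 0 ≤ q) (h : r • hat e = p • hat x + q • hat y) : p = 0 ∧ q = 0 := by
  have h1 := congrArg unhat h
  have h2 := congrArg ht h
  simp at h1 h2
  subst h2
  rcases hp.eq_or_lt with rfl | hp
  · rcases hq.eq_or_lt with rfl | hq
    · simp
    · simp [hq.ne'] at h1
      exact absurd h1.symm hye
  · rcases hq.eq_or_lt with rfl | hq
    · simp [hp.ne'] at h1
      exact absurd h1.symm hxe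
    · exact absurd (ext_eq he hx hy hp hq h1).1 hxe

lemma indep_iff {a b c : Fin 3 → ℝ} : LinearIndependent ℝ ![a, b, c] ↔
    ∀ p q r : ℝ, p • a + q • b + r • c = 0 → p = 0 ∧ q = 0 ∧ r = 0 := by
  rw [Fintype.linearIndependent_iff]
  constructor
  · intro h p q r hpqr
    have := h ![p, q, r] (by simpa [Fin.sum_univ_three] using hpqr)
    exact ⟨this 0, this 1, this 2⟩
  · intro h g hg
    simp only [Fin.sum_univ_three, Matrix.cons_val] at hg
    obtain ⟨h0, h1, h2⟩ := h _ _ _ hg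
    intro i
    fin_cases i <;> assumption

lemma exists_comb {a b c : Fin 3 → ℝ} (h : LinearIndependent ℝ ![a, b, c]) (v : Fin 3 → ℝ) :
    ∃ p q r : ℝ, v = p • a + q • b + r • c := by
  let B := basisOfLinearIndependentOfCardEqFinrank h (by simp)
  refine ⟨B.repr v 0, B.repr v 1, B.repr v 2, ?_⟩
  have := B.sum_repr v
  simp only [Fin.sum_univ_three] at this
  simpa [B] using this.symm

lemma exists_equiv {a b c a' b' c' : Fin 3 → ℝ} (h : LinearIndependent ℝ ![a, b, c])
    (h' : LinearIndependent ℝ ![a', b', c']) :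
    ∃ g : (Fin 3 → ℝ) ≃ₗ[ℝ] (Fin 3 → ℝ), g a = a' ∧ g b = b' ∧ g c = c' := by
  let B := basisOfLinearIndependentOfCardEqFinrank h (by simp)
  let B' := basisOfLinearIndependentOfCardEqFinrank h' (by simp)
  let g := B.equiv B' (Equiv.refl _)
  have hg : ∀ i, g (B i) = B' i := fun i => by simp [g]
  refine ⟨g, ?_, ?_, ?_⟩
  · simpa [B, B'] using hg 0
  · simpa [B, B'] using hg 1
  · simpa [B, B'] using hg 2

/-- Three distinct extreme points are not collinear. -/
lemma ext_indep {K : Set (Euc 2)} {e1 e2 e3 : Euc 2}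
    (h1 : e1 ∈ Set.extremePoints ℝ K) (h2 : e2 ∈ Set.extremePoints ℝ K)
    (h3 : e3 ∈ Set.extremePoints ℝ K) (h12 : e1 ≠ e2) (h13 : e1 ≠ e3) (h23 : e2 ≠ e3) :
    LinearIndependent ℝ ![hat e1, hat e2, hat e3] := by
  have m1 := h1.1
  have m2 := h2.1
  have m3 := h3.1
  rw [indep_iff]
  intro p q r hg
  have hs := congrArg ht hg
  simp at hs
  rcases le_total 0 p with hp | hp <;> rcases le_total 0 q with hq | hq <;>
    rcases le_total 0 r with hr | hr
  · refine ⟨?_, ?_, ?_⟩ <;> linarith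
  · obtain ⟨a, b⟩ := ext_hat_zero (r := -r) h3 m1 m2 h13 h23 hp hq (by
      linear_combination (norm := module) -hg)
    refine ⟨?_, ?_, ?_⟩ <;> linarith
  · obtain ⟨a, b⟩ := ext_hat_zero (r := -q) h2 m1 m3 h12 h23.symm hp hr (by
      linear_combination (norm := module) -hg)
    refine ⟨?_, ?_, ?_⟩ <;> linarith
  · obtain ⟨a, b⟩ := ext_hat_zero (r := p) h1 m2 m3 h12.symm h13.symm (neg_nonneg.mpr hq)
      (neg_nonneg.mpr hr) (by linear_combination (norm := module) hg)
    refine ⟨?_, ?_, ?_⟩ <;> linarith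
  · obtain ⟨a, b⟩ := ext_hat_zero (r := -p) h1 m2 m3 h12.symm h13.symm hq hr (by
      linear_combination (norm := module) -hg)
    refine ⟨?_, ?_, ?_⟩ <;> linarith
  · obtain ⟨a, b⟩ := ext_hat_zero (r := q) h2 m1 m3 h12 h23.symm (neg_nonneg.mpr hp)
      (neg_nonneg.mpr hr) (by linear_combination (norm := module) hg)
    refine ⟨?_, ?_, ?_⟩ <;> linarith
  · obtain ⟨a, b⟩ := ext_hat_zero (r := r) h3 m1 m2 h13 h23 (neg_nonneg.mpr hp)
      (neg_nonneg.mpr hq) (by linear_combination (norm := module) hg)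
    refine ⟨?_, ?_, ?_⟩ <;> linarith
  · refine ⟨?_, ?_, ?_⟩ <;> linarith

/-! ### Quadrilaterals of extreme points -/

/-- An extreme point is not a strict convex combination of three points, one of which differs
from it. -/
lemma Body.ext_not_tri {K : Set (Euc 2)} (D : Body K) {e x y z : Euc 2} {p q r s : ℝ}
    (he : e ∈ Set.extremePoints ℝ K) (hx : x ∈ K) (hy : y ∈ K) (hz : z ∈ K) (hp : 0 < p)
    (hq : 0 < q) (hr : 0 < r) (h : s • hat e = p • hat x + q • hat y + r • hat z) : x = e := by
  have h1 := congrArg unhat h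
  have h2 := congrArg ht h
  simp at h1 h2
  subst h2
  have hw : (q / (q + r)) • y + (r / (q + r)) • z ∈ K :=
    D.convex hy hz (by positivity) (by positivity) (by field_simp)
  refine (ext_eq he hx hw hp (q := q + r) (by positivity) ?_).1
  rw [← add_assoc, h1, smul_add, smul_smul, smul_smul, mul_div_cancel₀ _ (by positivity),
    mul_div_cancel₀ _ (by positivity), add_assoc]

/-- Four extreme points in convex position, with diagonals `e1 e3` and `e2 e4`; the weights `l`
describe the intersection point of the diagonals. -/
structure Quad (K : Set (Euc 2)) (e1 e2 e3 e4 : Euc 2) (l1 l2 l3 l4 : ℝ) : Prop where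
  h1 : e1 ∈ Set.extremePoints ℝ K
  h2 : e2 ∈ Set.extremePoints ℝ K
  h3 : e3 ∈ Set.extremePoints ℝ K
  h4 : e4 ∈ Set.extremePoints ℝ K
  p1 : 0 < l1
  p2 : 0 < l2
  p3 : 0 < l3
  p4 : 0 < l4
  indep : LinearIndependent ℝ ![hat e1, hat e2, hat e3]
  rel : l1 • hat e1 + l3 • hat e3 = l2 • hat e2 + l4 • hat e4

lemma Body.exists_quad {K : Set (Euc 2)} (D : Body K) {e1 e2 e3 e4 : Euc 2}
    (h1 : e1 ∈ Set.extremePoints ℝ K) (h2 : e2 ∈ Set.extremePoints ℝ K)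
    (h3 : e3 ∈ Set.extremePoints ℝ K) (h4 : e4 ∈ Set.extremePoints ℝ K)
    (h12 : e1 ≠ e2) (h13 : e1 ≠ e3) (h23 : e2 ≠ e3) (h14 : e1 ≠ e4) (h24 : e2 ≠ e4)
    (h34 : e3 ≠ e4) : ∃ a b c d l1 l2 l3 l4, Quad K a b c d l1 l2 l3 l4 := by
  have i123 := ext_indep h1 h2 h3 h12 h13 h23
  obtain ⟨p, q, r, h⟩ := exists_comb i123 (hat e4)
  have hs := congrArg ht h
  simp at hs
  have hp : p ≠ 0 := by
    intro hp
    have := indep_iff.mp (ext_indep h2 h3 h4 h23 h24 h34) q r (-1) (by rw [h, hp]; module)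
    norm_num at this
  have hq : q ≠ 0 := by
    intro hq
    have := indep_iff.mp (ext_indep h1 h3 h4 h13 h14 h34) p r (-1) (by rw [h, hq]; module)
    norm_num at this
  have hr : r ≠ 0 := by
    intro hr
    have := indep_iff.mp (ext_indep h1 h2 h4 h12 h14 h24) p q (-1) (by rw [h, hr]; module)
    norm_num at this
  rcases hp.lt_or_gt with hp | hp <;> rcases hq.lt_or_gt with hq | hq <;>
    rcases hr.lt_or_gt with hr | hr
  · linarith
  · exact absurd (D.ext_not_tri (s := r) h3 h4.1 h1.1 h2.1 one_pos (neg_pos.mpr hp)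
      (neg_pos.mpr hq) (by rw [h]; module)) h34.symm
  · exact absurd (D.ext_not_tri (s := q) h2 h4.1 h1.1 h3.1 one_pos (neg_pos.mpr hp)
      (neg_pos.mpr hr) (by rw [h]; module)) h24.symm
  · exact ⟨e2, e1, e3, e4, q, -p, r, 1, h2, h1, h3, h4, hq, neg_pos.mpr hp, hr, one_pos,
      ext_indep h2 h1 h3 h12.symm h23 h13, by rw [h]; module⟩
  · exact absurd (D.ext_not_tri (s := p) h1 h4.1 h2.1 h3.1 one_pos (neg_pos.mpr hq)
      (neg_pos.mpr hr) (by rw [h]; module)) h14.symm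
  · exact ⟨e1, e2, e3, e4, p, -q, r, 1, h1, h2, h3, h4, hp, neg_pos.mpr hq, hr, one_pos,
      i123, by rw [h]; module⟩
  · exact ⟨e1, e3, e2, e4, p, -r, q, 1, h1, h3, h2, h4, hp, neg_pos.mpr hr, hq, one_pos,
      ext_indep h1 h3 h2 h13 h12 h23.symm, by rw [h]; module⟩
  · exact absurd (D.ext_not_tri h4 h1.1 h2.1 h3.1 hp hq hr ((one_smul ℝ _).trans h)) h14

/-- Either there is a quadrilateral of extreme points, or the body is a triangle. -/
lemma Body.dichotomy {K : Set (Euc 2)} (D : Body K) :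
    (∃ a b c d l1 l2 l3 l4, Quad K a b c d l1 l2 l3 l4) ∨
    ∃ e1 e2 e3, LinearIndependent ℝ ![hat e1, hat e2, hat e3] ∧
      K = convexHull ℝ {e1, e2, e3} := by
  have hKM := closure_convexHull_extremePoints D.compact D.convex
  have key : ∀ s : Set (Euc 2), s.Finite → Set.extremePoints ℝ K ⊆ s → K ⊆ convexHull ℝ s := by
    intro s hs hsub
    rw [← hKM]
    exact closure_minimal (convexHull_mono hsub) (hs.isClosed_convexHull ℝ)
  have two : ∀ a b, ¬ Set.extremePoints ℝ K ⊆ {a, b} := by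
    intro a b hsub
    have h1 := key {a, b} (Set.toFinite _) hsub
    have h2 := D.nonempty.mono (interior_mono h1)
    rw [interior_convexHull_nonempty_iff_affineSpan_eq_top] at h2
    have h3 := (collinear_iff_finrank_le_one (k := ℝ)).mp (collinear_pair ℝ a b)
    rw [← direction_affineSpan, h2, AffineSubspace.direction_top, finrank_top] at h3
    simp at h3
  obtain ⟨e1, h1, -⟩ := Set.not_subset.mp (two 0 0)
  obtain ⟨e2, h2, n2⟩ := Set.not_subset.mp (two e1 e1)
  obtain ⟨e3, h3, n3⟩ := Set.not_subset.mp (two e1 e2)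
  simp only [Set.mem_insert_iff, Set.mem_singleton_iff, not_or] at n2 n3
  by_cases h : Set.extremePoints ℝ K ⊆ {e1, e2, e3}
  · right
    refine ⟨e1, e2, e3, ext_indep h1 h2 h3 (Ne.symm n2.1) (Ne.symm n3.1) (Ne.symm n3.2),
      (key _ (Set.toFinite _) h).antisymm ?_⟩
    apply convexHull_min _ D.convex
    rintro x (rfl | rfl | rfl)
    exacts [h1.1, h2.1, h3.1]
  · left
    obtain ⟨e4, h4, n4⟩ := Set.not_subset.mp h
    simp only [Set.mem_insert_iff, Set.mem_singleton_iff, not_or] at n4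
    exact D.exists_quad h1 h2 h3 h4 (Ne.symm n2.1) (Ne.symm n3.1) (Ne.symm n3.2)
      (Ne.symm n4.1) (Ne.symm n4.2.1) (Ne.symm n4.2.2)

/-- An affine combination, of total weight one, of points on a level line of a functional lies on
that line. -/
lemma level_of_comb {e1 e2 e3 y : Euc 2} {p q r t : ℝ} (f : Euc 2 →L[ℝ] ℝ)
    (h : hat y = p • hat e1 + q • hat e2 + r • hat e3) (f1 : f e1 = t) (f2 : f e2 = t)
    (f3 : f e3 = t) : f y = t := by
  have h1 := congrArg (fun v => f (unhat v)) h
  have h2 := congrArg ht h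
  simp [f1, f2, f3] at h1 h2
  rw [h1]
  linear_combination -t * h2

/-- The intersection point of the diagonals is interior, so the diagonals are chords. -/
lemma Quad.chords {K : Set (Euc 2)} (D : Body K) {e1 e2 e3 e4 : Euc 2} {l1 l2 l3 l4 : ℝ}
    (Q : Quad K e1 e2 e3 e4 l1 l2 l3 l4) : Chord K e1 e3 ∧ Chord K e2 e4 := by
  obtain ⟨h1, h2, h3, h4, p1, p2, p3, p4, hi, rel⟩ := Q
  have r1 := congrArg unhat rel
  have r2 := congrArg ht rel
  simp at r1 r2
  set m : Euc 2 := (l1 + l3)⁻¹ • (l1 • e1 + l3 • e3) with hm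
  have m1 : (l1 + l3) • m = l1 • e1 + l3 • e3 := by
    rw [hm, smul_smul, mul_inv_cancel₀ (by positivity), one_smul]
  have m2 : (l2 + l4) • m = l2 • e2 + l4 • e4 := by rw [← r2, m1, r1]
  have hm_int : m ∈ interior K := by
    by_contra hn
    obtain ⟨f, hf, hf'⟩ := D.exists_support hn
    have a1 := congrArg f m1
    have a2 := congrArg f m2
    simp at a1 a2
    have b1 := hf' _ h1.1
    have b2 := hf' _ h2.1
    have b3 := hf' _ h3.1
    have b4 := hf' _ h4.1
    have c1 : f e1 = f m := by nlinarith
    have c2 : f e2 = f m := by nlinarith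
    have c3 : f e3 = f m := by nlinarith
    obtain ⟨y, hy⟩ := D.nonempty
    obtain ⟨p, q, r, h⟩ := exists_comb hi (hat y)
    exact (hf y hy).ne (level_of_comb f h c1 c2 c3)
  exact ⟨D.chord_of_weights h1.1 (D.ext_not_int h1) h3.1 (D.ext_not_int h3) hm_int p1 p3 m1,
    D.chord_of_weights h2.1 (D.ext_not_int h2) h4.1 (D.ext_not_int h4) hm_int p2 p4 m2⟩

/-! ### Isometries are projective in the presence of a quadrilateral -/

/-- `τ` maps the pencil of chords of `K` issuing from `e` into the pencil of chords of `K'` issuing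
from `e'`, each chord by a translation of the exponential parameter. -/
def MapsPencil (K K' : Set (Euc 2)) (τ : Euc 2 → Euc 2) (e e' : Euc 2) : Prop :=
  ∀ b, Chord K e b → ∃ b' k, Chord K' e' b' ∧ ∀ t, τ (cp e b t) = cp e' b' (t + k)

lemma Iso.pair {K K' : Set (Euc 2)} {τ σ : Euc 2 → Euc 2} (I : Iso K K' τ σ)
    (D : Body K) (D' : Body K') {e f : Euc 2} (c : Chord K e f)
    (he : e ∈ Set.extremePoints ℝ K) (hf : f ∈ Set.extremePoints ℝ K) :
    ∃ e' f' k, e' ∈ Set.extremePoints ℝ K' ∧ f' ∈ Set.extremePoints ℝ K' ∧ Chord K' e' f' ∧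
      (∀ t, τ (cp e f t) = cp e' f' (t + k)) ∧ MapsPencil K K' τ e e' ∧
      MapsPencil K K' τ f f' := by
  obtain ⟨e', he', P⟩ := I.pencil D D' c he hf
  obtain ⟨f', hf', Q⟩ := I.pencil D D' c.symm hf he
  obtain ⟨b, k, c1, h1⟩ := P f c
  obtain ⟨b2, k2, c2, h2⟩ := Q e c.symm
  have h3 := Iso.line_swap h1
  obtain ⟨rfl, -⟩ := D'.chord_unique c2 c1.symm (u := 0 + k2) (v := 1 + k2) (u' := 0 + -k)
    (v' := 1 + -k) (by linarith) (by linarith) (by rw [← h2, ← h3]) (by rw [← h2, ← h3])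
  exact ⟨e', f', k, he', hf', c1, h1, P, Q⟩

lemma Iso.pencil_inj {K K' : Set (Euc 2)} {τ σ : Euc 2 → Euc 2} (I : Iso K K' τ σ)
    (D : Body K) (D' : Body K') {e1 e2 e' : Euc 2} (P1 : MapsPencil K K' τ e1 e')
    (P2 : MapsPencil K K' τ e2 e') (l1 : e1 ∈ K) (n1 : e1 ∉ interior K) (l2 : e2 ∈ K)
    (n2 : e2 ∉ interior K) : e1 = e2 := by
  obtain ⟨x, hx⟩ := D.nonempty
  obtain ⟨b1, u, c1, hu⟩ := D.exists_chord_from l1 n1 hx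
  obtain ⟨b2, v, c2, hv⟩ := D.exists_chord_from l2 n2 hx
  obtain ⟨b1', k1, c1', h1⟩ := P1 b1 c1
  obtain ⟨b2', k2, c2', h2⟩ := P2 b2 c2
  have hb : b1' = b2' := by
    apply D'.chord_right_unique c1' c2' (u := u + k1) (u' := v + k2)
    rw [← h1, ← h2, ← hu, ← hv]
  subst hb
  have i1 := I.line_inv c1 h1
  have i2 := I.line_inv c2 h2
  exact (D.chord_unique c1 c2 (u := 0 - k1) (v := 1 - k1) (u' := 0 - k2) (v' := 1 - k2)
    (by linarith) (by linarith) (by rw [← i1, ← i2]) (by rw [← i1, ← i2])).1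

/-- Collinearity with the centre of a pencil is preserved: if `y` lies on the chord from `e`
through `x`, between `e` and `x`, then `τ x` lies on the line through `e'` and `τ y`. -/
lemma MapsPencil.comb {K K' : Set (Euc 2)} {τ : Euc 2 → Euc 2} (D : Body K) {e e' x y : Euc 2}
    (P : MapsPencil K K' τ e e') (le : e ∈ K) (ne : e ∉ interior K) (hx : x ∈ interior K)
    {r s : ℝ} (hs : 0 ≤ s) (h : r • hat y = hat x + s • hat e) :
    ∃ α β : ℝ, hat (τ x) = α • hat e' + β • hat (τ y) := by
  obtain ⟨b, u, c, rfl⟩ := D.exists_chord_from le ne hx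
  obtain ⟨b', k, -, hτ⟩ := P b c
  have hu := Real.exp_pos u
  have hy := eq_cp_of_hat (a := e) (b := b) (x := y) (p := 1 + s * (1 + Real.exp u))
    (q := Real.exp u) (r := r * (1 + Real.exp u)) (by positivity) hu (by
      rw [mul_comm r, mul_smul, h, smul_add, hat_cp]
      module)
  generalize Real.log (Real.exp u / (1 + s * (1 + Real.exp u))) = v at hy
  rw [hy, hτ, hτ]
  have h1 := hat_cp e' b' (u + k)
  have h2 := hat_cp e' b' (v + k)
  have hU := Real.exp_pos (u + k)
  have hV := Real.exp_pos (v + k)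
  generalize Real.exp (u + k) = U at *
  generalize Real.exp (v + k) = V at *
  have h3 : hat b' = V⁻¹ • ((1 + V) • hat (cp e' b' (v + k)) - hat e') := by
    rw [h2, add_sub_cancel_left, smul_smul, inv_mul_cancel₀ hV.ne', one_smul]
  refine ⟨(1 + U)⁻¹ * (1 - U * V⁻¹), (1 + U)⁻¹ * (U * V⁻¹ * (1 + V)), ?_⟩
  have h4 : hat (cp e' b' (u + k)) = (1 + U)⁻¹ • (hat e' + U • hat b') := by
    rw [← h1, smul_smul, inv_mul_cancel₀ (by positivity), one_smul]
  rw [h4, h3]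
  module

lemma diagonal_image {τ : Euc 2 → Euc 2} {f h f' h' y : Euc 2} {k p q r : ℝ}
    (hτ : ∀ t, τ (cp f h t) = cp f' h' (t + k)) (hp : 0 < p) (hq : 0 < q)
    (hy : r • hat y = p • hat f + q • hat h) :
    ∃ s : ℝ, hat (τ y) = s • (p • hat f' + (q * Real.exp k) • hat h') := by
  rw [eq_cp_of_hat hp hq hy, hτ]
  have h1 := hat_cp f' h' (Real.log (q / p) + k)
  rw [Real.exp_add, Real.exp_log (by positivity)] at h1
  have hk := Real.exp_pos k
  refine ⟨(1 + q / p * Real.exp k)⁻¹ * p⁻¹, ?_⟩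
  have h2 : p • hat f' + (q * Real.exp k) • hat h' =
      p • (hat f' + (q / p * Real.exp k) • hat h') := by
    match_scalars <;> field_simp
  rw [h2, ← h1, smul_smul, smul_smul]
  rw [show (1 + q / p * Real.exp k)⁻¹ * p⁻¹ * p * (1 + q / p * Real.exp k) = 1 by field_simp,
    one_smul]

/-- The image of `x` is projectively constrained to the line through `e'` and the image of the
point where the segment `f h` meets the chord from `e` through `x`. -/
lemma MapsPencil.constraint {K K' : Set (Euc 2)} {τ : Euc 2 → Euc 2} (D : Body K)
    {e e' f h f' h' x : Euc 2} (P : MapsPencil K K' τ e e') (le : e ∈ K) (ne : e ∉ interior K)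
    (hx : x ∈ interior K) {k a b l m le' l' m' s N : ℝ}
    (hτ : ∀ t, τ (cp f h t) = cp f' h' (t + k)) (ha : 0 < a) (hb : 0 < b) (hl : 0 < l)
    (hm : 0 < m) (hle' : le' ≠ 0) (hs : 0 ≤ s)
    (hN : l = N * l') (hN' : m * Real.exp k = N * m')
    (hxe : hat x + s • hat e = a • (l • hat f) + b • (m • hat h)) :
    ∃ α β : ℝ, hat (τ x) = α • (le' • hat e') + β • (a • (l' • hat f') + b • (m' • hat h')) := by
  have h2 := congrArg ht hxe
  simp at h2
  have hpos : 0 < 1 + s := by positivity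
  set y : Euc 2 := (1 + s)⁻¹ • (x + s • e) with hy
  have hye : (1 + s) • hat y = hat x + s • hat e := by
    apply eq_of_unhat_ht
    · simp only [map_smul, map_add, unhat_hat]
      rw [hy, smul_smul, mul_inv_cancel₀ hpos.ne', one_smul]
    · simp
  obtain ⟨α, β, h3⟩ := P.comb D le ne hx hs hye
  obtain ⟨t, h4⟩ := diagonal_image hτ (p := a * l) (q := b * m) (by positivity) (by positivity)
    (by rw [hye, hxe, smul_smul, smul_smul])
  refine ⟨α * le'⁻¹, β * t * N, ?_⟩
  rw [h3, h4, mul_assoc b, hN', hN]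
  match_scalars <;> field_simp

/-- A boundary point `e` is not a convex combination of `x`, `f`, `h` giving positive weight to the
interior point `x`. -/
lemma Body.cone_bound {K : Set (Euc 2)} (D : Body K) {e f h x : Euc 2} (hx : x ∈ interior K)
    (hf : f ∈ K) (hh : h ∈ K) (ne : e ∉ interior K) {r p q : ℝ} (hp : 0 ≤ p) (hq : 0 ≤ q)
    (hr : r • hat e = hat x + p • hat f + q • hat h) : False := by
  have h1 := congrArg unhat hr
  have h2 := congrArg ht hr
  simp at h1 h2
  subst h2
  have hpos : 0 < 1 + p := by positivity
  have hw : (1 + p)⁻¹ • (x + p • f) ∈ interior K := by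
    refine D.mem_int (p := 1) (q := p) hx hf one_pos hp ?_
    rw [smul_smul, mul_inv_cancel₀ hpos.ne', one_smul, one_smul]
  refine ne (D.mem_int (p := 1 + p) (q := q) hw hh hpos hq ?_)
  rw [smul_smul, mul_inv_cancel₀ hpos.ne', one_smul, h1]

lemma frame_indep {v1 v2 v3 v4 : Fin 3 → ℝ} {l1 l2 l3 l4 : ℝ}
    (h : LinearIndependent ℝ ![v1, v2, v3]) (h1 : l1 ≠ 0) (h2 : l2 ≠ 0) (h3 : l3 ≠ 0)
    (rel : l1 • v1 + l3 • v3 = l2 • v2 + l4 • v4) :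
    LinearIndependent ℝ ![(1 / 2 : ℝ) • (l1 • v1 - l3 • v3), (1 / 2 : ℝ) • (l2 • v2 - l4 • v4),
      (1 / 2 : ℝ) • (l1 • v1 + l3 • v3)] := by
  rw [indep_iff] at h ⊢
  intro p q r hpqr
  have h4 : l4 • v4 = l1 • v1 + l3 • v3 - l2 • v2 := by rw [rel]; abel
  rw [h4] at hpqr
  obtain ⟨a, b, c⟩ := h ((p - q + r) / 2 * l1) (q * l2) ((-p - q + r) / 2 * l3) (by
    rw [← hpqr]; module)
  simp only [mul_eq_zero, h1, h2, h3, or_false] at a b c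
  refine ⟨?_, b, ?_⟩ <;> linarith

/-- Two independent incidence equations determine a point projectively. -/
lemma proportional {X Y W X' Y' W' : ℝ} (h1 : 0 < W + X) (h2 : 0 < W + X + Y)
    (e1 : Y' * (W + X) = Y * (W' + X')) (e2 : X' * (W + Y) = X * (W' + Y')) :
    ∃ s : ℝ, X' = s * X ∧ Y' = s * Y ∧ W' = s * W := by
  obtain ⟨s, hs⟩ : ∃ s : ℝ, W' + X' = s * (W + X) :=
    ⟨(W' + X') / (W + X), by field_simp⟩
  have hY : Y' = s * Y := by
    apply mul_right_cancel₀ h1.ne'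
    rw [e1, hs]
    ring
  have hX : X' = s * X := by
    apply mul_right_cancel₀ h2.ne'
    have : W' = s * (W + X) - X' := by linarith
    rw [this, hY] at e2
    linear_combination e2
  exact ⟨s, hX, hY, by rw [hX] at hs; linarith⟩

/-- Projective determination of a point from its incidences with the pencils of four points in
convex position, in the coordinates where these are `(±1, 0, 1)` and `(0, ±1, 1)`. -/
lemma proportional_of_bounds {X Y W X' Y' W' : ℝ} (b2 : Y < W + |X|) (b4 : -Y < W + |X|)
    (e1 : X ≤ 0 → Y' * (W - X) = Y * (W' - X')) (e3 : 0 ≤ X → Y' * (W + X) = Y * (W' + X'))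
    (e2 : Y ≤ 0 → X' * (W - Y) = X * (W' - Y')) (e4 : 0 ≤ Y → X' * (W + Y) = X * (W' + Y')) :
    ∃ s : ℝ, X' = s * X ∧ Y' = s * Y ∧ W' = s * W := by
  rcases le_total 0 X with hX | hX <;> rcases le_total 0 Y with hY | hY
  · rw [abs_of_nonneg hX] at b2 b4
    exact proportional (by linarith) (by linarith) (e3 hX) (e4 hY)
  · rw [abs_of_nonneg hX] at b2 b4
    obtain ⟨s, h1, h2, h3⟩ := proportional (X := X) (Y := -Y) (W := W) (X' := X') (Y' := -Y')
      (W' := W') (by linarith) (by linarith) (by linarith [e3 hX]) (by linarith [e2 hY])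
    exact ⟨s, h1, by linarith, h3⟩
  · rw [abs_of_nonpos hX] at b2 b4
    obtain ⟨s, h1, h2, h3⟩ := proportional (X := -X) (Y := Y) (W := W) (X' := -X') (Y' := Y')
      (W' := W') (by linarith) (by linarith) (by linarith [e1 hX]) (by linarith [e4 hY])
    exact ⟨s, by linarith, h2, h3⟩
  · rw [abs_of_nonpos hX] at b2 b4
    obtain ⟨s, h1, h2, h3⟩ := proportional (X := -X) (Y := -Y) (W := W) (X' := -X') (Y' := -Y')
      (W' := W') (by linarith) (by linarith) (by linarith [e1 hX]) (by linarith [e2 hY])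
    exact ⟨s, by linarith, by linarith, h3⟩

lemma coord_unique {a b c : Fin 3 → ℝ} (h : LinearIndependent ℝ ![a, b, c])
    {p q r p' q' r' : ℝ} (he : p • a + q • b + r • c = p' • a + q' • b + r' • c) :
    p = p' ∧ q = q' ∧ r = r' := by
  obtain ⟨h1, h2, h3⟩ := indep_iff.mp h (p - p') (q - q') (r - r') (by
    linear_combination (norm := module) he)
  refine ⟨?_, ?_, ?_⟩ <;> linarith

/-- In the presence of a quadrilateral of extreme points an isometry is projective. In the
coordinates `(X, Y, W)` where the vertices are `(±1, 0, 1)` and `(0, ±1, 1)`, the incidence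
relations with the pencils of two suitable vertices determine the image of every point. -/
lemma Quad.projective {K K' : Set (Euc 2)} {τ σ : Euc 2 → Euc 2} (I : Iso K K' τ σ)
    (D : Body K) (D' : Body K') {e1 e2 e3 e4 : Euc 2} {l1 l2 l3 l4 : ℝ}
    (Q : Quad K e1 e2 e3 e4 l1 l2 l3 l4) :
    ∃ g : (Fin 3 → ℝ) ≃ₗ[ℝ] (Fin 3 → ℝ), ∀ x ∈ interior K, ∃ s : ℝ, s • g (hat x) = hat (τ x) := by
  obtain ⟨c13, c24⟩ := Q.chords D
  obtain ⟨h1, h2, h3, h4, p1, p2, p3, p4, hi, rel⟩ := Q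
  obtain ⟨f1, f3, k13, g1, g3, -, t13, P1, P3⟩ := I.pair D D' c13 h1 h3
  obtain ⟨f2, f4, k24, g2, g4, -, t24, P2, P4⟩ := I.pair D D' c24 h2 h4
  have ep1 := Real.exp_pos k13
  have ep2 := Real.exp_pos k24
  -- distinctness of the image vertices, from injectivity of the correspondence of pencils
  have n12 : f1 ≠ f2 := by
    rintro rfl
    have := I.pencil_inj D D' P1 P2 h1.1 (D.ext_not_int h1) h2.1 (D.ext_not_int h2)
    have := indep_iff.mp hi 1 (-1) 0 (by rw [this]; module)
    norm_num at this
  have n13 : f1 ≠ f3 := by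
    rintro rfl
    exact c13.ne (I.pencil_inj D D' P1 P3 h1.1 (D.ext_not_int h1) h3.1 (D.ext_not_int h3))
  have n23 : f2 ≠ f3 := by
    rintro rfl
    have := I.pencil_inj D D' P2 P3 h2.1 (D.ext_not_int h2) h3.1 (D.ext_not_int h3)
    have := indep_iff.mp hi 0 1 (-1) (by rw [this]; module)
    norm_num at this
  have hi' := ext_indep g1 g2 g3 n12 n13 n23
  -- the weights of the image quadrilateral, normalized so that both diagonals give the same
  -- representative of the image of their intersection point
  obtain ⟨N, hN⟩ : ∃ N, N = l1 + l3 * Real.exp k13 := ⟨_, rfl⟩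
  obtain ⟨N', hN'⟩ : ∃ N, N = l2 + l4 * Real.exp k24 := ⟨_, rfl⟩
  have hN0 : 0 < N := by rw [hN]; positivity
  have hN0' : 0 < N' := by rw [hN']; positivity
  obtain ⟨m1, hm1⟩ : ∃ m, m = l1 / N := ⟨_, rfl⟩
  obtain ⟨m3, hm3⟩ : ∃ m, m = l3 * Real.exp k13 / N := ⟨_, rfl⟩
  obtain ⟨m2, hm2⟩ : ∃ m, m = l2 / N' := ⟨_, rfl⟩
  obtain ⟨m4, hm4⟩ : ∃ m, m = l4 * Real.exp k24 / N' := ⟨_, rfl⟩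
  have q1 : 0 < m1 := by rw [hm1]; positivity
  have q2 : 0 < m2 := by rw [hm2]; positivity
  have q3 : 0 < m3 := by rw [hm3]; positivity
  have q4 : 0 < m4 := by rw [hm4]; positivity
  have s1 : l1 = N * m1 := by rw [hm1]; field_simp
  have s2 : l2 = N' * m2 := by rw [hm2]; field_simp
  have s3 : l3 * Real.exp k13 = N * m3 := by rw [hm3]; field_simp
  have s4 : l4 * Real.exp k24 = N' * m4 := by rw [hm4]; field_simp
  have rel' : m1 • hat f1 + m3 • hat f3 = m2 • hat f2 + m4 • hat f4 := by
    have hl : 0 < l1 + l3 := by positivity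
    set y : Euc 2 := (l1 + l3)⁻¹ • (l1 • e1 + l3 • e3) with hy
    have hye : (l1 + l3) • hat y = l1 • hat e1 + l3 • hat e3 := by
      apply eq_of_unhat_ht
      · simp only [map_smul, map_add, unhat_hat]
        rw [hy, smul_smul, mul_inv_cancel₀ hl.ne', one_smul]
      · simp
    obtain ⟨r, hr⟩ := diagonal_image t13 p1 p3 hye
    obtain ⟨r', hr'⟩ := diagonal_image t24 p2 p4 (hye.trans rel)
    rw [s3] at hr
    rw [s4] at hr'
    nth_rewrite 1 [s1] at hr
    nth_rewrite 1 [s2] at hr'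
    have v1 : m1 + m3 = 1 := by
      rw [hm1, hm3, ← add_div, ← hN, div_self hN0.ne']
    have v2 : m2 + m4 = 1 := by
      rw [hm2, hm4, ← add_div, ← hN', div_self hN0'.ne']
    have w1 := congrArg ht hr
    have w2 := congrArg ht hr'
    simp only [map_smul, map_add, ht_hat, smul_eq_mul, mul_one] at w1 w2
    rw [← mul_add, v1, mul_one] at w1
    rw [← mul_add, v2, mul_one] at w2
    have u1 : hat (τ y) = m1 • hat f1 + m3 • hat f3 := by
      rw [hr]
      linear_combination (norm := module) (-w1) • (m1 • hat f1 + m3 • hat f3)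
    have u2 : hat (τ y) = m2 • hat f2 + m4 • hat f4 := by
      rw [hr']
      linear_combination (norm := module) (-w2) • (m2 • hat f2 + m4 • hat f4)
    rw [← u1, u2]
  have fr := frame_indep hi p1.ne' p2.ne' p3.ne' rel
  have fr' := frame_indep hi' q1.ne' q2.ne' q3.ne' rel'
  obtain ⟨g, gP, gQ, gM⟩ := exists_equiv fr fr'
  refine ⟨g, fun x hx => ?_⟩
  obtain ⟨X, Y, W, hX⟩ := exists_comb fr (hat x)
  obtain ⟨X', Y', W', hX'⟩ := exists_comb fr' (hat (τ x))
  -- if a bound fails, one of the vertices lies in the interior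
  have b1 : X < W + |Y| := by
    by_contra hc
    refine D.cone_bound hx h2.1 h4.1 (D.ext_not_int h1) (r := X * l1) (p := (X - W - Y) / 2 * l2)
      (q := (X - W + Y) / 2 * l4) (mul_nonneg ?_ p2.le) (mul_nonneg ?_ p4.le) ?_
    · linarith [le_abs_self Y]
    · linarith [neg_abs_le Y]
    · rw [hX]
      linear_combination (norm := module) ((X - W) / 2) • rel
  have b2 : Y < W + |X| := by
    by_contra hc
    refine D.cone_bound hx h1.1 h3.1 (D.ext_not_int h2) (r := Y * l2) (p := (Y - W - X) / 2 * l1)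
      (q := (Y - W + X) / 2 * l3) (mul_nonneg ?_ p1.le) (mul_nonneg ?_ p3.le) ?_
    · linarith [le_abs_self X]
    · linarith [neg_abs_le X]
    · rw [hX]
      linear_combination (norm := module) (-Y / 2) • rel
  have b3 : -X < W + |Y| := by
    by_contra hc
    refine D.cone_bound hx h2.1 h4.1 (D.ext_not_int h3) (r := -X * l3)
      (p := (-X - W - Y) / 2 * l2)
      (q := (-X - W + Y) / 2 * l4) (mul_nonneg ?_ p2.le) (mul_nonneg ?_ p4.le) ?_
    · linarith [le_abs_self Y]
    · linarith [neg_abs_le Y]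
    · rw [hX]
      linear_combination (norm := module) (-(X + W) / 2) • rel
  have b4 : -Y < W + |X| := by
    by_contra hc
    refine D.cone_bound hx h1.1 h3.1 (D.ext_not_int h4) (r := -Y * l4)
      (p := (-Y - W - X) / 2 * l1)
      (q := (-Y - W + X) / 2 * l3) (mul_nonneg ?_ p1.le) (mul_nonneg ?_ p3.le) ?_
    · linarith [le_abs_self X]
    · linarith [neg_abs_le X]
    · rw [hX]
      linear_combination (norm := module) (Y / 2) • rel
  have a1 : X ≤ 0 → Y' * (W - X) = Y * (W' - X') := by
    intro h
    rw [abs_of_nonpos h] at b2 b4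
    obtain ⟨α, β, hc⟩ := P1.constraint D h1.1 (D.ext_not_int h1) hx (s := -X * l1)
      (a := (W - X + Y) / 2) (b := (W - X - Y) / 2) t24 (by linarith) (by linarith) p2 p4 q1.ne'
      (mul_nonneg (by linarith) p1.le) s2 s4 (by
        rw [hX]
        linear_combination (norm := module) ((W - X) / 2) • rel)
    obtain ⟨z1, z2, z3⟩ := coord_unique fr' (p := X') (q := Y') (r := W') (p' := α)
      (q' := β * Y) (r' := α + β * (W - X)) (by
        linear_combination (norm := module) hc - hX' - (β * (W - X) / 2) • rel')
    rw [z1, z2, z3]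
    ring
  have a3 : 0 ≤ X → Y' * (W + X) = Y * (W' + X') := by
    intro h
    rw [abs_of_nonneg h] at b2 b4
    obtain ⟨α, β, hc⟩ := P3.constraint D h3.1 (D.ext_not_int h3) hx (s := X * l3)
      (a := (W + X + Y) / 2) (b := (W + X - Y) / 2) t24 (by linarith) (by linarith) p2 p4 q3.ne'
      (mul_nonneg (by linarith) p3.le) s2 s4 (by
        rw [hX]
        linear_combination (norm := module) ((W + X) / 2) • rel)
    obtain ⟨z1, z2, z3⟩ := coord_unique fr' (p := X') (q := Y') (r := W') (p' := -α)
      (q' := β * Y) (r' := α + β * (W + X)) (by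
        linear_combination (norm := module) hc - hX' - (β * (W + X) / 2) • rel')
    rw [z1, z2, z3]
    ring
  have a2 : Y ≤ 0 → X' * (W - Y) = X * (W' - Y') := by
    intro h
    rw [abs_of_nonpos h] at b1 b3
    obtain ⟨α, β, hc⟩ := P2.constraint D h2.1 (D.ext_not_int h2) hx (s := -Y * l2)
      (a := (W - Y + X) / 2) (b := (W - Y - X) / 2) t13 (by linarith) (by linarith) p1 p3 q2.ne'
      (mul_nonneg (by linarith) p2.le) s1 s3 (by
        rw [hX]
        linear_combination (norm := module) (Y / 2) • rel)
    obtain ⟨z1, z2, z3⟩ := coord_unique fr' (p := X') (q := Y') (r := W') (p' := β * X)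
      (q' := α) (r' := α + β * (W - Y)) (by
        linear_combination (norm := module) hc - hX' - (α / 2) • rel')
    rw [z1, z2, z3]
    ring
  have a4 : 0 ≤ Y → X' * (W + Y) = X * (W' + Y') := by
    intro h
    rw [abs_of_nonneg h] at b1 b3
    obtain ⟨α, β, hc⟩ := P4.constraint D h4.1 (D.ext_not_int h4) hx (s := Y * l4)
      (a := (W + Y + X) / 2) (b := (W + Y - X) / 2) t13 (by linarith) (by linarith) p1 p3 q4.ne'
      (mul_nonneg (by linarith) p4.le) s1 s3 (by
        rw [hX]
        linear_combination (norm := module) (-Y / 2) • rel)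
    obtain ⟨z1, z2, z3⟩ := coord_unique fr' (p := X') (q := Y') (r := W') (p' := β * X)
      (q' := -α) (r' := α + β * (W + Y)) (by
        linear_combination (norm := module) hc - hX' - (α / 2) • rel')
    rw [z1, z2, z3]
    ring
  obtain ⟨s, r1, r2, r3⟩ := proportional_of_bounds b2 b4 a1 a3 a2 a4
  refine ⟨s, ?_⟩
  rw [hX', r1, r2, r3, hX, map_add, map_add, map_smul g X, map_smul g Y, map_smul g W, gP, gQ, gM]
  module

/-! ### Isometric bodies are projectively equivalent -/

lemma Iso.image_eq {K K' : Set (Euc 2)} {τ σ : Euc 2 → Euc 2} (I : Iso K K' τ σ)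
    {g : (Fin 3 → ℝ) ≃ₗ[ℝ] (Fin 3 → ℝ)}
    (h : ∀ x ∈ interior K, ∃ s : ℝ, s • g (hat x) = hat (τ x)) :
    projMap (n := 2) g '' (chart '' interior K) = chart '' interior K' := by
  apply Set.Subset.antisymm
  · rintro _ ⟨_, ⟨x, hx, rfl⟩, rfl⟩
    exact ⟨τ x, I.mt x hx, (projMap_chart g x (τ x)).mpr (h x hx)⟩
  · rintro _ ⟨y, hy, rfl⟩
    refine ⟨_, ⟨σ y, I.ms y hy, rfl⟩, ?_⟩
    symm
    rw [projMap_chart]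
    obtain ⟨s, hs⟩ := h _ (I.ms y hy)
    rw [I.rl y hy] at hs
    exact ⟨s, hs⟩

lemma mem_triangle {e1 e2 e3 x : Euc 2} (hx : x ∈ convexHull ℝ {e1, e2, e3}) :
    ∃ p q r : ℝ, 0 ≤ p ∧ 0 ≤ q ∧ 0 ≤ r ∧ hat x = p • hat e1 + q • hat e2 + r • hat e3 := by
  rw [convexHull_insert (by simp), convexHull_pair] at hx
  obtain ⟨_, rfl, w, ⟨a, b, ha, hb, hab, rfl⟩, c, d, hc, hd, hcd, rfl⟩ := mem_convexJoin.mp hx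
  refine ⟨c, d * a, d * b, hc, by positivity, by positivity, ?_⟩
  apply eq_of_unhat_ht
  · simp only [map_add, map_smul, unhat_hat]
    module
  · simp
    linear_combination (-d) * hab - hcd

/-- The interior of a triangle consists of the points with positive barycentric coordinates. -/
lemma Body.triangle_int {K : Set (Euc 2)} (D : Body K) {e1 e2 e3 : Euc 2}
    (hK : K = convexHull ℝ {e1, e2, e3}) {x : Euc 2} :
    x ∈ interior K ↔
      ∃ p q r : ℝ, 0 < p ∧ 0 < q ∧ 0 < r ∧ hat x = p • hat e1 + q • hat e2 + r • hat e3 := by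
  constructor
  · intro hx
    -- `x` lies strictly between the centroid and a point of the triangle
    obtain ⟨s, hs, hz⟩ := D.exists_extend
      (q := (1 / 3 : ℝ) • e1 + (1 / 3 : ℝ) • e2 + (1 / 3 : ℝ) • e3) hx
    rw [hK] at hz
    obtain ⟨p, q, r, hp, hq, hr, h⟩ := mem_triangle hz
    refine ⟨(p + s / 3) / (1 + s), (q + s / 3) / (1 + s), (r + s / 3) / (1 + s),
      by positivity, by positivity, by positivity, ?_⟩
    have h1 := congrArg unhat h
    have h2 := congrArg ht h
    simp only [map_add, map_smul, unhat_hat, ht_hat, smul_eq_mul, mul_one] at h1 h2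
    apply eq_of_unhat_ht
    · simp only [map_add, map_smul, unhat_hat]
      have h3 : (1 + s) • x = (p + s / 3) • e1 + (q + s / 3) • e2 + (r + s / 3) • e3 := by
        linear_combination (norm := module) h1
      have h4 : x = (1 + s)⁻¹ • ((p + s / 3) • e1 + (q + s / 3) • e2 + (r + s / 3) • e3) := by
        rw [← h3, smul_smul, inv_mul_cancel₀ (by positivity), one_smul]
      rw [h4]
      module
    · simp only [map_add, map_smul, ht_hat, smul_eq_mul, mul_one]
      field_simp
      linear_combination 3 * h2
  · rintro ⟨p, q, r, hp, hq, hr, h⟩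
    by_contra hn
    obtain ⟨f, hf, hf'⟩ := D.exists_support hn
    have m1 : e1 ∈ K := hK ▸ subset_convexHull ℝ _ (by simp)
    have m2 : e2 ∈ K := hK ▸ subset_convexHull ℝ _ (by simp)
    have m3 : e3 ∈ K := hK ▸ subset_convexHull ℝ _ (by simp)
    have b1 := hf' _ m1
    have b2 := hf' _ m2
    have b3 := hf' _ m3
    have h1 := congrArg (fun v => f (unhat v)) h
    have h2 := congrArg ht h
    simp only [map_add, map_smul, unhat_hat, ht_hat, smul_eq_mul, mul_one] at h1 h2
    have k0 : p * (f x - f e1) + q * (f x - f e2) + r * (f x - f e3) = 0 := by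
      linear_combination (-f x) * h2 + h1
    have k1 := mul_nonneg hp.le (sub_nonneg.mpr b1)
    have k2 := mul_nonneg hq.le (sub_nonneg.mpr b2)
    have k3 := mul_nonneg hr.le (sub_nonneg.mpr b3)
    have z1 : f e1 = f x := by
      have : p * (f x - f e1) = 0 := by linarith
      rcases mul_eq_zero.mp this with h | h <;> linarith
    have z2 : f e2 = f x := by
      have : q * (f x - f e2) = 0 := by linarith
      rcases mul_eq_zero.mp this with h | h <;> linarith
    have z3 : f e3 = f x := by
      have : r * (f x - f e3) = 0 := by linarith
      rcases mul_eq_zero.mp this with h | h <;> linarith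
    obtain ⟨y, hy⟩ := D.nonempty
    obtain ⟨p', q', r', -, -, -, h'⟩ := mem_triangle (hK ▸ interior_subset hy)
    exact (hf y hy).ne (level_of_comb f h' z1 z2 z3)

lemma triangle_subset {K K' : Set (Euc 2)} (D : Body K) (D' : Body K')
    {e1 e2 e3 f1 f2 f3 : Euc 2} (hK : K = convexHull ℝ {e1, e2, e3})
    (hK' : K' = convexHull ℝ {f1, f2, f3}) {g : (Fin 3 → ℝ) ≃ₗ[ℝ] (Fin 3 → ℝ)}
    (g1 : g (hat e1) = hat f1) (g2 : g (hat e2) = hat f2) (g3 : g (hat e3) = hat f3)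
    {x : Euc 2} (hx : x ∈ interior K) : ∃ y ∈ interior K', g (hat x) = hat y := by
  obtain ⟨p, q, r, hp, hq, hr, h⟩ := (D.triangle_int hK).mp hx
  have h2 := congrArg ht h
  simp only [map_add, map_smul, ht_hat, smul_eq_mul, mul_one] at h2
  have hy : hat (p • f1 + q • f2 + r • f3) = p • hat f1 + q • hat f2 + r • hat f3 := by
    apply eq_of_unhat_ht
    · simp
    · simpa using h2
  refine ⟨p • f1 + q • f2 + r • f3, (D'.triangle_int hK').mpr ⟨p, q, r, hp, hq, hr, hy⟩, ?_⟩
  rw [hy, h, map_add, map_add, map_smul, map_smul, map_smul, g1, g2, g3]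

lemma triangle_equiv {K K' : Set (Euc 2)} (D : Body K) (D' : Body K')
    {e1 e2 e3 f1 f2 f3 : Euc 2} (hi : LinearIndependent ℝ ![hat e1, hat e2, hat e3])
    (hi' : LinearIndependent ℝ ![hat f1, hat f2, hat f3])
    (hK : K = convexHull ℝ {e1, e2, e3}) (hK' : K' = convexHull ℝ {f1, f2, f3}) :
    ∃ g : (Fin 3 → ℝ) ≃ₗ[ℝ] (Fin 3 → ℝ),
      projMap (n := 2) g '' (chart '' interior K) = chart '' interior K' := by
  obtain ⟨g, g1, g2, g3⟩ := exists_equiv hi hi'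
  refine ⟨g, Set.Subset.antisymm ?_ ?_⟩
  · rintro _ ⟨_, ⟨x, hx, rfl⟩, rfl⟩
    obtain ⟨y, hy, h⟩ := triangle_subset D D' hK hK' g1 g2 g3 hx
    exact ⟨y, hy, (projMap_chart g x y).mpr ⟨1, by rw [one_smul, h]⟩⟩
  · rintro _ ⟨y, hy, rfl⟩
    obtain ⟨x, hx, h⟩ := triangle_subset D' D hK' hK (g := g.symm)
      (by rw [← g1, g.symm_apply_apply]) (by rw [← g2, g.symm_apply_apply])
      (by rw [← g3, g.symm_apply_apply]) hy
    refine ⟨_, ⟨x, hx, rfl⟩, ?_⟩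
    symm
    rw [projMap_chart]
    exact ⟨1, by rw [one_smul, ← h, g.apply_symm_apply]⟩

theorem Iso.exists_projective {K K' : Set (Euc 2)} {τ σ : Euc 2 → Euc 2} (I : Iso K K' τ σ)
    (D : Body K) (D' : Body K') : ∃ g : (Fin 3 → ℝ) ≃ₗ[ℝ] (Fin 3 → ℝ),
      projMap (n := 2) g '' (chart '' interior K) = chart '' interior K' := by
  rcases D.dichotomy with ⟨a, b, c, d, l1, l2, l3, l4, Q⟩ | ⟨e1, e2, e3, hi, hK⟩
  · obtain ⟨g, hg⟩ := Q.projective I D D'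
    exact ⟨g, I.image_eq hg⟩
  rcases D'.dichotomy with ⟨a, b, c, d, l1, l2, l3, l4, Q⟩ | ⟨f1, f2, f3, hi', hK'⟩
  · obtain ⟨g, hg⟩ := Q.projective I.symm D' D
    refine ⟨g.symm, I.image_eq fun x hx => ?_⟩
    obtain ⟨s, hs⟩ := hg _ (I.mt x hx)
    rw [I.lr x hx] at hs
    have hs0 : s ≠ 0 := by
      rintro rfl
      rw [zero_smul] at hs
      exact hat_ne x hs.symm
    refine ⟨s⁻¹, ?_⟩
    rw [← hs, map_smul, g.symm_apply_apply, smul_smul, inv_mul_cancel₀ hs0, one_smul]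
  · exact triangle_equiv D D' hi hi' hK hK'

/-! ### Projectively equivalent bodies are isometric -/

/-- The action of a linear map of homogeneous coordinates on the affine chart. -/
def proj (g : (Fin 3 → ℝ) ≃ₗ[ℝ] (Fin 3 → ℝ)) (x : Euc 2) : Euc 2 :=
  (ht (g (hat x)))⁻¹ • unhat (g (hat x))

lemma hat_proj {g : (Fin 3 → ℝ) ≃ₗ[ℝ] (Fin 3 → ℝ)} {x : Euc 2} (h : ht (g (hat x)) ≠ 0) :
    ht (g (hat x)) • hat (proj g x) = g (hat x) := by
  apply eq_of_unhat_ht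
  · rw [map_smul, unhat_hat, proj, smul_smul, mul_inv_cancel₀ h, one_smul]
  · simp

lemma eq_of_smul_hat {x y : Euc 2} {s t : ℝ} (hs : s ≠ 0) (h : s • hat x = t • hat y) :
    x = y := by
  have h1 := congrArg unhat h
  have h2 := congrArg ht h
  simp at h1 h2
  subst h2
  exact smul_right_injective _ hs h1

lemma g_cp (g : (Fin 3 → ℝ) ≃ₗ[ℝ] (Fin 3 → ℝ)) (a b : Euc 2) (u : ℝ) :
    (1 + Real.exp u) • g (hat (cp a b u)) = g (hat a) + Real.exp u • g (hat b) := by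
  rw [← map_smul, hat_cp, map_add, map_smul]

/-- The denominator of the projective map is positive at the boundary: it is nonnegative by
continuity, and if it vanished the image would be unbounded. -/
lemma denom_pos {K K' : Set (Euc 2)} (D' : Body K') {g : (Fin 3 → ℝ) ≃ₗ[ℝ] (Fin 3 → ℝ)}
    (hpos : ∀ x ∈ interior K, 0 < ht (g (hat x))) (hm : ∀ x ∈ interior K, proj g x ∈ interior K')
    {a b : Euc 2} (c : Chord K a b) : 0 < ht (g (hat a)) := by
  have key : ∀ u, 0 < ht (g (hat a)) + Real.exp u * ht (g (hat b)) := by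
    intro u
    have h := congrArg ht (g_cp g a b u)
    simp only [map_smul, map_add, smul_eq_mul] at h
    rw [← h]
    have := hpos _ (c.mem u)
    have := Real.exp_pos u
    positivity
  have h0 : 0 ≤ ht (g (hat a)) := by
    have hl : Filter.Tendsto (fun u : ℝ => ht (g (hat a)) + Real.exp u * ht (g (hat b)))
        Filter.atBot (nhds (ht (g (hat a)) + 0 * ht (g (hat b)))) :=
      tendsto_const_nhds.add (Real.tendsto_exp_atBot.mul_const _)
    rw [zero_mul, add_zero] at hl
    exact ge_of_tendsto hl (Filter.Eventually.of_forall fun u => (key u).le)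
  refine lt_of_le_of_ne h0 fun hz => ?_
  have hb : 0 < ht (g (hat b)) := by
    have := key 0
    rw [← hz, Real.exp_zero] at this
    linarith
  have hw : unhat (g (hat a)) ≠ 0 := by
    intro hw
    have h1 : g (hat a) = 0 := eq_of_unhat_ht (by rw [hw, map_zero]) (by rw [← hz, map_zero])
    exact hat_ne a (by simpa using h1)
  have hw' := norm_pos_iff.mpr hw
  obtain ⟨R, hR⟩ := D'.compact.isBounded.exists_norm_le
  set w := unhat (g (hat a)) with hwdef
  set v := unhat (g (hat b)) with hvdef
  set L := ht (g (hat b)) with hL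
  have hR0 : 0 ≤ R := by
    obtain ⟨y, hy⟩ := D'.nonempty
    exact (norm_nonneg y).trans (hR y (interior_subset hy))
  -- the point of the chord whose image is too far away
  obtain ⟨T, hT⟩ : ∃ T, T = (L * R + ‖v‖ + 1) / ‖w‖ := ⟨_, rfl⟩
  have hTpos : 0 < T := by rw [hT]; positivity
  have h1 := congrArg unhat (g_cp g a b (Real.log T⁻¹))
  have h2 := congrArg ht (g_cp g a b (Real.log T⁻¹))
  have hin := hR _ (interior_subset (hm _ (c.mem (Real.log T⁻¹))))
  rw [Real.exp_log (by positivity)] at h1 h2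
  have h3 := hat_proj (hpos _ (c.mem (Real.log T⁻¹))).ne'
  have h4 := congrArg unhat h3
  simp only [map_smul, map_add, smul_eq_mul, unhat_hat] at h1 h2 h4
  rw [← hz, zero_add] at h2
  rw [← h4, smul_smul, h2] at h1
  have h5 : w = (T⁻¹ * L) • proj g (cp a b (Real.log T⁻¹)) - T⁻¹ • v := by
    rw [h1]; abel
  have h6 : ‖w‖ ≤ T⁻¹ * L * R + T⁻¹ * ‖v‖ := by
    rw [h5]
    refine (norm_sub_le _ _).trans ?_
    rw [norm_smul, norm_smul, Real.norm_of_nonneg (by positivity),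
      Real.norm_of_nonneg (by positivity)]
    gcongr
  have h7 : T * ‖w‖ ≤ L * R + ‖v‖ := by
    have := mul_le_mul_of_nonneg_left h6 hTpos.le
    rwa [show T * (T⁻¹ * L * R + T⁻¹ * ‖v‖) = L * R + ‖v‖ by field_simp] at this
  rw [hT, div_mul_cancel₀ _ hw'.ne'] at h7
  linarith

/-- A projective map whose denominator is positive maps chords to chords by translations of the
exponential parameter, hence preserves the Hilbert metric. -/
lemma proj_isometry {K K' : Set (Euc 2)} (D : Body K) (D' : Body K')
    {g : (Fin 3 → ℝ) ≃ₗ[ℝ] (Fin 3 → ℝ)} (hpos : ∀ x ∈ interior K, 0 < ht (g (hat x)))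
    (hm : ∀ x ∈ interior K, proj g x ∈ interior K')
    (hs : ∀ y ∈ interior K', ∃ x ∈ interior K, proj g x = y) :
    IsHilbertIsometry (interior K) (interior K') (proj g) := by
  refine ⟨hm, fun y hy => ?_, fun x hx y hy => ?_⟩
  · obtain ⟨x, hx, h⟩ := hs y hy
    exact ⟨x, hx, h⟩
  by_cases hxy : x = y
  · subst hxy
    rw [hdist_self, hdist_self]
  obtain ⟨a, b, u, v, c, -, rfl, rfl⟩ := D.exists_chord hx hy hxy
  have key : ∀ a b, Chord K a b → ∃ k, (∀ t, proj g (cp a b t) = cp (proj g a) (proj g b) (t + k))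
      ∧ proj g a ∈ K' ∧ proj g a ∉ interior K' := by
    intro a b c
    have pa := denom_pos D' hpos hm c
    have pb := denom_pos D' hpos hm c.symm
    have ha := hat_proj pa.ne'
    have hb := hat_proj pb.ne'
    have hline : ∀ t, proj g (cp a b t) =
        cp (proj g a) (proj g b) (t + Real.log (ht (g (hat b)) / ht (g (hat a)))) := by
      intro t
      have hc := hat_proj (hpos _ (c.mem t)).ne'
      have h := g_cp g a b t
      rw [← hc, ← ha, ← hb, smul_smul, smul_smul] at h
      have ht0 := Real.exp_pos t
      rw [eq_cp_of_hat pa (by positivity) h]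
      congr 1
      rw [mul_div_assoc, Real.log_mul ht0.ne' (by positivity), Real.log_exp]
    refine ⟨_, hline, ?_, ?_⟩
    · refine D'.compact.isClosed.mem_of_tendsto (tendsto_cp_add (proj g a) (proj g b)
        (Real.log (ht (g (hat b)) / ht (g (hat a)))))
        (Filter.Eventually.of_forall fun t => ?_)
      rw [← hline]
      exact interior_subset (hm _ (c.mem t))
    · intro hi
      obtain ⟨x, hx, hxa⟩ := hs _ hi
      have h1 := hat_proj (hpos x hx).ne'
      rw [hxa] at h1
      have h2 : hat (proj g a) = (ht (g (hat a)))⁻¹ • g (hat a) := by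
        rw [← ha, smul_smul]
        simp [pa.ne']
      rw [h2, smul_smul, ← map_smul] at h1
      have h3 := g.injective h1
      have h4 : a = x := eq_of_smul_hat (t := 1)
        (mul_ne_zero (hpos x hx).ne' (inv_ne_zero pa.ne')) (by rw [one_smul]; exact h3)
      exact c.na (h4 ▸ hx)
  obtain ⟨k, h, la, na⟩ := key a b c
  obtain ⟨-, -, lb, nb⟩ := key b a c.symm
  have c' : Chord K' (proj g a) (proj g b) := D'.chord_of_mem la na lb nb (u := 0 + k) (by
    rw [← h]; exact hm _ (c.mem 0))
  rw [h, h, D'.hdist c', D.hdist c]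
  congr 1
  ring

lemma exists_isometry {K K' : Set (Euc 2)} (D : Body K) (D' : Body K')
    {g : (Fin 3 → ℝ) ≃ₗ[ℝ] (Fin 3 → ℝ)}
    (hg : projMap (n := 2) g '' (chart '' interior K) = chart '' interior K') :
    ∃ τ, IsHilbertIsometry (interior K) (interior K') τ := by
  have H1 : ∀ x ∈ interior K, ∃ y ∈ interior K', ∃ s : ℝ, s • g (hat x) = hat y := by
    intro x hx
    have : projMap (n := 2) g (chart x) ∈ chart '' interior K' := by
      rw [← hg]; exact ⟨_, ⟨x, hx, rfl⟩, rfl⟩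
    obtain ⟨y, hy, h⟩ := this
    exact ⟨y, hy, (projMap_chart g x y).mp h⟩
  have H2 : ∀ y ∈ interior K', ∃ x ∈ interior K, ∃ s : ℝ, s • g (hat x) = hat y := by
    intro y hy
    have : chart y ∈ projMap (n := 2) g '' (chart '' interior K) := by
      rw [hg]; exact ⟨y, hy, rfl⟩
    obtain ⟨_, ⟨x, hx, rfl⟩, h⟩ := this
    exact ⟨x, hx, (projMap_chart g x y).mp h.symm⟩
  have main : ∀ g : (Fin 3 → ℝ) ≃ₗ[ℝ] (Fin 3 → ℝ),
      (∀ x ∈ interior K, ∃ y ∈ interior K', ∃ s : ℝ, s • g (hat x) = hat y) →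
      (∀ y ∈ interior K', ∃ x ∈ interior K, ∃ s : ℝ, s • g (hat x) = hat y) →
      (∃ x ∈ interior K, 0 < ht (g (hat x))) →
      ∃ τ, IsHilbertIsometry (interior K) (interior K') τ := by
    rintro g H1 H2 ⟨x0, hx0, h0⟩
    have hne : ∀ x ∈ interior K, ht (g (hat x)) ≠ 0 := by
      intro x hx h
      obtain ⟨y, -, s, hs⟩ := H1 x hx
      have := congrArg ht hs
      simp [h] at this
    have hpos : ∀ x ∈ interior K, 0 < ht (g (hat x)) := by
      intro x hx
      by_contra hn
      have hlt : ht (g (hat x)) < 0 := lt_of_le_of_ne (not_lt.mp hn) (hne x hx)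
      -- the denominator is affine, so it vanishes somewhere between `x0` and `x`
      set p := -ht (g (hat x)) with hp
      set q := ht (g (hat x0)) with hq
      have hp0 : 0 < p := by linarith
      have hpq : p + q ≠ 0 := by positivity
      have hz : (p + q) • ((p + q)⁻¹ • (p • x0 + q • x)) = p • x0 + q • x := by
        rw [smul_smul, mul_inv_cancel₀ hpq, one_smul]
      have hzi := D.mem_int hx0 (interior_subset hx) hp0 h0.le hz
      have hzh : (p + q) • hat ((p + q)⁻¹ • (p • x0 + q • x)) = p • hat x0 + q • hat x := by
        apply eq_of_unhat_ht
        · simpa only [map_smul, map_add, unhat_hat] using hz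
        · simp
      have h := congrArg (fun w => ht (g w)) hzh
      simp only [map_smul, map_add, smul_eq_mul] at h
      rw [← hq, show ht (g (hat x)) = -p by rw [hp, neg_neg]] at h
      have h' : (p + q) * ht (g (hat ((p + q)⁻¹ • (p • x0 + q • x)))) = 0 := by
        rw [h]; ring
      exact (mul_ne_zero hpq (hne _ hzi)) h'
    have hproj : ∀ x ∈ interior K, ∀ y, ∀ s : ℝ, s • g (hat x) = hat y → proj g x = y := by
      intro x hx y s hs
      rw [← hat_proj (hne x hx), smul_smul] at hs
      exact (eq_of_smul_hat (s := 1) one_ne_zero (by rw [one_smul]; exact hs.symm)).symm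
    refine ⟨proj g, proj_isometry D D' hpos (fun x hx => ?_) (fun y hy => ?_)⟩
    · obtain ⟨y, hy, s, hs⟩ := H1 x hx
      rw [hproj x hx y s hs]
      exact hy
    · obtain ⟨x, hx, s, hs⟩ := H2 y hy
      exact ⟨x, hx, hproj x hx y s hs⟩
  obtain ⟨x0, hx0⟩ := D.nonempty
  have h0 : ht (g (hat x0)) ≠ 0 := by
    intro h
    obtain ⟨y, -, s, hs⟩ := H1 x0 hx0
    have := congrArg ht hs
    simp [h] at this
  rcases h0.lt_or_gt with h | h
  · refine main (g.trans (LinearEquiv.neg ℝ)) (fun x hx => ?_) (fun y hy => ?_) ⟨x0, hx0, ?_⟩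
    · obtain ⟨y, hy, s, hs⟩ := H1 x hx
      exact ⟨y, hy, -s, by simpa using hs⟩
    · obtain ⟨x, hx, s, hs⟩ := H2 y hy
      exact ⟨x, hx, -s, by simpa using hs⟩
    · simpa using h
  · exact main g H1 H2 ⟨x0, hx0, h⟩

/-- Two Hilbert geometries given by interiors of compact convex sets in
`ℝ²` are isometric if and only if they are projectively equivalent, i.e. some projective
transformation `p ∈ PGL_3(ℝ)` maps `Ω` onto `Ω'`. -/
theorem stmt_4 (Ω Ω' : Set (Euc 2)) (hne : Ω.Nonempty) (hne' : Ω'.Nonempty)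
    (hK : ∃ K : Set (Euc 2), IsCompact K ∧ Convex ℝ K ∧ Ω = interior K)
    (hK' : ∃ K' : Set (Euc 2), IsCompact K' ∧ Convex ℝ K' ∧ Ω' = interior K') :
    (∃ τ : Euc 2 → Euc 2, IsHilbertIsometry Ω Ω' τ) ↔
      (∃ g : (Fin 3 → ℝ) ≃ₗ[ℝ] (Fin 3 → ℝ), projMap g '' (chart '' Ω) = chart '' Ω') := by
  obtain ⟨K, hc, hv, rfl⟩ := hK
  obtain ⟨K', hc', hv', rfl⟩ := hK'
  have D : Body K := ⟨hc, hv, hne⟩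
  have D' : Body K' := ⟨hc', hv', hne'⟩
  constructor
  · rintro ⟨τ, hτ⟩
    obtain ⟨σ, I⟩ := exists_iso D hτ
    exact I.exists_projective D D'
  · rintro ⟨g, hg⟩
    exact exists_isometry D D' hg
end
end

section
/- Let Ω and Ω' be open bounded convex sets in ℝⁿ with their Hilbert metrics and let τ: Ω → Ω' be an isometry. If Ω is strictly convex, then Ω' is strictly convex and τ is (the restriction of) a projective transformation. -/
/-!
The Hilbert distance is a sum of two one-sided (Funk) distances. The Funk distance from `x` to `y` is
`log ((c - l x) / (c - l y))`, where `l = c` supports `Ω` at the point where the ray from `x` through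
`y` leaves `Ω`; any other functional `l ≤ c` on `Ω` gives no larger value (`funk_le`). This yields
the triangle inequality, and equality for `x, z, y` forces the hyperplane `l = c` to contain the exit
points of both rays from `x`, through `z` and through `y`. If `Ω` is strictly convex these points
coincide, so `z` lies on `[x, y]` (`mem_segment_of_dist_add`).

Straight segments of `Ω'` are geodesics, so their preimages under `τ` are geodesics of `Ω`, that is,
segments. Comparing the cross-ratio formulas for the distances on the two chords shows that
`τ` is a projective map on each segment: it maps `(1 - t) x + t y` to the barycentre of `τ x` and
`τ y` with weights `1 - t` and `t * m x y`, for some `m x y > 0` (`exists_weight`).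

The weights satisfy `m x y * m y z * m z x = 1` (`weight_cocycle`). When `τ x, τ y, τ z` are not
collinear this is Ceva's theorem for the image of the centroid; when they are collinear so are
`x, y, z`, and the identity is a computation on one segment. Fixing a base point `p`, the map
`x ↦ m p x • (τ x, 1)` is therefore affine on `Ω`, so it is given by a linear map `g` of homogeneous
coordinates (`exists_affine_extension`, `exists_lift`). It is surjective because `Ω'` is open, and
hence `τ` is projective.

Finally, boundedness of `Ω` and injectivity of `g` imply that every point of the closure of `Ω'` is
the image under `g` of a point of the closure of `Ω` with positive scaling factor. A segment in the
frontier of `Ω'` would thus come from a segment in the frontier of `Ω` (`strictlyConvex_of_lift`).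
-/

open Set
open scoped LinearAlgebra.Projectivization
open scoped Classical

noncomputable section

/-- A convex domain `Ω` is strictly convex: its boundary contains no nondegenerate
line segment. -/
def IsStrictlyConvexDomain {n : ℕ} (Ω : Set (Euc n)) : Prop :=
  ∀ x ∈ frontier Ω, ∀ y ∈ frontier Ω, x ≠ y → ¬ segment ℝ x y ⊆ frontier Ω

/-! ### Boundary points on a line -/

theorem exists_support {n : ℕ} {Ω : Set (Euc n)} (hop : IsOpen Ω) (hcv : Convex ℝ Ω)
    {p : Euc n} (hp : p ∈ frontier Ω) :
    ∃ l : Euc n →L[ℝ] ℝ, (∀ z ∈ Ω, l z < l p) ∧ ∀ z ∈ closure Ω, l z ≤ l p := by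
  have hp' : p ∉ Ω := by
    rw [hop.frontier_eq] at hp
    exact hp.2
  obtain ⟨l, hl⟩ := geometric_hahn_banach_open_point hcv hop hp'
  refine ⟨l, hl, fun z hz => ?_⟩
  have hcl : IsClosed {z | l z ≤ l p} := isClosed_le l.continuous continuous_const
  exact closure_minimal (fun w hw => (hl w hw).le) hcl hz

theorem exists_exit {n : ℕ} {Ω : Set (Euc n)} (hop : IsOpen Ω) (hbd : Bornology.IsBounded Ω)
    {x v : Euc n} (hx : x ∈ Ω) (hv : v ≠ 0) : ∃ b : ℝ, 0 < b ∧ x + b • v ∈ frontier Ω := by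
  obtain ⟨R, hR⟩ := hbd.subset_closedBall x
  have hvn : 0 < ‖v‖ := norm_pos_iff.mpr hv
  have hR0 : 0 ≤ R := by simpa using hR hx
  set T : ℝ := (R + 1) / ‖v‖ with hT
  have hT0 : 0 < T := by positivity
  have hout : x + T • v ∉ Ω := by
    intro h
    have h1 := hR h
    rw [Metric.mem_closedBall, dist_eq_norm, add_sub_cancel_left, norm_smul, Real.norm_eq_abs,
      abs_of_pos hT0, hT, div_mul_cancel₀ _ hvn.ne'] at h1
    linarith
  have hpre : IsPreconnected (segment ℝ x (x + T • v)) := (convex_segment _ _).isPreconnected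
  obtain ⟨z, hz, hzf⟩ : ∃ z ∈ segment ℝ x (x + T • v), z ∈ frontier Ω := by
    by_contra! hcon
    -- otherwise `Ω` and the complement of its closure disconnect the segment
    obtain ⟨w, -, hw1, hw2⟩ := hpre Ω (closure Ω)ᶜ hop isClosed_closure.isOpen_compl
      (fun w hw => by
        by_cases hwΩ : w ∈ Ω
        · exact Or.inl hwΩ
        · refine Or.inr fun hwc => hcon w hw ?_
          rw [hop.frontier_eq]
          exact ⟨hwc, hwΩ⟩)
      ⟨x, left_mem_segment _ _ _, hx⟩
      ⟨_, right_mem_segment _ _ _, fun hwc => hcon _ (right_mem_segment _ _ _) (by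
        rw [hop.frontier_eq]
        exact ⟨hwc, hout⟩)⟩
    exact hw2 (subset_closure hw1)
  rw [segment_eq_image'] at hz
  obtain ⟨θ, hθ, rfl⟩ := hz
  simp only [add_sub_cancel_left, smul_smul] at hzf
  refine ⟨θ * T, lt_of_le_of_ne (mul_nonneg hθ.1 hT0.le) ?_, hzf⟩
  intro h0
  rw [← h0, zero_smul, add_zero, hop.frontier_eq] at hzf
  exact hzf.2 hx

theorem le_exit {n : ℕ} {Ω : Set (Euc n)} (hop : IsOpen Ω) (hcv : Convex ℝ Ω)
    {x v : Euc n} (hx : x ∈ Ω) {b c : ℝ} (hb : 0 < b) (hbf : x + b • v ∈ frontier Ω)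
    (hc : x + c • v ∈ closure Ω) : c ≤ b := by
  obtain ⟨l, hl, hl'⟩ := exists_support hop hcv hbf
  have h1 := hl x hx
  have h2 := hl' _ hc
  simp only [map_add, map_smul, smul_eq_mul] at h1 h2
  have h3 : 0 < l v := by
    by_contra h
    nlinarith
  nlinarith

theorem exit_unique {n : ℕ} {Ω : Set (Euc n)} (hop : IsOpen Ω) (hcv : Convex ℝ Ω)
    {x v : Euc n} (hx : x ∈ Ω) {b c : ℝ} (hb : 0 < b) (hbf : x + b • v ∈ frontier Ω)
    (hc : 0 < c) (hcf : x + c • v ∈ frontier Ω) : c = b :=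
  le_antisymm (le_exit hop hcv hx hb hbf (frontier_subset_closure hcf))
    (le_exit hop hcv hx hc hcf (frontier_subset_closure hbf))

theorem mem_of_lt_exit {n : ℕ} {Ω : Set (Euc n)} (hop : IsOpen Ω) (hcv : Convex ℝ Ω)
    {x v : Euc n} (hx : x ∈ Ω) {b t : ℝ} (hbf : x + b • v ∈ frontier Ω)
    (ht : 0 ≤ t) (htb : t < b) : x + t • v ∈ Ω := by
  have hb : 0 < b := ht.trans_lt htb
  rcases ht.eq_or_lt with rfl | ht
  · simpa using hx
  have := hcv.openSegment_interior_closure_subset_interior (x := x) (y := x + b • v)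
    (by rwa [hop.interior_eq]) (frontier_subset_closure hbf)
  rw [hop.interior_eq] at this
  apply this
  rw [openSegment_eq_image']
  refine ⟨t / b, ⟨by positivity, (div_lt_one hb).mpr htb⟩, ?_⟩
  simp only [add_sub_cancel_left, smul_smul, div_mul_cancel₀ _ (ne_of_gt hb)]

/-! ### The Hilbert distance along a chord -/

theorem dist_line {n : ℕ} (x v : Euc n) (r s : ℝ) :
    dist (x + r • v) (x + s • v) = |r - s| * ‖v‖ := by
  rw [dist_eq_norm, add_sub_add_left_eq_sub, ← sub_smul, norm_smul, Real.norm_eq_abs]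

theorem exists_param {n : ℕ} {x v α : Euc n} {s t : ℝ} (hv : v ≠ 0) (hst : s < t)
    (h : Collinear ℝ ({α, x + s • v, x + t • v} : Set (Euc n))) :
    ∃ r : ℝ, α = x + r • v := by
  have hne : x + s • v ≠ x + t • v := by
    intro h
    exact hst.ne (smul_left_injective ℝ hv (add_left_cancel h))
  have hm := h.mem_affineSpan_of_mem_of_ne (p₁ := x + s • v) (p₂ := x + t • v) (p₃ := α)
    (by simp) (by simp) (by simp) hne
  rw [← vsub_vadd α (x + s • v), vadd_left_mem_affineSpan_pair] at hm
  obtain ⟨r, hr⟩ := hm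
  simp only [vsub_eq_sub] at hr
  refine ⟨s + r * (t - s), ?_⟩
  rw [eq_comm, sub_eq_iff_eq_add] at hr
  rw [hr]
  module

theorem hilbertDist_self {n : ℕ} (Ω : Set (Euc n)) (x : Euc n) : hilbertDist Ω x x = 0 := by
  unfold hilbertDist
  rw [dif_neg]
  rintro ⟨p, -, -, -, -, h, -⟩
  exact lt_irrefl _ h

/-- The Hilbert distance between two points of the chord with endpoints `x - A • v` and
`x + B • v`, in terms of the parameters of the four points. -/
theorem hilbertDist_line {n : ℕ} {Ω : Set (Euc n)} (hop : IsOpen Ω) (hcv : Convex ℝ Ω)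
    {x v : Euc n} (hv : v ≠ 0) {A B s t : ℝ}
    (hA : x + (-A) • v ∈ frontier Ω) (hB : x + B • v ∈ frontier Ω)
    (hs : x + s • v ∈ Ω) (ht : x + t • v ∈ Ω)
    (hAs : -A < s) (hst : s ≤ t) (htB : t < B) :
    hilbertDist Ω (x + s • v) (x + t • v)
      = Real.log ((B - s) / (B - t)) + Real.log ((t + A) / (s + A)) := by
  rcases hst.eq_or_lt with rfl | hst
  · rw [hilbertDist_self, div_self (by linarith), div_self (by linarith)]
    simp
  have hvn : 0 < ‖v‖ := norm_pos_iff.mpr hv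
  have hmid : x + ((s + t) / 2) • v ∈ Ω := by
    have := hcv hs ht (a := 1 / 2) (b := 1 / 2) (by norm_num) (by norm_num) (by norm_num)
    convert this using 1
    module
  have key : ∀ p : Euc n × Euc n, IsHilbertPair Ω (x + s • v) (x + t • v) p.1 p.2 →
      p.1 = x + (-A) • v ∧ p.2 = x + B • v := by
    rintro ⟨α, β⟩ ⟨hα, hβ, hcα, hcβ, h1, h2⟩
    obtain ⟨r, rfl⟩ := exists_param hv hst hcα
    obtain ⟨q, rfl⟩ := exists_param hv hst hcβ
    simp only [dist_line] at h1 h2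
    have h1' := sq_lt_sq.mpr (lt_of_mul_lt_mul_right h1 hvn.le)
    have h2' := sq_lt_sq.mpr (lt_of_mul_lt_mul_right h2 hvn.le)
    have hr : r < (s + t) / 2 := by nlinarith
    have hq : (s + t) / 2 < q := by nlinarith
    constructor
    · have := exit_unique hop hcv (v := -v) hmid (b := (s + t) / 2 + A) (c := (s + t) / 2 - r)
        (by linarith) (by convert hA using 1; module) (by linarith)
        (by convert hα using 1; module)
      have : r = -A := by linarith
      simp only [this]
    · have := exit_unique hop hcv (v := v) hmid (b := B - (s + t) / 2) (c := q - (s + t) / 2)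
        (by linarith) (by convert hB using 1; module) (by linarith)
        (by convert hβ using 1; module)
      have : q = B := by linarith
      simp only [this]
  have hex : ∃ p : Euc n × Euc n, IsHilbertPair Ω (x + s • v) (x + t • v) p.1 p.2 := by
    have hcol : ∀ r : ℝ, Collinear ℝ ({x + r • v, x + s • v, x + t • v} : Set (Euc n)) := by
      intro r
      rw [collinear_iff_exists_forall_eq_smul_vadd]
      refine ⟨x, v, ?_⟩
      rintro p (rfl | rfl | rfl)
      · exact ⟨r, by rw [vadd_eq_add, add_comm]⟩
      · exact ⟨s, by rw [vadd_eq_add, add_comm]⟩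
      · exact ⟨t, by rw [vadd_eq_add, add_comm]⟩
    refine ⟨(x + (-A) • v, x + B • v), hA, hB, hcol _, hcol _, ?_, ?_⟩
    · simp only [dist_line]
      refine mul_lt_mul_of_pos_right ?_ hvn
      rw [abs_of_neg (by linarith), abs_of_neg (by linarith)]
      linarith
    · simp only [dist_line]
      refine mul_lt_mul_of_pos_right ?_ hvn
      rw [abs_of_pos (by linarith), abs_of_pos (by linarith)]
      linarith
  unfold hilbertDist
  rw [dif_pos hex]
  obtain ⟨e1, e2⟩ := key _ hex.choose_spec
  rw [e1, e2]
  simp only [dist_line]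
  rw [mul_div_mul_right _ _ hvn.ne', mul_div_mul_right _ _ hvn.ne',
    abs_of_neg (by linarith : -A - t < 0), abs_of_neg (by linarith : -A - s < 0),
    abs_of_pos (by linarith : 0 < B - t), abs_of_pos (by linarith : 0 < B - s),
    Real.log_mul, add_comm]
  · congr 3 <;> ring
  · exact (div_pos (by linarith) (by linarith)).ne'
  · exact ne_of_gt (div_pos (by linarith) (by linarith))

/-- The chord through two points `x ≠ y` of `Ω`, parametrized so that `x` and `y` have parameters
`0` and `1` and the endpoints have parameters `-A` and `B`. -/
theorem exists_chord {n : ℕ} {Ω : Set (Euc n)} (hop : IsOpen Ω) (hbd : Bornology.IsBounded Ω)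
    (hcv : Convex ℝ Ω) {x y : Euc n} (hx : x ∈ Ω) (hy : y ∈ Ω) (hxy : x ≠ y) :
    ∃ A B : ℝ, 0 < A ∧ 1 < B ∧ x + (-A) • (y - x) ∈ frontier Ω ∧ x + B • (y - x) ∈ frontier Ω ∧
      ∀ s t : ℝ, 0 ≤ s → s ≤ t → t ≤ 1 →
        hilbertDist Ω (x + s • (y - x)) (x + t • (y - x))
          = Real.log ((B - s) / (B - t)) + Real.log ((t + A) / (s + A)) := by
  have hv : y - x ≠ 0 := sub_ne_zero.mpr hxy.symm
  obtain ⟨A, hA, hAf⟩ := exists_exit hop hbd hx (neg_ne_zero.mpr hv)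
  obtain ⟨b, hb, hbf⟩ := exists_exit hop hbd hy hv
  have hBf : x + (1 + b) • (y - x) ∈ frontier Ω := by
    convert hbf using 1
    module
  have hAf' : x + (-A) • (y - x) ∈ frontier Ω := by
    convert hAf using 1
    module
  have hin : ∀ t : ℝ, 0 ≤ t → t ≤ 1 → x + t • (y - x) ∈ Ω := fun t h0 h1 =>
    mem_of_lt_exit hop hcv hx hBf h0 (by linarith)
  refine ⟨A, 1 + b, hA, by linarith, hAf', hBf, fun s t h0 hst h1 => ?_⟩
  exact hilbertDist_line hop hcv hv hAf' hBf (hin s h0 (hst.trans h1)) (hin t (h0.trans hst) h1)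
    (by linarith) hst (by linarith)

/-- The Hilbert distance as a sum of two one-sided (Funk) distances, each determined by the
parameter at which the ray from one point through the other leaves `Ω`. -/
theorem exists_exits {n : ℕ} {Ω : Set (Euc n)} (hop : IsOpen Ω) (hbd : Bornology.IsBounded Ω)
    (hcv : Convex ℝ Ω) {x y : Euc n} (hx : x ∈ Ω) (hy : y ∈ Ω) (hxy : x ≠ y) :
    ∃ a b : ℝ, 1 < a ∧ 1 < b ∧ y + a • (x - y) ∈ frontier Ω ∧ x + b • (y - x) ∈ frontier Ω ∧
      hilbertDist Ω x y = Real.log (b / (b - 1)) + Real.log (a / (a - 1)) := by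
  obtain ⟨A, B, hA, hB, hAf, hBf, hd⟩ := exists_chord hop hbd hcv hx hy hxy
  refine ⟨1 + A, B, by linarith, hB, by convert hAf using 1; module, hBf, ?_⟩
  have := hd 0 1 le_rfl zero_le_one le_rfl
  rw [zero_smul, add_zero, one_smul, add_sub_cancel] at this
  rw [this]
  congr 3 <;> ring

theorem log_exit_pos {b : ℝ} (hb : 1 < b) : 0 < Real.log (b / (b - 1)) := by
  apply Real.log_pos
  rw [one_lt_div (by linarith)]
  linarith

theorem hilbertDist_pos {n : ℕ} {Ω : Set (Euc n)} (hop : IsOpen Ω) (hbd : Bornology.IsBounded Ω)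
    (hcv : Convex ℝ Ω) {x y : Euc n} (hx : x ∈ Ω) (hy : y ∈ Ω) (hxy : x ≠ y) :
    0 < hilbertDist Ω x y := by
  obtain ⟨a, b, ha, hb, -, -, hd⟩ := exists_exits hop hbd hcv hx hy hxy
  rw [hd]
  exact add_pos (log_exit_pos hb) (log_exit_pos ha)

/-! ### Uniqueness of geodesics in a strictly convex domain -/

/-- If `l ≤ c` on `Ω`, then the logarithmic ratio of `c - l` at `x` and `z` is at most the
one-sided (Funk) distance `log (b / (b - 1))`, with equality only if the hyperplane `l = c`
passes through the point where the ray from `x` through `z` leaves `Ω`. -/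
theorem funk_le {n : ℕ} (l : Euc n →L[ℝ] ℝ) {c b : ℝ} {x z : Euc n} (hx : l x < c) (hz : l z < c)
    (hb : 1 < b) (hβ : l (x + b • (z - x)) ≤ c) :
    Real.log (c - l x) - Real.log (c - l z) ≤ Real.log (b / (b - 1)) ∧
      (Real.log (c - l x) - Real.log (c - l z) = Real.log (b / (b - 1)) →
        l (x + b • (z - x)) = c) := by
  have hx' : 0 < c - l x := by linarith
  have hz' : 0 < c - l z := by linarith
  have hb' : 0 < b - 1 := by linarith
  simp only [map_add, map_smul, map_sub, smul_eq_mul] at hβ ⊢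
  rw [← Real.log_div hx'.ne' hz'.ne']
  constructor
  · apply Real.log_le_log (div_pos hx' hz')
    rw [div_le_div_iff₀ hz' hb']
    nlinarith
  · intro h
    have h' := Real.log_injOn_pos (Set.mem_Ioi.mpr (div_pos hx' hz'))
      (Set.mem_Ioi.mpr (div_pos (by linarith) hb')) h
    rw [div_eq_div_iff hz'.ne' hb'.ne'] at h'
    linarith

/-- In a strictly convex domain, equality in the triangle inequality forces the middle point to lie
on the segment. -/
theorem mem_segment_of_dist_add {n : ℕ} {Ω : Set (Euc n)} (hop : IsOpen Ω)
    (hbd : Bornology.IsBounded Ω) (hcv : Convex ℝ Ω) (hsc : IsStrictlyConvexDomain Ω)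
    {x y z : Euc n} (hx : x ∈ Ω) (hy : y ∈ Ω) (hz : z ∈ Ω)
    (h : hilbertDist Ω x z + hilbertDist Ω z y = hilbertDist Ω x y) :
    ∃ t : ℝ, 0 ≤ t ∧ t ≤ 1 ∧ z = x + t • (y - x) := by
  by_cases hxz : x = z
  · exact ⟨0, le_rfl, zero_le_one, by simp [hxz]⟩
  by_cases hzy : z = y
  · exact ⟨1, zero_le_one, le_rfl, by simp [hzy]⟩
  have p1 := hilbertDist_pos hop hbd hcv hx hz hxz
  have p2 := hilbertDist_pos hop hbd hcv hz hy hzy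
  have hxy : x ≠ y := by
    rintro rfl
    rw [hilbertDist_self] at h
    linarith
  obtain ⟨a, b, ha, hb, haf, hbf, hd⟩ := exists_exits hop hbd hcv hx hy hxy
  obtain ⟨a1, b1, ha1, hb1, haf1, hbf1, hd1⟩ := exists_exits hop hbd hcv hx hz hxz
  obtain ⟨a2, b2, ha2, hb2, haf2, hbf2, hd2⟩ := exists_exits hop hbd hcv hz hy hzy
  obtain ⟨l, hl, hl'⟩ := exists_support hop hcv hbf
  obtain ⟨k, hk, hk'⟩ := exists_support hop hcv haf
  -- the supporting functional at the exit point of a ray computes the Funk distance along it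
  have key : ∀ (l : Euc n →L[ℝ] ℝ) (x y : Euc n) (b : ℝ), 1 < b →
      l x < l (x + b • (y - x)) → l y < l (x + b • (y - x)) →
      Real.log (b / (b - 1)) = Real.log (l (x + b • (y - x)) - l x)
        - Real.log (l (x + b • (y - x)) - l y) := by
    intro l x y b hb h1 h2
    rw [← Real.log_div (by linarith) (by linarith)]
    congr 1
    rw [div_eq_div_iff (by linarith) (by linarith)]
    simp only [map_add, map_smul, map_sub, smul_eq_mul]
    ring
  have e1 := key l x y b hb (hl x hx) (hl y hy)
  have e2 := key k y x a ha (hk y hy) (hk x hx)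
  set c := l (x + b • (y - x)) with hc
  set d := k (y + a • (x - y)) with hd'
  have f1 := funk_le l (hl x hx) (hl z hz) hb1 (hl' _ (frontier_subset_closure hbf1))
  have f2 := funk_le l (hl z hz) (hl y hy) hb2 (hl' _ (frontier_subset_closure hbf2))
  have g1 := funk_le k (hk z hz) (hk x hx) ha1 (hk' _ (frontier_subset_closure haf1))
  have g2 := funk_le k (hk y hy) (hk z hz) ha2 (hk' _ (frontier_subset_closure haf2))
  have q1 : Real.log (c - l x) - Real.log (c - l z) = Real.log (b1 / (b1 - 1)) := by
    linarith [f1.1, f2.1, g1.1, g2.1]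
  have q2 : Real.log (c - l z) - Real.log (c - l y) = Real.log (b2 / (b2 - 1)) := by
    linarith [f1.1, f2.1, g1.1, g2.1]
  have hlβ := f1.2 q1
  have hββ : x + b1 • (z - x) = x + b • (y - x) := by
    by_contra hne
    refine hsc _ hbf1 _ hbf hne fun w hw => ?_
    have hwc : w ∈ closure Ω := hcv.closure.segment_subset (frontier_subset_closure hbf1)
      (frontier_subset_closure hbf) hw
    rw [hop.frontier_eq]
    refine ⟨hwc, fun hwΩ => ?_⟩
    obtain ⟨u, v, -, -, huv, rfl⟩ := hw
    have := hl _ hwΩ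
    rw [map_add, map_smul, map_smul, hlβ, ← hc, smul_eq_mul, smul_eq_mul, ← add_mul, huv,
      one_mul] at this
    exact lt_irrefl _ this
  have hb1' : 0 < b1 := by linarith
  have hz' : z = x + (b / b1) • (y - x) := by
    have : b1 • (z - x) = b • (y - x) := add_left_cancel hββ
    rw [div_eq_inv_mul, mul_smul, ← this, smul_smul, inv_mul_cancel₀ hb1'.ne', one_smul,
      add_sub_cancel]
  refine ⟨b / b1, by positivity, ?_, hz'⟩
  have hzy' : l z < l y := by
    have := log_exit_pos hb2
    have h3 : Real.log (c - l y) < Real.log (c - l z) := by linarith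
    have := (Real.log_lt_log_iff (by linarith [hl y hy]) (by linarith [hl z hz])).mp h3
    linarith
  have hxy' : l x < l y := by
    have := log_exit_pos hb
    have h3 : Real.log (c - l y) < Real.log (c - l x) := by linarith
    have := (Real.log_lt_log_iff (by linarith [hl y hy]) (by linarith [hl x hx])).mp h3
    linarith
  have hlz : l z = l x + b / b1 * (l y - l x) := by
    conv_lhs => rw [hz']
    simp
  nlinarith

/-! ### Isometries are projective on segments -/

theorem isometry_injOn {n : ℕ} {Ω Ω' : Set (Euc n)} (hop : IsOpen Ω)
    (hbd : Bornology.IsBounded Ω) (hcv : Convex ℝ Ω) {τ : Euc n → Euc n}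
    (hτ : IsHilbertIsometry Ω Ω' τ) : Set.InjOn τ Ω := by
  intro x hx y hy hxy
  by_contra hne
  have h := hτ.2.2 x hx y hy
  rw [hxy, hilbertDist_self] at h
  exact (hilbertDist_pos hop hbd hcv hx hy hne).ne h

/-- On each segment `[x, y]` the isometry is the projective map onto `[τ x, τ y]` that gives the
endpoint `τ y` the weight `m` relative to `τ x`. -/
theorem exists_weight {n : ℕ} {Ω Ω' : Set (Euc n)} (hop : IsOpen Ω)
    (hbd : Bornology.IsBounded Ω) (hcv : Convex ℝ Ω) (hop' : IsOpen Ω')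
    (hbd' : Bornology.IsBounded Ω') (hcv' : Convex ℝ Ω') {τ : Euc n → Euc n}
    (hτ : IsHilbertIsometry Ω Ω' τ) (hsc : IsStrictlyConvexDomain Ω)
    {x y : Euc n} (hx : x ∈ Ω) (hy : y ∈ Ω) :
    ∃ m : ℝ, 0 < m ∧ (x = y → m = 1) ∧ ∀ t : ℝ, 0 ≤ t → t ≤ 1 →
      τ (x + t • (y - x)) = τ x + (t * m / (1 - t + t * m)) • (τ y - τ x) := by
  by_cases hxy : x = y
  · subst hxy
    exact ⟨1, one_pos, fun _ => rfl, fun t _ _ => by simp⟩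
  have hxy' : τ x ≠ τ y := fun h => hxy (isometry_injOn hop hbd hcv hτ hx hy h)
  obtain ⟨A, B, hA, hB, -, -, hd⟩ := exists_chord hop hbd hcv hx hy hxy
  obtain ⟨A', B', hA', hB', -, -, hd'⟩ :=
    exists_chord hop' hbd' hcv' (hτ.1 hx) (hτ.1 hy) hxy'
  have hB0 : 0 < B := by linarith
  have hB0' : 0 < B' := by linarith
  have hm : 0 < A' * B' * (A + B) / (A * B * (A' + B')) := by positivity
  refine ⟨A' * B' * (A + B) / (A * B * (A' + B')), hm, fun h => absurd h hxy, fun t h0 h1 => ?_⟩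
  set m := A' * B' * (A + B) / (A * B * (A' + B')) with hmdef
  have hmul : m * (A * B * (A' + B')) = A' * B' * (A + B) := by
    rw [hmdef, div_mul_cancel₀]
    positivity
  have hden : 0 < 1 - t + t * m := by
    rcases h0.eq_or_lt with rfl | h0
    · simp
    · have := mul_pos h0 hm
      linarith
  set s := t * m / (1 - t + t * m) with hs
  have hsmul : s * (1 - t + t * m) = t * m := by
    rw [hs, div_mul_cancel₀ _ hden.ne']
  have hs0 : 0 ≤ s := div_nonneg (mul_nonneg h0 hm.le) hden.le
  have hs1 : s ≤ 1 := by
    rw [hs, div_le_one hden]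
    linarith
  -- the total lengths of the two segments agree
  have hE : B * (1 + A) * ((B' - 1) * A') = B' * (1 + A') * ((B - 1) * A) := by
    have e := hτ.2.2 x hx y hy
    have e1 := hd 0 1 le_rfl zero_le_one le_rfl
    have e2 := hd' 0 1 le_rfl zero_le_one le_rfl
    simp only [zero_smul, add_zero, one_smul, add_sub_cancel, sub_zero, zero_add] at e1 e2
    have hB1 : 0 < B - 1 := by linarith
    have hB1' : 0 < B' - 1 := by linarith
    rw [e1, e2, ← Real.log_mul (by positivity) (by positivity),
      ← Real.log_mul (by positivity) (by positivity), div_mul_div_comm, div_mul_div_comm] at e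
    have e' := Real.log_injOn_pos (Set.mem_Ioi.mpr (by positivity))
      (Set.mem_Ioi.mpr (by positivity)) e
    rw [div_eq_div_iff (by positivity) (by positivity)] at e'
    linarith
  -- `s` is the parameter on the image chord corresponding to `t`
  have hst : B' * (s + A') * (A * (B - t)) = A' * (B' - s) * (B * (t + A)) := by
    have h2 : B' * A * (B - t) + A' * B * (t + A)
        = (A * B * (A' + B')) * (1 - t + t * m) := by
      linear_combination (-t) * hmul - t * hE
    have h3 : s * (B' * A * (B - t) + A' * B * (t + A)) = A' * B' * t * (A + B) := by
      rw [h2]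
      linear_combination (A * B * (A' + B')) * hsmul + t * hmul
    linear_combination h3
  have hz' : τ x + s • (τ y - τ x) ∈ Ω' := by
    have := hcv' (hτ.1 hx) (hτ.1 hy) (sub_nonneg.mpr hs1) hs0 (by ring)
    convert this using 1
    module
  obtain ⟨w, hw, hwz⟩ := hτ.2.1 hz'
  have d1 : hilbertDist Ω x w = Real.log (B' / (B' - s)) + Real.log ((s + A') / A') := by
    have := hd' 0 s le_rfl hs0 hs1
    rw [← hτ.2.2 x hx w hw, hwz]
    simpa using this
  have d2 : hilbertDist Ω w y
      = Real.log ((B' - s) / (B' - 1)) + Real.log ((1 + A') / (s + A')) := by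
    have := hd' s 1 hs0 hs1 le_rfl
    rw [← hτ.2.2 w hw y hy, hwz]
    simpa using this
  have d3 : hilbertDist Ω x y = Real.log (B' / (B' - 1)) + Real.log ((1 + A') / A') := by
    have := hd' 0 1 le_rfl zero_le_one le_rfl
    rw [← hτ.2.2 x hx y hy]
    simpa using this
  have hBs : 0 < B' - s := by linarith
  have hB1 : 0 < B' - 1 := by linarith
  have hsA : 0 < s + A' := by linarith
  have hsum : hilbertDist Ω x w + hilbertDist Ω w y = hilbertDist Ω x y := by
    rw [d1, d2, d3, Real.log_div, Real.log_div, Real.log_div, Real.log_div, Real.log_div,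
      Real.log_div]
    · ring
    all_goals linarith
  obtain ⟨u, hu0, hu1, rfl⟩ := mem_segment_of_dist_add hop hbd hcv hsc hx hy hw hsum
  have hu : u = t := by
    have e1 := hd 0 u le_rfl hu0 hu1
    simp only [zero_smul, add_zero, sub_zero, zero_add] at e1
    have hBu : 0 < B - u := by linarith
    have hBt : 0 < B - t := by linarith
    rw [d1, ← Real.log_mul (by positivity) (by positivity),
      ← Real.log_mul (by positivity) (by positivity), div_mul_div_comm, div_mul_div_comm] at e1
    have e' := Real.log_injOn_pos (Set.mem_Ioi.mpr (by positivity))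
      (Set.mem_Ioi.mpr (by positivity)) e1
    have e2 : B' * (s + A') / ((B' - s) * A') = B * (t + A) / ((B - t) * A) := by
      rw [div_eq_div_iff (by positivity) (by positivity)]
      linear_combination hst
    rw [e2, div_eq_div_iff (by positivity) (by positivity)] at e'
    have : A * B * (A + B) * (u - t) = 0 := by linear_combination -e'
    have hne : A * B * (A + B) ≠ 0 := by positivity
    have := (mul_eq_zero.mp this).resolve_left hne
    linarith
  rw [← hu, hwz]

/-! ### The weights form a cocycle -/

/-- On every segment `[x, y]` of `Ω` the map `τ` is projective, and `m x y` is the weight of `τ y`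
relative to `τ x`. The weight is not determined by `τ` when `x = y`, and is then required to be
`1`. -/
def IsWeight {n : ℕ} (Ω : Set (Euc n)) (τ : Euc n → Euc n) (m : Euc n → Euc n → ℝ) : Prop :=
  ∀ x ∈ Ω, ∀ y ∈ Ω, 0 < m x y ∧ (x = y → m x y = 1) ∧ ∀ t : ℝ, 0 ≤ t → t ≤ 1 →
    τ (x + t • (y - x)) = τ x + (t * m x y / (1 - t + t * m x y)) • (τ y - τ x)

theorem add_smul_mem {n : ℕ} {Ω : Set (Euc n)} (hcv : Convex ℝ Ω) {x y : Euc n}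
    (hx : x ∈ Ω) (hy : y ∈ Ω) {t : ℝ} (h0 : 0 ≤ t) (h1 : t ≤ 1) : x + t • (y - x) ∈ Ω := by
  have := hcv hx hy (sub_nonneg.mpr h1) h0 (by ring)
  convert this using 1
  module

theorem weight_symm {n : ℕ} {Ω : Set (Euc n)} {τ : Euc n → Euc n}
    (hinj : Set.InjOn τ Ω) {m : Euc n → Euc n → ℝ} (hm : IsWeight Ω τ m)
    {x y : Euc n} (hx : x ∈ Ω) (hy : y ∈ Ω) : m x y * m y x = 1 := by
  by_cases hxy : x = y
  · subst hxy
    rw [(hm x hx x hx).2.1 rfl, one_mul]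
  have hne : τ y - τ x ≠ 0 := sub_ne_zero.mpr fun h => hxy (hinj hx hy h.symm)
  obtain ⟨p1, -, h1⟩ := hm x hx y hy
  obtain ⟨p2, -, h2⟩ := hm y hy x hx
  have e1 := h1 (1 / 2) (by norm_num) (by norm_num)
  have e2 := h2 (1 / 2) (by norm_num) (by norm_num)
  rw [show y + (1 / 2 : ℝ) • (x - y) = x + (1 / 2 : ℝ) • (y - x) by module, e1] at e2
  set a := m x y
  set b := m y x
  have e3 : (1 / 2 * a / (1 - 1 / 2 + 1 / 2 * a) + 1 / 2 * b / (1 - 1 / 2 + 1 / 2 * b) - 1)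
      • (τ y - τ x) = 0 := by
    linear_combination (norm := module) e2
  have e4 := (smul_eq_zero.mp e3).resolve_right hne
  field_simp at e4
  linarith

/-- The weights along a segment are affine in the parameter. -/
theorem weight_sub {n : ℕ} {Ω : Set (Euc n)} (hcv : Convex ℝ Ω) {τ : Euc n → Euc n}
    (hinj : Set.InjOn τ Ω) {m : Euc n → Euc n → ℝ} (hm : IsWeight Ω τ m)
    {x z : Euc n} (hx : x ∈ Ω) (hz : z ∈ Ω) {t : ℝ} (h0 : 0 ≤ t) (h1 : t ≤ 1) :
    m x (x + t • (z - x)) = 1 - t + t * m x z := by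
  have hy := add_smul_mem hcv hx hz h0 h1
  by_cases hxz : x = z
  · subst hxz
    rw [sub_self, smul_zero, add_zero, (hm x hx x hx).2.1 rfl]
    ring
  rcases h0.eq_or_lt with rfl | h0
  · rw [zero_smul, add_zero, (hm x hx x hx).2.1 rfl]
    ring
  have hne : τ z - τ x ≠ 0 := sub_ne_zero.mpr fun h => hxz (hinj hx hz h.symm)
  obtain ⟨p1, -, e1⟩ := hm x hx z hz
  obtain ⟨p2, -, e2⟩ := hm x hx _ hy
  have a1 := e1 t h0.le h1
  have a2 := e1 (t / 2) (by linarith) (by linarith)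
  have a3 := e2 (1 / 2) (by norm_num) (by norm_num)
  rw [show x + (1 / 2 : ℝ) • (x + t • (z - x) - x) = x + (t / 2) • (z - x) by module, a2, a1,
    add_sub_cancel_left, smul_smul, add_right_inj] at a3
  have a4 := smul_left_injective ℝ hne a3
  set M := m x z
  set k := m x (x + t • (z - x))
  have d1 : 0 < 1 - t + t * M := by nlinarith [mul_pos h0 p1]
  have d2 : 0 < 1 - t / 2 + t / 2 * M := by nlinarith [mul_pos h0 p1]
  have d3 : 0 < 1 - 1 / 2 + 1 / 2 * k := by linarith
  rw [div_mul_div_comm, div_eq_div_iff d2.ne' (by positivity)] at a4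
  have a5 : t * M / 4 * (k - (1 - t + t * M)) = 0 := by linear_combination -a4
  have a6 := (mul_eq_zero.mp a5).resolve_left (by positivity)
  linarith

theorem weight_cocycle_of_mem {n : ℕ} {Ω : Set (Euc n)} (hcv : Convex ℝ Ω) {τ : Euc n → Euc n}
    (hinj : Set.InjOn τ Ω) {m : Euc n → Euc n → ℝ} (hm : IsWeight Ω τ m)
    {x y z : Euc n} (hx : x ∈ Ω) (hy : y ∈ Ω) (hz : z ∈ Ω) {t : ℝ} (h0 : 0 ≤ t) (h1 : t ≤ 1)
    (hyt : y = x + t • (z - x)) : m x y * m y z * m z x = 1 := by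
  have e1 : m x y = 1 - t + t * m x z := by
    rw [hyt]
    exact weight_sub hcv hinj hm hx hz h0 h1
  have e2 : m z y = t + (1 - t) * m z x := by
    have := weight_sub hcv hinj hm hz hx (t := 1 - t) (by linarith) (by linarith)
    rw [show z + (1 - t) • (x - z) = y by rw [hyt]; module] at this
    rw [this]
    ring
  have e3 := weight_symm hinj hm hx hz
  have e4 := weight_symm hinj hm hy hz
  have e5 : m x y * m z x = m z y := by
    rw [e1, e2]
    linear_combination t * e3
  linear_combination (m y z) * e5 + e4

/-- Converse to the projectivity on segments: betweenness of the images is inherited by the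
points themselves. -/
theorem mem_segment_of_image {n : ℕ} {Ω : Set (Euc n)} (hcv : Convex ℝ Ω) {τ : Euc n → Euc n}
    (hinj : Set.InjOn τ Ω) {m : Euc n → Euc n → ℝ} (hm : IsWeight Ω τ m)
    {x y z : Euc n} (hx : x ∈ Ω) (hy : y ∈ Ω) (hz : z ∈ Ω) (h : Wbtw ℝ (τ x) (τ y) (τ z)) :
    ∃ t : ℝ, 0 ≤ t ∧ t ≤ 1 ∧ y = x + t • (z - x) := by
  obtain ⟨s, ⟨hs0, hs1⟩, hs⟩ := h
  rw [AffineMap.lineMap_apply_module'] at hs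
  obtain ⟨p, -, e⟩ := hm x hx z hz
  set M := m x z
  -- the inverse of the Möbius function `t ↦ t * M / (1 - t + t * M)`
  have hd : 0 < M * (1 - s) + s := by
    rcases hs0.eq_or_lt with rfl | h
    · simpa using p
    · nlinarith [mul_nonneg p.le (sub_nonneg.mpr hs1)]
  have ht0 : 0 ≤ s / (M * (1 - s) + s) := by positivity
  have ht1 : s / (M * (1 - s) + s) ≤ 1 := by
    rw [div_le_one hd]
    nlinarith [mul_nonneg p.le (sub_nonneg.mpr hs1)]
  refine ⟨s / (M * (1 - s) + s), ht0, ht1, hinj hy (add_smul_mem hcv hx hz ht0 ht1) ?_⟩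
  rw [e _ ht0 ht1, ← hs, add_comm]
  congr 2
  have : 1 - s / (M * (1 - s) + s) + s / (M * (1 - s) + s) * M = M / (M * (1 - s) + s) := by
    field_simp
    ring
  rw [this]
  field_simp

/-- Ceva's argument: the centroid of `x, y, z` lies on all three medians, so the barycentric
coordinates of its image are proportional to the weights along each side. -/
theorem weight_cocycle {n : ℕ} {Ω : Set (Euc n)} (hcv : Convex ℝ Ω) {τ : Euc n → Euc n}
    (hinj : Set.InjOn τ Ω) {m : Euc n → Euc n → ℝ} (hm : IsWeight Ω τ m)
    {x y z : Euc n} (hx : x ∈ Ω) (hy : y ∈ Ω) (hz : z ∈ Ω) : m x y * m y z * m z x = 1 := by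
  by_cases hcol : Collinear ℝ ({τ x, τ y, τ z} : Set (Euc n))
  · rcases hcol.wbtw_or_wbtw_or_wbtw with h | h | h
    · obtain ⟨t, h0, h1, ht⟩ := mem_segment_of_image hcv hinj hm hx hy hz h
      exact weight_cocycle_of_mem hcv hinj hm hx hy hz h0 h1 ht
    · obtain ⟨t, h0, h1, ht⟩ := mem_segment_of_image hcv hinj hm hy hz hx h
      linear_combination weight_cocycle_of_mem hcv hinj hm hy hz hx h0 h1 ht
    · obtain ⟨t, h0, h1, ht⟩ := mem_segment_of_image hcv hinj hm hz hx hy h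
      linear_combination weight_cocycle_of_mem hcv hinj hm hz hx hy h0 h1 ht
  -- `τ` at the centroid, computed along the median ending at the third vertex
  have median : ∀ a ∈ Ω, ∀ b ∈ Ω, ∀ c ∈ Ω, ∃ s : ℝ, s < 1 ∧
      τ ((1 / 3 : ℝ) • (a + b + c)) = ((1 - s) / (1 + m a b)) • τ a
        + ((1 - s) * m a b / (1 + m a b)) • τ b + s • τ c := by
    intro a ha b hb c hc
    have hmid := add_smul_mem hcv ha hb (t := 1 / 2) (by norm_num) (by norm_num)
    obtain ⟨p1, -, e1⟩ := hm a ha b hb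
    obtain ⟨p2, -, e2⟩ := hm _ hmid c hc
    have q1 := e1 (1 / 2) (by norm_num) (by norm_num)
    have q2 := e2 (1 / 3) (by norm_num) (by norm_num)
    set k := m (a + (1 / 2 : ℝ) • (b - a)) c
    refine ⟨1 / 3 * k / (1 - 1 / 3 + 1 / 3 * k), ?_, ?_⟩
    · rw [div_lt_one (by linarith)]
      linarith
    · rw [show (1 / 3 : ℝ) • (a + b + c) = a + (1 / 2 : ℝ) • (b - a)
        + (1 / 3 : ℝ) • (c - (a + (1 / 2 : ℝ) • (b - a))) by module, q2, q1]
      generalize 1 / 3 * k / (1 - 1 / 3 + 1 / 3 * k) = s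
      have r1 : 1 / 2 * m a b / (1 - 1 / 2 + 1 / 2 * m a b) = m a b / (1 + m a b) := by
        field_simp
        ring
      have r2 : (1 - s) / (1 + m a b) = (1 - s) * (1 - m a b / (1 + m a b)) := by
        field_simp
        ring
      rw [r1, r2, mul_div_assoc]
      module
  obtain ⟨s1, hs1, e1⟩ := median x hx y hy z hz
  obtain ⟨s2, hs2, e2⟩ := median y hy z hz x hx
  obtain ⟨s3, hs3, e3⟩ := median z hz x hx y hy
  rw [show y + z + x = x + y + z by abel] at e2
  rw [show z + x + y = x + y + z by abel] at e3
  obtain ⟨p1, -, -⟩ := hm x hx y hy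
  obtain ⟨p2, -, -⟩ := hm y hy z hz
  obtain ⟨p3, -, -⟩ := hm z hz x hx
  -- barycentric coordinates with respect to the image triangle are unique
  have uniq : ∀ a b : ℝ, a • (τ y - τ x) + b • (τ z - τ x) = 0 → a = 0 ∧ b = 0 := by
    intro a b hab
    by_contra hne
    apply hcol
    rw [collinear_iff_of_mem (p₀ := τ x) (by simp)]
    by_cases ha : a = 0
    · have hb : b ≠ 0 := fun hb => hne ⟨ha, hb⟩
      refine ⟨τ y - τ x, ?_⟩
      rintro p (rfl | rfl | rfl)
      · exact ⟨0, by simp⟩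
      · exact ⟨1, by simp⟩
      · refine ⟨0, ?_⟩
        rw [ha, zero_smul, zero_add] at hab
        have := (smul_eq_zero.mp hab).resolve_left hb
        rw [zero_smul, zero_vadd]
        exact sub_eq_zero.mp this
    · refine ⟨τ z - τ x, ?_⟩
      rintro p (rfl | rfl | rfl)
      · exact ⟨0, by simp⟩
      · refine ⟨-(b / a), ?_⟩
        have h1 : τ y - τ x = (-(b / a)) • (τ z - τ x) := by
          have h2 : a • (τ y - τ x) = (-b) • (τ z - τ x) := by
            linear_combination (norm := module) hab
          have h3 : τ y - τ x = a⁻¹ • (a • (τ y - τ x)) := by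
            rw [smul_smul, inv_mul_cancel₀ ha, one_smul]
          rw [h3, h2, smul_smul]
          congr 1
          field_simp
        rw [← h1, vadd_eq_add, sub_add_cancel]
      · exact ⟨1, by simp⟩
  set a := m x y
  set b := m y z
  set c := m z x
  have v1 : (1 - s1) / (1 + a) = 1 - (1 - s1) * a / (1 + a) - s1 := by
    field_simp
    ring
  have v2 : s2 = 1 - (1 - s2) / (1 + b) - (1 - s2) * b / (1 + b) := by
    field_simp
    ring
  have v3 : (1 - s3) * c / (1 + c) = 1 - (1 - s3) / (1 + c) - s3 := by
    field_simp
    ring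
  have w12 : (1 - s1) * a / (1 + a) - (1 - s2) / (1 + b) = 0 ∧
      s1 - (1 - s2) * b / (1 + b) = 0 := by
    apply uniq
    have := e1.symm.trans e2
    rw [v1] at this
    generalize (1 - s1) * a / (1 + a) = u1 at *
    generalize (1 - s2) * b / (1 + b) = u2 at *
    generalize (1 - s2) / (1 + b) = u3 at *
    subst v2
    linear_combination (norm := module) this
  have w13 : (1 - s1) * a / (1 + a) - s3 = 0 ∧ s1 - (1 - s3) / (1 + c) = 0 := by
    apply uniq
    have := e1.symm.trans e3
    rw [v1, v3] at this
    linear_combination (norm := module) this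
  obtain ⟨w1, w2⟩ := w12
  obtain ⟨w3, w4⟩ := w13
  -- `l1, s3, s1` are the barycentric coordinates of the image of the centroid
  obtain ⟨l1, hl1⟩ : ∃ l, l = (1 - s1) / (1 + a) := ⟨_, rfl⟩
  have hl1pos : 0 < l1 := by
    rw [hl1]
    exact div_pos (by linarith) (by linarith)
  have t2 : s3 = a * l1 := by
    rw [hl1]
    linear_combination -w3
  have t3 : s1 = b * s3 := by
    have : s1 = b * ((1 - s2) / (1 + b)) := by linear_combination w2
    rw [this]
    linear_combination b * (w3 - w1)
  have t1 : l1 = c * s1 := by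
    have h1 : c * s1 = 1 - (1 - s3) / (1 + c) - s3 := by
      rw [← v3]
      linear_combination c * w4
    rw [h1, hl1, v1]
    linear_combination w4 - w3 - w4 - w4
  have : l1 * (a * b * c - 1) = 0 := by
    rw [t3, t2] at t1
    linear_combination -t1
  have := (mul_eq_zero.mp this).resolve_left hl1pos.ne'
  linarith

/-! ### Extension to a linear map of the homogeneous coordinates -/

/-- A map that is affine on segments of an open convex set is the restriction of an affine map. The
linear part is `v ↦ δ⁻¹ • (G (x₀ + δ • v) - G x₀)` for small `δ > 0`. -/
theorem exists_affine_extension {n : ℕ} {W : Type*} [AddCommGroup W] [Module ℝ W]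
    {Ω : Set (Euc n)} (hne : Ω.Nonempty) (hop : IsOpen Ω) (hcv : Convex ℝ Ω) (G : Euc n → W)
    (hG : ∀ x ∈ Ω, ∀ y ∈ Ω, ∀ t : ℝ, 0 ≤ t → t ≤ 1 →
      G (x + t • (y - x)) = (1 - t) • G x + t • G y) :
    ∃ (L : Euc n →ₗ[ℝ] W) (c : W), ∀ x ∈ Ω, G x = L x + c := by
  obtain ⟨p, hp⟩ := hne
  obtain ⟨ε, hε, hball⟩ := Metric.isOpen_iff.mp hop p hp
  -- for every `v`, all small multiples of `v` stay in `Ω - p`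
  have small : ∀ v : Euc n, ∃ δ : ℝ, 0 < δ ∧ ∀ r : ℝ, |r| ≤ δ → p + r • v ∈ Ω := by
    intro v
    refine ⟨ε / (‖v‖ + 1), by positivity, fun r hr => hball ?_⟩
    rw [Metric.mem_ball, dist_eq_norm, add_sub_cancel_left, norm_smul, Real.norm_eq_abs]
    have h1 : |r| * ‖v‖ ≤ ε / (‖v‖ + 1) * ‖v‖ := mul_le_mul_of_nonneg_right hr (norm_nonneg v)
    have h2 : ε / (‖v‖ + 1) * ‖v‖ < ε := by
      rw [div_mul_eq_mul_div, div_lt_iff₀ (by positivity)]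
      linarith
    linarith
  have hom : ∀ (v : Euc n) (r t : ℝ), 0 ≤ t → t ≤ 1 → p + r • v ∈ Ω →
      G (p + (t * r) • v) - G p = t • (G (p + r • v) - G p) := by
    intro v r t h0 h1 h
    have := hG p hp _ h t h0 h1
    rw [show p + t • (p + r • v - p) = p + (t * r) • v by module] at this
    rw [this]
    module
  choose d hd0 hd using small
  have hdm : ∀ v, p + d v • v ∈ Ω := fun v => hd v _ (abs_of_pos (hd0 v)).le
  set F : Euc n → W := fun v => (d v)⁻¹ • (G (p + d v • v) - G p) with hF
  have indep : ∀ (v : Euc n) (r : ℝ), 0 < r → p + r • v ∈ Ω → G (p + r • v) - G p = r • F v := by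
    intro v r hr h
    have hdv := hd0 v
    rcases le_total r (d v) with hle | hle
    · have := hom v (d v) (r / d v) (by positivity) ((div_le_one hdv).mpr hle) (hdm v)
      rw [div_mul_cancel₀ _ hdv.ne'] at this
      rw [this, hF, smul_smul, div_eq_mul_inv]
    · have := hom v r (d v / r) (by positivity) ((div_le_one hr).mpr hle) h
      rw [div_mul_cancel₀ _ hr.ne'] at this
      simp only [hF]
      rw [this, smul_smul, smul_smul]
      have : r * ((d v)⁻¹ * (d v / r)) = 1 := by field_simp
      rw [mul_assoc, this, one_smul]
  have hadd : ∀ u v, F (u + v) = F u + F v := by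
    intro u v
    obtain ⟨r, hr, h1, h2⟩ : ∃ r : ℝ, 0 < r ∧ r ≤ d u ∧ r ≤ d v :=
      ⟨min (d u) (d v), lt_min (hd0 u) (hd0 v), min_le_left _ _, min_le_right _ _⟩
    have hu : p + r • u ∈ Ω := hd u r (by rwa [abs_of_pos hr])
    have hv : p + r • v ∈ Ω := hd v r (by rwa [abs_of_pos hr])
    have hm := hG _ hu _ hv (1 / 2) (by norm_num) (by norm_num)
    have hmem := add_smul_mem hcv hu hv (t := 1 / 2) (by norm_num) (by norm_num)
    rw [show p + r • u + (1 / 2 : ℝ) • (p + r • v - (p + r • u)) = p + (r / 2) • (u + v) by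
      module] at hm hmem
    have e := indep (u + v) (r / 2) (by positivity) hmem
    have e1 := indep u r hr hu
    have e2 := indep v r hr hv
    have h3 : (r / 2) • (F (u + v) - (F u + F v)) = 0 := by
      rw [smul_sub, ← e, hm]
      linear_combination (norm := module) (1 / 2 : ℝ) • e1 + (1 / 2 : ℝ) • e2
    exact sub_eq_zero.mp ((smul_eq_zero.mp h3).resolve_left (by positivity))
  have hpos : ∀ (c : ℝ) v, 0 < c → F (c • v) = c • F v := by
    intro c v hc
    have h := hdm (c • v)
    have hdc := hd0 (c • v)
    have e1 := indep (c • v) _ hdc h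
    rw [smul_smul] at h e1
    have e2 := indep v _ (by positivity) h
    rw [e1, mul_smul] at e2
    exact smul_right_injective W hdc.ne' e2
  have h0 : F 0 = 0 := by
    have := hadd 0 0
    rw [add_zero] at this
    exact left_eq_add.mp this
  have hneg : ∀ v, F (-v) = -F v := by
    intro v
    have := hadd (-v) v
    rw [neg_add_cancel, h0] at this
    exact eq_neg_of_add_eq_zero_left this.symm
  have hsmul : ∀ (c : ℝ) v, F (c • v) = c • F v := by
    intro c v
    rcases lt_trichotomy c 0 with hc | rfl | hc
    · have := hpos (-c) v (by linarith)
      rw [neg_smul, hneg, neg_smul] at this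
      exact neg_injective this
    · rw [zero_smul, zero_smul, h0]
    · exact hpos c v hc
  let L : Euc n →ₗ[ℝ] W := { toFun := F, map_add' := hadd, map_smul' := hsmul }
  refine ⟨L, G p - L p, fun x hx => ?_⟩
  have e := indep (x - p) 1 one_pos (by rwa [one_smul, add_sub_cancel])
  rw [one_smul, add_sub_cancel, one_smul] at e
  have e' : L (x - p) = L x - L p := map_sub L x p
  have e'' : F (x - p) = L (x - p) := rfl
  rw [e'', e'] at e
  linear_combination (norm := module) e

/-- The homogeneous coordinates `(x, 1)` of a point `x`. -/
def homog {n : ℕ} (x : Euc n) : Fin (n + 1) → ℝ := Fin.snoc (fun i => x i) 1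

theorem homog_last {n : ℕ} (x : Euc n) : homog x (Fin.last n) = 1 := by
  simp [homog]

theorem homog_castSucc {n : ℕ} (x : Euc n) (i : Fin n) : homog x i.castSucc = x i := by
  simp [homog]

theorem homog_ne_zero {n : ℕ} (x : Euc n) : homog x ≠ 0 := fun h => by
  have := congrFun h (Fin.last n)
  rw [homog_last] at this
  exact one_ne_zero this

theorem homog_comb {n : ℕ} (x y : Euc n) (a b : ℝ) (hab : a + b = 1) :
    homog (a • x + b • y) = a • homog x + b • homog y := by
  ext i
  refine Fin.lastCases ?_ (fun i => ?_) i
  · simp [homog_last, hab]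
  · simp [homog_castSucc]

theorem homog_eq_of_smul {n : ℕ} {x y : Euc n} {a b : ℝ} (ha : a ≠ 0)
    (h : a • homog x = b • homog y) : x = y := by
  have h1 := congrFun h (Fin.last n)
  simp only [Pi.smul_apply, homog_last, smul_eq_mul, mul_one] at h1
  subst h1
  ext i
  have h2 := congrFun h i.castSucc
  simp only [Pi.smul_apply, homog_castSucc, smul_eq_mul] at h2
  exact mul_left_cancel₀ ha h2

theorem continuous_homog {n : ℕ} : Continuous (homog : Euc n → Fin (n + 1) → ℝ) := by
  refine continuous_pi fun i => ?_
  refine Fin.lastCases ?_ (fun i => ?_) i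
  · simp only [homog_last]
    exact continuous_const
  · simp only [homog_castSucc]
    fun_prop

theorem eq_top_of_homog_mem {n : ℕ} {Ω : Set (Euc n)} (hne : Ω.Nonempty) (hop : IsOpen Ω)
    (S : Submodule ℝ (Fin (n + 1) → ℝ)) (hS : ∀ x ∈ Ω, homog x ∈ S) : S = ⊤ := by
  obtain ⟨p, hp⟩ := hne
  obtain ⟨ε, hε, hball⟩ := Metric.isOpen_iff.mp hop p hp
  -- `homog p` and all directions `homog (p + v) - homog p` lie in `S`
  have hdir : ∀ v : Euc n, homog (p + v) - homog p ∈ S := by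
    intro v
    set δ : ℝ := ε / (‖v‖ + 1) with hδ
    have hδ0 : 0 < δ := by positivity
    have hmem : p + δ • v ∈ Ω := by
      apply hball
      rw [Metric.mem_ball, dist_eq_norm, add_sub_cancel_left, norm_smul, Real.norm_eq_abs,
        abs_of_pos hδ0, hδ, div_mul_eq_mul_div, div_lt_iff₀ (by positivity)]
      linarith
    have h1 : homog (p + δ • v) - homog p ∈ S := S.sub_mem (hS _ hmem) (hS p hp)
    have h2 := S.smul_mem δ⁻¹ h1
    convert h2 using 1
    rw [show p + δ • v = (1 - δ) • p + δ • (p + v) by module, homog_comb _ _ _ _ (by ring),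
      eq_inv_smul_iff₀ hδ0.ne']
    module
  rw [eq_top_iff]
  intro w _
  have h1 := hdir (WithLp.toLp 2 (fun i : Fin n => w i.castSucc) - w (Fin.last n) • p)
  have h2 := S.add_mem h1 (S.smul_mem (w (Fin.last n)) (hS p hp))
  convert h2 using 1
  ext i
  refine Fin.lastCases ?_ (fun i => ?_) i
  · simp [homog_last]
  · simp [homog_castSucc]

/-- The linear lift of the isometry to homogeneous coordinates. -/
theorem exists_lift {n : ℕ} {Ω Ω' : Set (Euc n)}
    (hne : Ω.Nonempty) (hop : IsOpen Ω) (hbd : Bornology.IsBounded Ω) (hcv : Convex ℝ Ω)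
    (hne' : Ω'.Nonempty) (hop' : IsOpen Ω') (hbd' : Bornology.IsBounded Ω')
    (hcv' : Convex ℝ Ω') {τ : Euc n → Euc n} (hτ : IsHilbertIsometry Ω Ω' τ)
    (hsc : IsStrictlyConvexDomain Ω) :
    ∃ (g : (Fin (n + 1) → ℝ) ≃ₗ[ℝ] (Fin (n + 1) → ℝ)) (f : Euc n → ℝ),
      ∀ x ∈ Ω, 0 < f x ∧ g (homog x) = f x • homog (τ x) := by
  have hinj := isometry_injOn hop hbd hcv hτ
  obtain ⟨m, hm⟩ : ∃ m, IsWeight Ω τ m := by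
    have : ∀ x y : Euc n, ∃ m : ℝ, x ∈ Ω → y ∈ Ω → (0 < m ∧ (x = y → m = 1) ∧
        ∀ t : ℝ, 0 ≤ t → t ≤ 1 →
          τ (x + t • (y - x)) = τ x + (t * m / (1 - t + t * m)) • (τ y - τ x)) := by
      intro x y
      by_cases h : x ∈ Ω ∧ y ∈ Ω
      · obtain ⟨m, hm⟩ := exists_weight hop hbd hcv hop' hbd' hcv' hτ hsc h.1 h.2
        exact ⟨m, fun _ _ => hm⟩
      · exact ⟨0, fun h1 h2 => absurd ⟨h1, h2⟩ h⟩
    choose m hm using this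
    exact ⟨m, fun x hx y hy => hm x y hx hy⟩
  obtain ⟨p, hp⟩ := hne
  have hpos : ∀ x ∈ Ω, 0 < m p x := fun x hx => (hm p hp x hx).1
  have hmul : ∀ x ∈ Ω, ∀ y ∈ Ω, m p x * m x y = m p y := by
    intro x hx y hy
    have h1 := weight_cocycle hcv hinj hm hp hx hy
    have h2 := weight_symm hinj hm hp hy
    linear_combination (m p y) * h1 - (m p x * m x y) * h2
  obtain ⟨L, c, hL⟩ := exists_affine_extension ⟨p, hp⟩ hop hcv (fun x => m p x • homog (τ x)) (by
    intro x hx y hy t h0 h1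
    have hz := add_smul_mem hcv hx hy h0 h1
    have e1 := hmul x hx _ hz
    rw [weight_sub hcv hinj hm hx hy h0 h1] at e1
    obtain ⟨q, -, e2⟩ := hm x hx y hy
    have hd : 0 < 1 - t + t * m x y := by
      rcases h0.eq_or_lt with rfl | h0
      · simp
      · nlinarith [mul_pos h0 q]
    rw [← e1, ← hmul x hx y hy, e2 t h0 h1]
    set k := m x y
    rw [show τ x + (t * k / (1 - t + t * k)) • (τ y - τ x)
      = ((1 - t) / (1 - t + t * k)) • τ x + (t * k / (1 - t + t * k)) • τ y by
        rw [show (1 - t) / (1 - t + t * k) = 1 - t * k / (1 - t + t * k) by field_simp; ring]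
        module, homog_comb _ _ _ _ (by field_simp)]
    rw [smul_add, smul_smul, smul_smul, smul_smul, smul_smul]
    congr 2 <;> field_simp)
  -- the linear map with `(x, 1) ↦ L x + c`
  let P : (Fin (n + 1) → ℝ) →ₗ[ℝ] Euc n :=
    { toFun := fun w => WithLp.toLp 2 (fun i : Fin n => w i.castSucc)
      map_add' := fun _ _ => rfl
      map_smul' := fun _ _ => rfl }
  let g₀ : (Fin (n + 1) → ℝ) →ₗ[ℝ] (Fin (n + 1) → ℝ) :=
    L ∘ₗ P + (LinearMap.proj (Fin.last n)).smulRight c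
  have hg₀ : ∀ x ∈ Ω, g₀ (homog x) = m p x • homog (τ x) := by
    intro x hx
    have hP : P (homog x) = x := by
      ext i
      exact homog_castSucc x i
    rw [hL x hx]
    simp [g₀, hP, homog_last]
  have hsurj : Function.Surjective g₀ := by
    rw [← LinearMap.range_eq_top]
    refine eq_top_of_homog_mem hne' hop' _ fun y hy => ?_
    obtain ⟨x, hx, rfl⟩ := hτ.2.1 hy
    refine ⟨(m p x)⁻¹ • homog x, ?_⟩
    rw [map_smul, hg₀ x hx, smul_smul, inv_mul_cancel₀ (hpos x hx).ne', one_smul]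
  have hinj₀ : Function.Injective g₀ := LinearMap.injective_iff_surjective.mpr hsurj
  exact ⟨LinearEquiv.ofBijective g₀ ⟨hinj₀, hsurj⟩, fun x => m p x,
    fun x hx => ⟨hpos x hx, hg₀ x hx⟩⟩

/-! ### Strict convexity of the image -/

/-- The linear lift extends the inverse of `τ` to the closure of `Ω'`. -/
theorem exists_preimage_closure {n : ℕ} {Ω Ω' : Set (Euc n)} (hbd : Bornology.IsBounded Ω)
    {τ : Euc n → Euc n} (hτ : Set.SurjOn τ Ω Ω')
    (g : (Fin (n + 1) → ℝ) ≃ₗ[ℝ] (Fin (n + 1) → ℝ)) (f : Euc n → ℝ)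
    (hg : ∀ x ∈ Ω, 0 < f x ∧ g (homog x) = f x • homog (τ x)) {p : Euc n}
    (hp : p ∈ closure Ω') :
    ∃ x ∈ closure Ω, ∃ a : ℝ, 0 < a ∧ g (homog x) = a • homog p := by
  obtain ⟨y, hy, hyp⟩ := mem_closure_iff_seq_limit.mp hp
  choose x hx hxy using fun k => hτ (hy k)
  have hcomp : IsCompact (closure Ω) := hbd.isCompact_closure
  obtain ⟨q, hq, φ, hφ, hlim⟩ := hcomp.tendsto_subseq (fun k => subset_closure (hx k))
  have hgc : Continuous g := g.toLinearMap.continuous_of_finiteDimensional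
  have t1 : Filter.Tendsto (fun k => g (homog (x (φ k)))) Filter.atTop (nhds (g (homog q))) :=
    ((hgc.comp continuous_homog).tendsto q).comp hlim
  have t2 : Filter.Tendsto (fun k => f (x (φ k))) Filter.atTop
      (nhds (g (homog q) (Fin.last n))) := by
    have := (tendsto_pi_nhds.mp t1) (Fin.last n)
    refine this.congr fun k => ?_
    rw [(hg _ (hx _)).2, Pi.smul_apply, homog_last, smul_eq_mul, mul_one]
  have t3 : Filter.Tendsto (fun k => homog (y (φ k))) Filter.atTop (nhds (homog p)) :=
    (continuous_homog.tendsto p).comp (hyp.comp hφ.tendsto_atTop)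
  have t4 := t2.smul t3
  have heq : g (homog q) = (g (homog q) (Fin.last n)) • homog p := by
    refine tendsto_nhds_unique t1 (t4.congr fun k => ?_)
    rw [(hg _ (hx _)).2, hxy]
  refine ⟨q, hq, _, lt_of_le_of_ne ?_ ?_, heq⟩
  · exact ge_of_tendsto' t2 fun k => (hg _ (hx _)).1.le
  · intro h0
    rw [← h0, zero_smul] at heq
    exact homog_ne_zero q (g.map_eq_zero_iff.mp heq)

theorem strictlyConvex_of_lift {n : ℕ} {Ω Ω' : Set (Euc n)}
    (hop : IsOpen Ω) (hbd : Bornology.IsBounded Ω) (hcv : Convex ℝ Ω) (hop' : IsOpen Ω')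
    {τ : Euc n → Euc n} (hmaps : Set.MapsTo τ Ω Ω') (hτ : Set.SurjOn τ Ω Ω')
    (hsc : IsStrictlyConvexDomain Ω)
    (g : (Fin (n + 1) → ℝ) ≃ₗ[ℝ] (Fin (n + 1) → ℝ)) (f : Euc n → ℝ)
    (hg : ∀ x ∈ Ω, 0 < f x ∧ g (homog x) = f x • homog (τ x)) :
    IsStrictlyConvexDomain Ω' := by
  intro p hp q hq hpq hseg
  obtain ⟨x, hx, a, ha, hga⟩ := exists_preimage_closure hbd hτ g f hg (frontier_subset_closure hp)
  obtain ⟨y, hy, b, hb, hgb⟩ := exists_preimage_closure hbd hτ g f hg (frontier_subset_closure hq)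
  -- a convex combination of `x` and `y` corresponds to a point of the segment `[p, q]`, hence it
  -- is not in `Ω`
  have hout : segment ℝ x y ⊆ frontier Ω := by
    rintro z ⟨u, v, hu, hv, huv, rfl⟩
    rw [hop.frontier_eq]
    refine ⟨hcv.closure hx hy hu hv huv, fun hz => ?_⟩
    have hs : 0 < u * a + v * b := by
      rcases hu.eq_or_lt with rfl | hu
      · have : v = 1 := by linarith
        subst this
        linarith
      · have := mul_pos hu ha
        have := mul_nonneg hv hb.le
        linarith
    set s := u * a + v * b with hsdef
    have hr : (u * a / s) • p + (v * b / s) • q ∈ segment ℝ p q :=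
      ⟨_, _, by positivity, by positivity, by rw [← add_div, ← hsdef, div_self hs.ne'], rfl⟩
    have hrf := hseg hr
    have e : g (homog (u • x + v • y)) = s • homog ((u * a / s) • p + (v * b / s) • q) := by
      rw [homog_comb _ _ _ _ huv, homog_comb _ _ _ _ (by
        rw [← add_div, ← hsdef, div_self hs.ne']), map_add, map_smul, map_smul, hga, hgb,
        smul_add, smul_smul, smul_smul, smul_smul, smul_smul, mul_div_cancel₀ _ hs.ne',
        mul_div_cancel₀ _ hs.ne']
    rw [(hg _ hz).2] at e
    have e' := homog_eq_of_smul (hg _ hz).1.ne' e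
    rw [← e', hop'.frontier_eq] at hrf
    exact hrf.2 (hmaps hz)
  have hxy : x ≠ y := by
    rintro rfl
    exact hpq (homog_eq_of_smul ha.ne' (hga.symm.trans hgb))
  exact hsc x (hout (left_mem_segment _ _ _)) y (hout (right_mem_segment _ _ _)) hxy hout

/-- If `τ : Ω → Ω'` is an isometry of Hilbert geometries and `Ω` is
strictly convex, then `Ω'` is strictly convex and `τ` is (the restriction of) a
projective transformation. -/
theorem stmt_6 {n : ℕ} (Ω Ω' : Set (Euc n))
    (hne : Ω.Nonempty) (hop : IsOpen Ω) (hbd : Bornology.IsBounded Ω) (hcv : Convex ℝ Ω)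
    (hne' : Ω'.Nonempty) (hop' : IsOpen Ω') (hbd' : Bornology.IsBounded Ω')
    (hcv' : Convex ℝ Ω') (τ : Euc n → Euc n) (hτ : IsHilbertIsometry Ω Ω' τ)
    (hsc : IsStrictlyConvexDomain Ω) :
    IsStrictlyConvexDomain Ω' ∧ IsProjectiveOn Ω τ := by
  obtain ⟨g, f, hg⟩ := exists_lift hne hop hbd hcv hne' hop' hbd' hcv' hτ hsc
  refine ⟨strictlyConvex_of_lift hop hbd hcv hop' hτ.1 hτ.2.1 hsc g f hg, g, fun x hx => ?_⟩
  unfold chart projMap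
  rw [Projectivization.map_mk, Projectivization.mk_eq_mk_iff']
  obtain ⟨hf, hgx⟩ := hg x hx
  refine ⟨(f x)⁻¹, ?_⟩
  change (f x)⁻¹ • g (homog x) = homog (τ x)
  rw [hgx, smul_smul, inv_mul_cancel₀ hf.ne', one_smul]
end
end
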